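/- arXiv:1805.09100 — 5 statements merged into one kernel-verified Lean document; each statement's English description precedes it below -/
import Mathlib

section
/- Let Ω = [0,1)^N and for each α ⊆ {1,...,N} let A_α(k, x_α) be a real-valued kernel with bounded first derivatives (bounded gradient). Let 𝒜_c : L²(Ω) → L²(Ω) be the multi-kernel operator 𝒜_c u(k) = ∑_{α⊆{1,...,N}} ∫_{[0,1)^{|α|}} A_α(k, x_α) u(k_ᾱ + x_α) dx_α, and for p ≥ 1 let 𝒜 = ∑_{α⊆{1,...,N}} ∑_{i,j=1}^{p^N} p^{−|α|} 𝓔_{ij}^α[A_{ij}^α] be its midpoint discretization with piecewise constant kernels, where A_{ij}^α = A_α(a_i + ε, (a_j + ε)_α) if (a_i)_ᾱ = (a_j)_ᾱ and A_{ij}^α = 0 otherwise, with ε = (1/(2p),...,1/(2p)). Then ‖𝒜_c − 𝒜‖_{L²→L²} ≤ (N/(2p)) ∑_{α⊆{1,...,N}} ‖∇A_α‖_{L^∞}, and in particular ‖𝒜_c − 𝒜‖_{L²→L²} → 0 as p → ∞. -/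
/-!
STATEMENT 14: Midpoint discretization of a multi-kernel integral operator on
L²([0,1)^N): if the kernels A_α have bounded first derivatives then
‖𝒜_c − 𝒜‖_{L²→L²} ≤ (N/(2p)) ∑_α ‖∇A_α‖_{L^∞} → 0 as p → ∞.
-/

open MeasureTheory Finset

noncomputable section

namespace Stmt14

/-- The half-open cube `[0,h)^N`. -/
def cube (N : ℕ) (h : ℝ) : Set (Fin N → ℝ) := Set.univ.pi fun _ => Set.Ico 0 h

/-- `x_α`: the vector whose `n`-th coordinate is `x n` for `n ∈ α` and `0` for
`n ∉ α`. -/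
def proj {N : ℕ} (α : Finset (Fin N)) (x : Fin N → ℝ) : Fin N → ℝ :=
  fun n => if n ∈ α then x n else 0

/-- `k_ᾱ + x_α`: the point whose coordinates in `α` come from `x` and whose
coordinates outside `α` come from `k`. -/
def combine {N : ℕ} (α : Finset (Fin N)) (x k : Fin N → ℝ) : Fin N → ℝ :=
  fun n => if n ∈ α then x n else k n

/-- The pointwise formula of the multi-kernel operator
`𝒜_c u(k) = ∑_α ∫_{[0,1)^{|α|}} A_α(k, x_α) u(k_ᾱ + x_α) dx_α`.  The partial
integral over the coordinates in `α` is realized as an integral over the whole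
unit cube: the integrand depends only on the coordinates of `x` in `α`, and the
remaining coordinates range over `[0,1)`, contributing a factor `1` each. -/
def AcFun {N : ℕ} (A : Finset (Fin N) → (Fin N → ℝ) → (Fin N → ℝ) → ℝ)
    (u : (Fin N → ℝ) → ℂ) : (Fin N → ℝ) → ℂ :=
  fun k => ∑ α : Finset (Fin N),
    ∫ x in cube N 1, (A α k (proj α x) : ℂ) * u (combine α x k)

/-- `‖∇A_α‖_{L^∞}`: the supremum norm of the (total) derivative of the kernel
`A_α`, as a function of the joint variable `(k, x)`. -/
def gradNorm {N : ℕ} (A : Finset (Fin N) → (Fin N → ℝ) → (Fin N → ℝ) → ℝ)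
    (α : Finset (Fin N)) : ℝ :=
  ⨆ q : (Fin N → ℝ) × (Fin N → ℝ),
    ‖fderiv ℝ (fun q : (Fin N → ℝ) × (Fin N → ℝ) => A α q.1 q.2) q‖

/-- The vertex `a_i = 𝐛/p` of a subcube of the uniform partition of `[0,1)^N`
into `p^N` subcubes; the subcubes are indexed by their digit vectors
`𝐛 ∈ {0,...,p−1}^N` (the base-`p` digits of `i − 1`). -/
def aV {N : ℕ} (p : ℕ) (b : Fin N → Fin p) : Fin N → ℝ := fun n => (b n : ℝ) / p

/-- The midpoint shift `ε = (1/(2p),...,1/(2p))`. -/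
def epsV (N p : ℕ) : Fin N → ℝ := fun _ => 1 / (2 * p)

/-- The subcube `Ω_i = a_i + [0,1/p)^N`. -/
def cubeAt {N : ℕ} (p : ℕ) (b : Fin N → Fin p) : Set (Fin N → ℝ) :=
  {x | x - aV p b ∈ cube N (1 / p)}

/-- The piecewise-constant coefficients
`A_{ij}^α = A_α(a_i + ε, (a_j + ε)_α)` if `(a_i)_ᾱ = (a_j)_ᾱ`, else `0`. -/
def coefA {N : ℕ} (A : Finset (Fin N) → (Fin N → ℝ) → (Fin N → ℝ) → ℝ)
    (p : ℕ) (α : Finset (Fin N)) (i j : Fin N → Fin p) : ℂ :=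
  if ∀ n ∉ α, i n = j n then
    (A α (aV p i + epsV N p) (proj α (aV p j + epsV N p)) : ℂ)
  else 0

/-- The pointwise formula of the scalar elementary operator `𝓔_{ij}^α[c]`
(with `h = 1/p`, `M = 1`):
`(𝓔_{ij}^α[c]u)(x + a_i) = p^{|α|} c ∫_{[0,1/p)^{|α|}} u(x' + a_j) dx'_α`, and
`0` outside `Ω_i`.  The partial integral over the coordinates in `α` is realized
as an integral over the whole cube `[0,1/p)^N` (the integrand does not depend on
the coordinates of `y` outside `α`), compensated by the additional
normalization `p^{N−|α|}`. -/
def EfunP {N : ℕ} (p : ℕ) (i j : Fin N → Fin p) (α : Finset (Fin N)) (c : ℂ)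
    (u : (Fin N → ℝ) → ℂ) : (Fin N → ℝ) → ℂ :=
  (cubeAt p i).indicator fun x =>
    ((p : ℂ) ^ α.card * (p : ℂ) ^ (N - α.card)) * c *
      ∫ y in cube N (1 / p), u (aV p j + combine α y (x - aV p i))

/-- The pointwise formula of the midpoint discretization
`𝒜 = ∑_α ∑_{i,j=1}^{p^N} p^{−|α|} 𝓔_{ij}^α[A_{ij}^α]`. -/
def AdFun {N : ℕ} (A : Finset (Fin N) → (Fin N → ℝ) → (Fin N → ℝ) → ℝ)
    (p : ℕ) (u : (Fin N → ℝ) → ℂ) : (Fin N → ℝ) → ℂ :=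
  fun x => ∑ α : Finset (Fin N), ∑ i : Fin N → Fin p, ∑ j : Fin N → Fin p,
    ((p : ℂ) ^ α.card)⁻¹ * EfunP p i j α (coefA A p α i j) u x

open scoped NNReal ENNReal

/-!
On `Ω_i × Ω_j` the kernel `A_α` differs from its value at the midpoints by at most
`‖∇A_α‖ / (2p)`, in the supremum metric.  The discretization is the integral operator with the
piecewise constant kernel: the `j` that agree with `i` outside `α` contribute with weight
`p^{N-|α|}`, which is also the number of cubes `Ω_j` with prescribed digits in `α`.  So the error
at `k` is at most `∑_α ‖∇A_α‖ / (2p)` times the mean of `|u(k_ᾱ + x_α)|` over `x`, and this mean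
does not increase the norm because `(k, x) ↦ k_ᾱ + x_α` preserves measure and Jensen's inequality
applies on each fibre.
-/

section MixedNorms

variable {X Y E : Type*} [MeasurableSpace X] [MeasurableSpace Y] [NormedAddCommGroup E]
  {μ : Measure X} {ν : Measure Y} {q : ℝ≥0∞}

lemma eLpNorm_eLpNorm_prodMk_le [SFinite ν] {f : X × Y → E}
    (hf : AEStronglyMeasurable f (μ.prod ν)) :
    eLpNorm (fun x => eLpNorm (fun y => f (x, y)) q ν) q μ ≤ eLpNorm f q (μ.prod ν) := by
  rcases eq_or_ne q 0 with rfl | hq0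
  · simp
  rcases eq_or_ne q ∞ with rfl | hqtop
  · simp only [eLpNorm_exponent_top]
    refine essSup_le_of_ae_le _ ?_
    filter_upwards [Measure.ae_ae_of_ae_prod (enorm_ae_le_eLpNormEssSup f (μ.prod ν))] with x hx
    exact essSup_le_of_ae_le _ hx
  · simp only [eLpNorm_eq_lintegral_rpow_enorm_toReal hq0 hqtop, enorm_eq_self, one_div,
      ENNReal.rpow_inv_rpow (ENNReal.toReal_ne_zero.2 ⟨hq0, hqtop⟩)]
    rw [lintegral_prod _ (hf.enorm.pow_const _)]

lemma enorm_integral_norm_le_eLpNorm [IsProbabilityMeasure ν] {g : Y → E} (hq : 1 ≤ q)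
    (hg : AEStronglyMeasurable g ν) : ‖∫ y, ‖g y‖ ∂ν‖ₑ ≤ eLpNorm g q ν :=
  calc ‖∫ y, ‖g y‖ ∂ν‖ₑ ≤ ∫⁻ y, ‖‖g y‖‖ₑ ∂ν := enorm_integral_le_lintegral_enorm _
    _ = eLpNorm g 1 ν := by simp only [enorm_norm, eLpNorm_one_eq_lintegral_enorm]
    _ ≤ eLpNorm g q ν := eLpNorm_le_eLpNorm_of_exponent_le hq hg

lemma eLpNorm_integral_norm_prodMk_le [IsProbabilityMeasure ν] {f : X × Y → E}
    (hq : 1 ≤ q) (hf : AEStronglyMeasurable f (μ.prod ν)) :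
    eLpNorm (fun x => ∫ y, ‖f (x, y)‖ ∂ν) q μ ≤ eLpNorm f q (μ.prod ν) := by
  refine (eLpNorm_mono_enorm_ae ?_).trans (eLpNorm_eLpNorm_prodMk_le hf)
  filter_upwards [hf.prodMk_left] with x hx
  exact enorm_integral_norm_le_eLpNorm hq hx

lemma eLpNorm_le_of_ae_norm_le_sum {ι : Type*} {s : Finset ι} {f : X → E} {g : ι → X → ℝ}
    {c : ι → ℝ≥0} {B : ℝ≥0∞} (hq : 1 ≤ q) (hg : ∀ i ∈ s, AEStronglyMeasurable (g i) μ)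
    (hgB : ∀ i ∈ s, eLpNorm (g i) q μ ≤ B)
    (hf : ∀ᵐ x ∂μ, ‖f x‖ ≤ ∑ i ∈ s, c i * g i x) :
    eLpNorm f q μ ≤ (∑ i ∈ s, c i : ℝ≥0) * B :=
  calc eLpNorm f q μ ≤ eLpNorm (∑ i ∈ s, (c i : ℝ) • g i) q μ :=
        eLpNorm_mono_ae_real <| hf.mono fun x hx => by
          simpa only [Finset.sum_apply, Pi.smul_apply, smul_eq_mul] using hx
    _ ≤ ∑ i ∈ s, eLpNorm ((c i : ℝ) • g i) q μ :=
        eLpNorm_sum_le (fun i hi => (hg i hi).const_smul _) hq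
    _ ≤ ∑ i ∈ s, c i * B := by
        refine Finset.sum_le_sum fun i hi => ?_
        rw [eLpNorm_const_smul, Real.enorm_of_nonneg (c i).coe_nonneg, ENNReal.ofReal_coe_nnreal]
        gcongr
        exact hgB i hi
    _ = (∑ i ∈ s, c i : ℝ≥0) * B := by rw [← Finset.sum_mul, ENNReal.ofNNReal_finsetSum]

lemma norm_sub_le_of_eLpNorm_sub_le {𝕜 : Type*} [NontriviallyNormedField 𝕜] [NormedSpace 𝕜 E]
    [Fact (1 ≤ q)] {S T : Lp E q μ →L[𝕜] Lp E q μ} {C : ℝ≥0}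
    (h : ∀ u : Lp E q μ, eLpNorm (⇑(S u) - ⇑(T u)) q μ ≤ C * eLpNorm u q μ) :
    ‖S - T‖ ≤ C := by
  refine ContinuousLinearMap.opNorm_le_bound _ C.coe_nonneg fun u => ?_
  have h_toReal := ENNReal.toReal_mono (ENNReal.mul_ne_top ENNReal.coe_ne_top (Lp.eLpNorm_ne_top u))
    (h u)
  rwa [ENNReal.toReal_mul, ENNReal.coe_toReal, ← Lp.norm_def,
    ← eLpNorm_congr_ae (Lp.coeFn_sub (S u) (T u)), ← Lp.norm_def] at h_toReal

end MixedNorms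

section StepKernel

variable {X E 𝕜 : Type*} [MeasurableSpace X] {μ : Measure X} [NormedField 𝕜]
  [NormedAddCommGroup E] [NormedSpace 𝕜 E] {K : X → 𝕜} {f : X → E} {δ : ℝ}

lemma integrableOn_smul_of_norm_sub_le {s : Set X} (hs : MeasurableSet s)
    (hK : AEStronglyMeasurable K (μ.restrict s)) (hf : IntegrableOn f s μ) {c : 𝕜}
    (hKc : ∀ x ∈ s, ‖K x - c‖ ≤ δ) : IntegrableOn (fun x => K x • f x) s μ := by
  refine Integrable.bdd_smul hf (‖c‖ + δ) hK ((ae_restrict_iff' hs).2 (.of_forall fun x hx => ?_))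
  exact (norm_le_norm_add_norm_sub' _ _).trans (by gcongr; exact hKc x hx)

variable [NormedSpace ℝ E]

lemma norm_setIntegral_smul_sub_le {s : Set X} (hs : MeasurableSet s)
    (hK : AEStronglyMeasurable K (μ.restrict s)) (hf : IntegrableOn f s μ) {c : 𝕜}
    (hKc : ∀ x ∈ s, ‖K x - c‖ ≤ δ) :
    ‖∫ x in s, K x • f x ∂μ - ∫ x in s, c • f x ∂μ‖ ≤ δ * ∫ x in s, ‖f x‖ ∂μ := by
  rw [← integral_sub (integrableOn_smul_of_norm_sub_le hs hK hf hKc) (hf.fun_smul c),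
    ← integral_const_mul]
  refine norm_integral_le_of_norm_le (hf.norm.const_mul δ)
    ((ae_restrict_iff' hs).2 (.of_forall fun x hx => ?_))
  rw [← sub_smul, norm_smul]
  gcongr
  exact hKc x hx

lemma norm_setIntegral_iUnion_smul_sub_sum_le {ι : Type*} [Fintype ι] {s : ι → Set X}
    (hs : ∀ i, MeasurableSet (s i)) (hdisj : Pairwise (Function.onFun Disjoint s))
    (hK : AEStronglyMeasurable K (μ.restrict (⋃ i, s i))) (hf : IntegrableOn f (⋃ i, s i) μ)
    {c : ι → 𝕜} (hKc : ∀ i, ∀ x ∈ s i, ‖K x - c i‖ ≤ δ) :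
    ‖∫ x in ⋃ i, s i, K x • f x ∂μ - ∑ i, ∫ x in s i, c i • f x ∂μ‖
      ≤ δ * ∫ x in ⋃ i, s i, ‖f x‖ ∂μ := by
  have hKi (i : ι) : AEStronglyMeasurable K (μ.restrict (s i)) :=
    hK.mono_set (Set.subset_iUnion s i)
  have hfi (i : ι) : IntegrableOn f (s i) μ := hf.mono_set (Set.subset_iUnion s i)
  rw [integral_iUnion_fintype hs hdisj fun i =>
      integrableOn_smul_of_norm_sub_le (hs i) (hKi i) (hfi i) (hKc i),
    integral_iUnion_fintype hs hdisj fun i => (hfi i).norm, ← Finset.sum_sub_distrib,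
    Finset.mul_sum]
  exact norm_sum_le_of_le _ fun i _ =>
    norm_setIntegral_smul_sub_le (hs i) (hKi i) (hfi i) (hKc i)

end StepKernel

section Piecewise

variable {ι : Type*} [Fintype ι] [DecidableEq ι]

lemma measurePreserving_piecewise {X : ι → Type*} [∀ i, MeasurableSpace (X i)]
    (μ : ∀ i, Measure (X i)) [∀ i, IsProbabilityMeasure (μ i)] (s : Finset ι) :
    MeasurePreserving (fun q : (∀ i, X i) × (∀ i, X i) => s.piecewise q.2 q.1)
      ((Measure.pi μ).prod (Measure.pi μ)) (Measure.pi μ) := by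
  have hmeas : Measurable fun q : (∀ i, X i) × (∀ i, X i) => s.piecewise q.2 q.1 := by
    refine measurable_pi_lambda _ fun i => ?_
    by_cases hi : i ∈ s <;> simp only [Finset.piecewise, hi, if_true, if_false] <;> fun_prop
  refine ⟨hmeas, (Measure.pi_eq fun t ht => ?_).symm⟩
  have hpre : (fun q : (∀ i, X i) × (∀ i, X i) => s.piecewise q.2 q.1) ⁻¹' Set.univ.pi t
      = (Set.univ.pi fun i => if i ∈ s then Set.univ else t i) ×ˢ
        (Set.univ.pi fun i => if i ∈ s then t i else Set.univ) := by
    ext q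
    simp only [Set.mem_preimage, Set.mem_univ_pi, Set.mem_prod, ← forall_and]
    refine forall_congr' fun i => ?_
    by_cases hi : i ∈ s <;> simp [hi]
  rw [Measure.map_apply hmeas (.univ_pi ht), hpre, Measure.prod_prod, Measure.pi_pi,
    Measure.pi_pi, ← Finset.prod_mul_distrib]
  refine Finset.prod_congr rfl fun i _ => ?_
  by_cases hi : i ∈ s <;> simp [hi]

variable {κ : Type*} [Fintype κ] [DecidableEq κ]

lemma card_filter_piecewise_eq {s : Finset ι} {i j : ι → κ} (hij : ∀ n ∉ s, i n = j n) :
    #{j' : ι → κ | s.piecewise j' i = j} = Fintype.card κ ^ #sᶜ := by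
  have hfiber : ({j' : ι → κ | s.piecewise j' i = j} : Finset (ι → κ))
      = Fintype.piFinset fun n => if n ∈ s then {j n} else univ := by
    ext j'
    simp only [Finset.mem_filter_univ, Fintype.mem_piFinset, funext_iff]
    refine forall_congr' fun n => ?_
    by_cases hn : n ∈ s
    · simp [hn]
    · simp [hn, hij n hn]
  rw [hfiber, Fintype.card_piFinset, ← Finset.prod_mul_prod_compl s,
    Finset.prod_eq_one fun n hn => by simp [hn], one_mul,
    Finset.prod_eq_pow_card (b := Fintype.card κ) fun n hn => by
      simp [Finset.mem_compl.1 hn]]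

lemma sum_comp_piecewise {M : Type*} [AddCommMonoid M] (s : Finset ι) (i : ι → κ)
    (F : (ι → κ) → M) :
    ∑ j, F (s.piecewise j i)
      = ∑ j with ∀ n ∉ s, i n = j n, Fintype.card κ ^ #sᶜ • F j := by
  rw [← Finset.sum_fiberwise_of_maps_to (s := univ) (g := fun j => s.piecewise j i)
    (t := {j | ∀ n ∉ s, i n = j n}) fun j _ => by simp +contextual]
  refine Finset.sum_congr rfl fun j hj => ?_
  rw [Finset.sum_congr rfl fun j' hj' => congrArg F (Finset.mem_filter.1 hj').2,
    Finset.sum_const, card_filter_piecewise_eq ((Finset.mem_filter_univ j).1 hj)]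

end Piecewise

section Geometry

variable {N : ℕ}

lemma measurableSet_cube (h : ℝ) : MeasurableSet (cube N h) :=
  .univ_pi fun _ => measurableSet_Ico

lemma lipschitzWith_proj (α : Finset (Fin N)) : LipschitzWith 1 (proj α) := by
  refine LipschitzWith.of_dist_le_mul fun x y => ?_
  rw [NNReal.coe_one, one_mul]
  refine (dist_pi_le_iff dist_nonneg).2 fun n => ?_
  by_cases hn : n ∈ α
  · simpa [proj, hn] using dist_le_pi_dist x y n
  · simp [proj, hn]

lemma proj_mem_cube {h : ℝ} (hh : 0 < h) (α : Finset (Fin N)) {x : Fin N → ℝ}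
    (hx : x ∈ cube N h) : proj α x ∈ cube N h := fun n hn => by
  by_cases hα : n ∈ α
  · simpa [proj, hα] using hx n hn
  · simp [proj, hα, hh]

variable {p : ℕ}

/-- The midpoint `a_i + ε` of the subcube `Ω_i`. -/
def cubeMid (p : ℕ) (b : Fin N → Fin p) : Fin N → ℝ := aV p b + epsV N p

lemma proj_cubeMid_piecewise (α : Finset (Fin N)) (i j : Fin N → Fin p) :
    proj α (cubeMid p (α.piecewise j i)) = proj α (cubeMid p j) := by
  funext n
  by_cases hn : n ∈ α <;> simp [proj, cubeMid, aV, hn]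

lemma combine_aV_piecewise_add (α : Finset (Fin N)) (i j : Fin N → Fin p) (y k : Fin N → ℝ) :
    combine α (aV p (α.piecewise j i) + y) k = combine α (aV p j + y) k := by
  funext n
  by_cases hn : n ∈ α <;> simp [combine, aV, hn]

lemma aV_add_combine_sub_aV {α : Finset (Fin N)} {i j : Fin N → Fin p}
    (hij : ∀ n ∉ α, i n = j n) (y k : Fin N → ℝ) :
    aV p j + combine α y (k - aV p i) = combine α (aV p j + y) k := by
  funext n
  by_cases hn : n ∈ α
  · simp [combine, hn]
  · simp [combine, aV, hn, hij n hn]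

lemma measurableSet_cubeAt (b : Fin N → Fin p) : MeasurableSet (cubeAt p b) :=
  (measurable_id.sub_const _) (measurableSet_cube _)

lemma setIntegral_cubeAt {E : Type*} [NormedAddCommGroup E] [NormedSpace ℝ E]
    (b : Fin N → Fin p) (f : (Fin N → ℝ) → E) :
    ∫ x in cubeAt p b, f x = ∫ y in cube N (1 / p), f (aV p b + y) := by
  have hshift := (measurePreserving_sub_right volume (aV p b)).setIntegral_preimage_emb
    (measurableEmbedding_subRight (aV p b)) (fun y => f (aV p b + y)) (cube N (1 / p))
  simp only [add_sub_cancel] at hshift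
  exact hshift

lemma dist_cubeMid_le {b : Fin N → Fin p} {x : Fin N → ℝ} (hx : x ∈ cubeAt p b) :
    dist x (cubeMid p b) ≤ 1 / (2 * p) := by
  refine (dist_pi_le_iff (by positivity)).2 fun n => ?_
  obtain ⟨hle, hlt⟩ := hx n (Set.mem_univ n)
  have htwo : (1 : ℝ) / p = 1 / (2 * p) + 1 / (2 * p) := by rw [← one_div_mul_one_div]; ring
  simp only [Pi.sub_apply] at hle hlt
  simp only [Real.dist_eq, cubeMid, Pi.add_apply, epsV, abs_le]
  constructor <;> linarith

lemma mem_cubeAt_iff_floor (hp : 0 < p) {b : Fin N → Fin p} {x : Fin N → ℝ} :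
    x ∈ cubeAt p b ↔ ∀ n, ⌊x n * p⌋ = (b n : ℤ) := by
  have hp' : (0 : ℝ) < p := Nat.cast_pos.2 hp
  simp only [cubeAt, cube, aV, Set.mem_ofPred_eq, Set.mem_univ_pi, Set.mem_Ico, Pi.sub_apply,
    Int.floor_eq_iff, Int.cast_natCast, sub_nonneg, div_le_iff₀ hp', lt_div_iff₀ hp', sub_mul,
    div_mul_cancel₀ _ hp'.ne', sub_lt_iff_lt_add']

lemma pairwise_disjoint_cubeAt (hp : 0 < p) :
    Pairwise (Function.onFun Disjoint (cubeAt p : (Fin N → Fin p) → Set (Fin N → ℝ))) := by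
  refine fun b c hbc => Set.disjoint_left.2 fun x hb hc => hbc (funext fun n => Fin.ext ?_)
  rw [mem_cubeAt_iff_floor hp] at hb hc
  exact_mod_cast (hb n).symm.trans (hc n)

lemma iUnion_cubeAt (hp : 0 < p) : ⋃ b : Fin N → Fin p, cubeAt p b = cube N 1 := by
  have hp' : (0 : ℝ) < p := Nat.cast_pos.2 hp
  have hfloor (t : ℝ) : (∃ d : Fin p, ⌊t * p⌋ = (d : ℤ)) ↔ t ∈ Set.Ico (0 : ℝ) 1 :=
    calc (∃ d : Fin p, ⌊t * p⌋ = (d : ℤ)) ↔ 0 ≤ ⌊t * p⌋ ∧ ⌊t * p⌋ < p :=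
          ⟨fun ⟨d, hd⟩ => by omega, fun h => ⟨⟨⌊t * p⌋.toNat, by omega⟩, by simp [h.1]⟩⟩
      _ ↔ t ∈ Set.Ico (0 : ℝ) 1 := by
          rw [Int.floor_nonneg, Int.floor_lt, Int.cast_natCast, mul_nonneg_iff_of_pos_right hp',
            mul_lt_iff_lt_one_left hp', Set.mem_Ico]
  ext x
  simp only [Set.mem_iUnion, mem_cubeAt_iff_floor hp, cube, Set.mem_univ_pi, ← hfloor,
    Classical.skolem]

lemma cubeAt_subset_cube (hp : 0 < p) (b : Fin N → Fin p) : cubeAt p b ⊆ cube N 1 :=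
  iUnion_cubeAt (N := N) hp ▸ Set.subset_iUnion _ b

lemma cubeMid_mem_cube (hp : 0 < p) (b : Fin N → Fin p) : cubeMid p b ∈ cube N 1 := by
  refine cubeAt_subset_cube hp b fun n _ => ?_
  have hp' : (0 : ℝ) < p := Nat.cast_pos.2 hp
  simp only [cubeMid, add_sub_cancel_left, epsV, Set.mem_Ico]
  exact ⟨by positivity, by gcongr; linarith⟩

end Geometry

section Averages

variable {N : ℕ}

lemma volume_restrict_cube : (volume : Measure (Fin N → ℝ)).restrict (cube N 1)
    = Measure.pi fun _ => volume.restrict (Set.Ico (0 : ℝ) 1) := by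
  rw [cube, volume_pi, Measure.restrict_pi_pi]

instance isProbabilityMeasure_Ico : IsProbabilityMeasure (volume.restrict (Set.Ico (0 : ℝ) 1)) :=
  ⟨by simp⟩

instance isProbabilityMeasure_cube :
    IsProbabilityMeasure ((volume : Measure (Fin N → ℝ)).restrict (cube N 1)) := by
  rw [volume_restrict_cube]
  infer_instance

lemma measurePreserving_combine (α : Finset (Fin N)) :
    MeasurePreserving (fun q : (Fin N → ℝ) × (Fin N → ℝ) => combine α q.2 q.1)
      ((volume.restrict (cube N 1)).prod (volume.restrict (cube N 1)))
      (volume.restrict (cube N 1)) := by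
  rw [volume_restrict_cube]
  exact measurePreserving_piecewise _ α

variable {E : Type*} [NormedAddCommGroup E] {q : ℝ≥0∞} {u : (Fin N → ℝ) → E}

/-- The mean of `|u(k_ᾱ + x_α)|` over `x ∈ [0,1)^N`, as a function of `k`; it controls the
contribution of `A_α` to the discretization error. -/
def fiberMean (α : Finset (Fin N)) (u : (Fin N → ℝ) → E) (k : Fin N → ℝ) : ℝ :=
  ∫ x in cube N 1, ‖u (combine α x k)‖

lemma integrable_comp_combine (α : Finset (Fin N)) (hq : 1 ≤ q)
    (hu : MemLp u q (volume.restrict (cube N 1))) :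
    Integrable (fun z : (Fin N → ℝ) × (Fin N → ℝ) => u (combine α z.2 z.1))
      ((volume.restrict (cube N 1)).prod (volume.restrict (cube N 1))) :=
  (measurePreserving_combine α).integrable_comp_of_integrable (hu.integrable hq)

lemma ae_integrableOn_comp_combine (α : Finset (Fin N)) (hq : 1 ≤ q)
    (hu : MemLp u q (volume.restrict (cube N 1))) :
    ∀ᵐ k ∂volume.restrict (cube N 1), IntegrableOn (fun x => u (combine α x k)) (cube N 1) :=
  (integrable_comp_combine α hq hu).prod_right_ae

lemma aestronglyMeasurable_fiberMean (α : Finset (Fin N)) (hq : 1 ≤ q)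
    (hu : MemLp u q (volume.restrict (cube N 1))) :
    AEStronglyMeasurable (fiberMean α u) (volume.restrict (cube N 1)) :=
  (integrable_comp_combine α hq hu).norm.integral_prod_left.aestronglyMeasurable

lemma eLpNorm_fiberMean_le (α : Finset (Fin N)) (hq : 1 ≤ q)
    (hu : AEStronglyMeasurable u (volume.restrict (cube N 1))) :
    eLpNorm (fiberMean α u) q (volume.restrict (cube N 1))
      ≤ eLpNorm u q (volume.restrict (cube N 1)) :=
  calc eLpNorm (fiberMean α u) q (volume.restrict (cube N 1))
      ≤ eLpNorm (fun z : (Fin N → ℝ) × (Fin N → ℝ) => u (combine α z.2 z.1)) q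
          ((volume.restrict (cube N 1)).prod (volume.restrict (cube N 1))) :=
        eLpNorm_integral_norm_prodMk_le (f := fun z => u (combine α z.2 z.1)) hq
          (hu.comp_measurePreserving (measurePreserving_combine α))
    _ = eLpNorm u q (volume.restrict (cube N 1)) :=
        eLpNorm_comp_measurePreserving hu (measurePreserving_combine α)

end Averages

section Discretization

variable {N p : ℕ}

lemma sum_inv_pow_mul_EfunP (hp : 0 < p) (α : Finset (Fin N)) {i : Fin N → Fin p}
    {k : Fin N → ℝ} (hk : k ∈ cubeAt p i) (c : (Fin N → Fin p) → (Fin N → Fin p) → ℂ)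
    (u : (Fin N → ℝ) → ℂ) :
    ∑ i', ∑ j, ((p : ℂ) ^ #α)⁻¹ * EfunP p i' j α (c i' j) u k
      = ∑ j, (p : ℂ) ^ #αᶜ *
          (c i j * ∫ y in cube N (1 / p), u (aV p j + combine α y (k - aV p i))) := by
  have hp' : (p : ℂ) ≠ 0 := Nat.cast_ne_zero.2 hp.ne'
  rw [Finset.sum_eq_single_of_mem i (Finset.mem_univ i) fun i' _ hi' =>
    Finset.sum_eq_zero fun j _ => ?_]
  · refine Finset.sum_congr rfl fun j _ => ?_
    rw [EfunP, Set.indicator_of_mem hk, Finset.card_compl, Fintype.card_fin]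
    field_simp
  · rw [EfunP, Set.indicator_of_notMem, mul_zero]
    exact Set.disjoint_right.1 (pairwise_disjoint_cubeAt hp hi') hk

lemma coefA_mul_integral (A : Finset (Fin N) → (Fin N → ℝ) → (Fin N → ℝ) → ℝ)
    (α : Finset (Fin N)) (i j : Fin N → Fin p) (u : (Fin N → ℝ) → ℂ) (k : Fin N → ℝ) :
    coefA A p α i j * ∫ y in cube N (1 / p), u (aV p j + combine α y (k - aV p i))
      = if ∀ n ∉ α, i n = j n then
          ∫ x in cubeAt p j, (A α (cubeMid p i) (proj α (cubeMid p j)) : ℂ) * u (combine α x k)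
        else 0 := by
  rw [coefA]
  split_ifs with hij
  · simp only [aV_add_combine_sub_aV hij, setIntegral_cubeAt, integral_const_mul, cubeMid]
  · rw [zero_mul]

lemma setIntegral_cubeAt_piecewise (K : (Fin N → ℝ) → ℂ) (α : Finset (Fin N))
    (i j : Fin N → Fin p) (u : (Fin N → ℝ) → ℂ) (k : Fin N → ℝ) :
    ∫ x in cubeAt p (α.piecewise j i),
        K (proj α (cubeMid p (α.piecewise j i))) * u (combine α x k)
      = ∫ x in cubeAt p j, K (proj α (cubeMid p j)) * u (combine α x k) := by
  simp only [setIntegral_cubeAt, proj_cubeMid_piecewise, combine_aV_piecewise_add]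

lemma AdFun_eq_of_mem_cubeAt (hp : 0 < p)
    (A : Finset (Fin N) → (Fin N → ℝ) → (Fin N → ℝ) → ℝ) (u : (Fin N → ℝ) → ℂ)
    {i : Fin N → Fin p} {k : Fin N → ℝ} (hk : k ∈ cubeAt p i) :
    AdFun A p u k = ∑ α, ∑ j, ∫ x in cubeAt p j,
      (A α (cubeMid p i) (proj α (cubeMid p j)) : ℂ) * u (combine α x k) := by
  refine Finset.sum_congr rfl fun α _ => ?_
  let F (j : Fin N → Fin p) : ℂ := ∫ x in cubeAt p j,
    (A α (cubeMid p i) (proj α (cubeMid p j)) : ℂ) * u (combine α x k)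
  calc ∑ i', ∑ j, ((p : ℂ) ^ #α)⁻¹ * EfunP p i' j α (coefA A p α i' j) u k
      = ∑ j, (p : ℂ) ^ #αᶜ * if ∀ n ∉ α, i n = j n then F j else 0 := by
        simp only [sum_inv_pow_mul_EfunP hp α hk, coefA_mul_integral, F]
    _ = ∑ j with ∀ n ∉ α, i n = j n, Fintype.card (Fin p) ^ #αᶜ • F j := by
        simp only [mul_ite, mul_zero, Finset.sum_filter, Fintype.card_fin, nsmul_eq_mul,
          Nat.cast_pow]
    _ = ∑ j, F (α.piecewise j i) := by convert (sum_comp_piecewise α i F).symm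
    _ = ∑ j, F j := Finset.sum_congr rfl fun j _ =>
        setIntegral_cubeAt_piecewise (fun y => (A α (cubeMid p i) y : ℂ)) α i j u k

end Discretization

section ErrorBound

variable {N p : ℕ} {C : ℝ≥0} {K : (Fin N → ℝ) → (Fin N → ℝ) → ℝ}

lemma norm_kernel_sub_cubeMid_le (hp : 0 < p)
    (hK : LipschitzOnWith C (fun z : (Fin N → ℝ) × (Fin N → ℝ) => K z.1 z.2)
      (cube N 1 ×ˢ cube N 1)) (α : Finset (Fin N)) {i j : Fin N → Fin p}
    {k x : Fin N → ℝ} (hk : k ∈ cubeAt p i) (hx : x ∈ cubeAt p j) :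
    ‖(K k (proj α x) : ℂ) - K (cubeMid p i) (proj α (cubeMid p j))‖ ≤ C / (2 * p) := by
  have hmem {b : Fin N → Fin p} {y : Fin N → ℝ} (hy : y ∈ cubeAt p b) : y ∈ cube N 1 :=
    cubeAt_subset_cube hp b hy
  have hmid (b : Fin N → Fin p) : cubeMid p b ∈ cube N 1 := cubeMid_mem_cube hp b
  have hproj : dist (proj α x) (proj α (cubeMid p j)) ≤ 1 / (2 * p) :=
    ((lipschitzWith_proj α).dist_le_mul _ _).trans (by simpa using dist_cubeMid_le hx)
  calc ‖(K k (proj α x) : ℂ) - K (cubeMid p i) (proj α (cubeMid p j))‖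
      = dist (K k (proj α x)) (K (cubeMid p i) (proj α (cubeMid p j))) := by
        rw [← Complex.ofReal_sub, Complex.norm_real, Real.dist_eq, Real.norm_eq_abs]
    _ ≤ C * dist (k, proj α x) (cubeMid p i, proj α (cubeMid p j)) :=
        hK.dist_le_mul (k, proj α x) ⟨hmem hk, proj_mem_cube one_pos α (hmem hx)⟩
          (cubeMid p i, proj α (cubeMid p j)) ⟨hmid i, proj_mem_cube one_pos α (hmid j)⟩
    _ ≤ C * (1 / (2 * p)) := by
        gcongr
        exact max_le (dist_cubeMid_le hk) hproj
    _ = C / (2 * p) := mul_one_div _ _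

lemma aestronglyMeasurable_kernel_proj
    (hK : ContinuousOn (fun z : (Fin N → ℝ) × (Fin N → ℝ) => K z.1 z.2)
      (cube N 1 ×ˢ cube N 1)) (α : Finset (Fin N)) {k : Fin N → ℝ} (hk : k ∈ cube N 1) :
    AEStronglyMeasurable (fun x => (K k (proj α x) : ℂ)) (volume.restrict (cube N 1)) := by
  refine ContinuousOn.aestronglyMeasurable ?_ (measurableSet_cube 1)
  refine Complex.continuous_ofReal.comp_continuousOn (hK.comp (g := fun z => K z.1 z.2)
    (f := fun x => (k, proj α x)) ?_ fun x hx => ⟨hk, proj_mem_cube one_pos α hx⟩)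
  exact (continuous_const.prodMk (lipschitzWith_proj α).continuous).continuousOn

lemma norm_integral_kernel_sub_sum_le (hp : 0 < p)
    (hK : LipschitzOnWith C (fun z : (Fin N → ℝ) × (Fin N → ℝ) => K z.1 z.2)
      (cube N 1 ×ˢ cube N 1)) (α : Finset (Fin N)) {i : Fin N → Fin p} {k : Fin N → ℝ}
    (hk : k ∈ cubeAt p i) {u : (Fin N → ℝ) → ℂ}
    (hu : IntegrableOn (fun x => u (combine α x k)) (cube N 1)) :
    ‖(∫ x in cube N 1, (K k (proj α x) : ℂ) * u (combine α x k)) -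
        ∑ j : Fin N → Fin p, ∫ x in cubeAt p j,
          (K (cubeMid p i) (proj α (cubeMid p j)) : ℂ) * u (combine α x k)‖
      ≤ C / (2 * p) * fiberMean α u k := by
  have hmeas := aestronglyMeasurable_kernel_proj hK.continuousOn α (cubeAt_subset_cube hp i hk)
  rw [fiberMean]
  rw [← iUnion_cubeAt hp] at hmeas hu ⊢
  exact norm_setIntegral_iUnion_smul_sub_sum_le measurableSet_cubeAt (pairwise_disjoint_cubeAt hp)
    hmeas hu fun j x hx => norm_kernel_sub_cubeMid_le hp hK α hk hx

variable {A : Finset (Fin N) → (Fin N → ℝ) → (Fin N → ℝ) → ℝ} {L : Finset (Fin N) → ℝ≥0}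

lemma norm_AcFun_sub_AdFun_le (hp : 0 < p)
    (hA : ∀ α, LipschitzOnWith (L α) (fun z : (Fin N → ℝ) × (Fin N → ℝ) => A α z.1 z.2)
      (cube N 1 ×ˢ cube N 1)) {k : Fin N → ℝ} (hk : k ∈ cube N 1) {u : (Fin N → ℝ) → ℂ}
    (hu : ∀ α, IntegrableOn (fun x => u (combine α x k)) (cube N 1)) :
    ‖AcFun A u k - AdFun A p u k‖ ≤ ∑ α, L α / (2 * p) * fiberMean α u k := by
  obtain ⟨i, hi⟩ : ∃ i : Fin N → Fin p, k ∈ cubeAt p i := by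
    rwa [← iUnion_cubeAt hp, Set.mem_iUnion] at hk
  rw [AcFun, AdFun_eq_of_mem_cubeAt hp A u hi, ← Finset.sum_sub_distrib]
  exact norm_sum_le_of_le _ fun α _ => norm_integral_kernel_sub_sum_le hp (hA α) α hi (hu α)

lemma eLpNorm_AcFun_sub_AdFun_le (hp : 0 < p)
    (hA : ∀ α, LipschitzOnWith (L α) (fun z : (Fin N → ℝ) × (Fin N → ℝ) => A α z.1 z.2)
      (cube N 1 ×ˢ cube N 1)) {q : ℝ≥0∞} (hq : 1 ≤ q) {u : (Fin N → ℝ) → ℂ}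
    (hu : MemLp u q (volume.restrict (cube N 1))) :
    eLpNorm (AcFun A u - AdFun A p u) q (volume.restrict (cube N 1))
      ≤ (∑ α, L α / (2 * p) : ℝ≥0) * eLpNorm u q (volume.restrict (cube N 1)) := by
  refine eLpNorm_le_of_ae_norm_le_sum hq
    (fun α _ => aestronglyMeasurable_fiberMean α hq hu)
    (fun α _ => eLpNorm_fiberMean_le α hq hu.aestronglyMeasurable) ?_
  filter_upwards [ae_all_iff.2 fun α => ae_integrableOn_comp_combine α hq hu,
    ae_restrict_mem (measurableSet_cube 1)] with k huk hk
  simpa using norm_AcFun_sub_AdFun_le hp hA hk huk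

lemma gradNorm_nonneg (A : Finset (Fin N) → (Fin N → ℝ) → (Fin N → ℝ) → ℝ)
    (α : Finset (Fin N)) : 0 ≤ gradNorm A α :=
  Real.iSup_nonneg fun _ => norm_nonneg _

lemma lipschitzWith_gradNorm {α : Finset (Fin N)}
    (hdiff : Differentiable ℝ (fun z : (Fin N → ℝ) × (Fin N → ℝ) => A α z.1 z.2))
    (hbdd : ∃ B : ℝ, ∀ z : (Fin N → ℝ) × (Fin N → ℝ),
      ‖fderiv ℝ (fun z : (Fin N → ℝ) × (Fin N → ℝ) => A α z.1 z.2) z‖ ≤ B) :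
    LipschitzWith (gradNorm A α).toNNReal
      (fun z : (Fin N → ℝ) × (Fin N → ℝ) => A α z.1 z.2) := by
  obtain ⟨B, hB⟩ := hbdd
  refine lipschitzWith_of_nnnorm_fderiv_le hdiff fun z => ?_
  exact NNReal.le_toNNReal_of_coe_le (le_ciSup ⟨B, Set.forall_mem_range.2 hB⟩ z)

end ErrorBound

theorem discretization_error_bound_general {N : ℕ}
    {A : Finset (Fin N) → (Fin N → ℝ) → (Fin N → ℝ) → ℝ} {L : Finset (Fin N) → ℝ≥0}
    (hA : ∀ α, LipschitzOnWith (L α) (fun z : (Fin N → ℝ) × (Fin N → ℝ) => A α z.1 z.2)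
      (cube N 1 ×ˢ cube N 1)) {q : ℝ≥0∞} [hq : Fact (1 ≤ q)]
    {Ac : Lp ℂ q (volume.restrict (cube N 1)) →L[ℂ] Lp ℂ q (volume.restrict (cube N 1))}
    (hAc : ∀ u : Lp ℂ q (volume.restrict (cube N 1)),
      Ac u =ᵐ[volume.restrict (cube N 1)] AcFun A u)
    {Ad : ℕ → (Lp ℂ q (volume.restrict (cube N 1)) →L[ℂ] Lp ℂ q (volume.restrict (cube N 1)))}
    (hAd : ∀ p, 1 ≤ p → ∀ u : Lp ℂ q (volume.restrict (cube N 1)),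
      Ad p u =ᵐ[volume.restrict (cube N 1)] AdFun A p u) :
    (∀ p : ℕ, 1 ≤ p → ‖Ac - Ad p‖ ≤ 1 / (2 * p) * ∑ α, L α) ∧
      Filter.Tendsto (fun p => ‖Ac - Ad p‖) Filter.atTop (nhds 0) := by
  have hbound (p : ℕ) (hp : 1 ≤ p) : ‖Ac - Ad p‖ ≤ (∑ α, (L α : ℝ)) / 2 / p := by
    have hnorm := norm_sub_le_of_eLpNorm_sub_le fun u => by
      rw [eLpNorm_congr_ae ((hAc u).sub (hAd p hp u))]
      exact eLpNorm_AcFun_sub_AdFun_le hp hA hq.out (Lp.memLp u)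
    simpa [div_div, Finset.sum_div] using hnorm
  refine ⟨fun p hp => (hbound p hp).trans_eq (by push_cast; ring), ?_⟩
  exact squeeze_zero' (.of_forall fun p => norm_nonneg _)
    (Filter.eventually_atTop.2 ⟨1, hbound⟩) (tendsto_const_div_atTop_nhds_zero_nat _)

/-- **Theorem 2 of the paper.** Let `𝒜_c` be the multi-kernel
operator on `L²([0,1)^N)` with real kernels `A_α` having bounded first
derivatives, and for `p ≥ 1` let `𝒜 = Ad p` be its midpoint discretization with
piecewise constant kernels.  Then
`‖𝒜_c − 𝒜‖ ≤ (N/(2p)) ∑_α ‖∇A_α‖_{L^∞}`, and `‖𝒜_c − 𝒜‖ → 0` as `p → ∞`. -/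
theorem discretization_error_bound (N : ℕ) (hN : 1 ≤ N)
    (A : Finset (Fin N) → (Fin N → ℝ) → (Fin N → ℝ) → ℝ)
    (hdiff : ∀ α, Differentiable ℝ
      (fun q : (Fin N → ℝ) × (Fin N → ℝ) => A α q.1 q.2))
    (hbdd : ∀ α, ∃ C : ℝ, ∀ q : (Fin N → ℝ) × (Fin N → ℝ),
      ‖fderiv ℝ (fun q : (Fin N → ℝ) × (Fin N → ℝ) => A α q.1 q.2) q‖ ≤ C)
    (Ac : Lp ℂ 2 (volume.restrict (cube N 1)) →L[ℂ]
      Lp ℂ 2 (volume.restrict (cube N 1)))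
    (hAc : ∀ u : Lp ℂ 2 (volume.restrict (cube N 1)),
      (Ac u : (Fin N → ℝ) → ℂ) =ᵐ[volume.restrict (cube N 1)]
        AcFun A (u : (Fin N → ℝ) → ℂ))
    (Ad : ℕ → (Lp ℂ 2 (volume.restrict (cube N 1)) →L[ℂ]
      Lp ℂ 2 (volume.restrict (cube N 1))))
    (hAd : ∀ p : ℕ, 1 ≤ p → ∀ u : Lp ℂ 2 (volume.restrict (cube N 1)),
      (Ad p u : (Fin N → ℝ) → ℂ) =ᵐ[volume.restrict (cube N 1)]
        AdFun A p (u : (Fin N → ℝ) → ℂ)) :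
    (∀ p : ℕ, 1 ≤ p →
      ‖Ac - Ad p‖ ≤ (N / (2 * p)) * ∑ α : Finset (Fin N), gradNorm A α) ∧
    Filter.Tendsto (fun p : ℕ => ‖Ac - Ad p‖) Filter.atTop (nhds 0) := by
  obtain ⟨hbound, htendsto⟩ := discretization_error_bound_general
    (fun α => (lipschitzWith_gradNorm (hdiff α) (hbdd α)).lipschitzOnWith) hAc hAd
  refine ⟨fun p hp => (hbound p hp).trans ?_, htendsto⟩
  simp only [NNReal.coe_sum, Real.coe_toNNReal _ (gradNorm_nonneg A _)]
  have hN' : (1 : ℝ) ≤ N := Nat.one_le_cast.2 hN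
  have hsum : 0 ≤ ∑ α, gradNorm A α := Finset.sum_nonneg fun α _ => gradNorm_nonneg A α
  gcongr

end Stmt14
end
end

section
/- Under the setting of the midpoint discretization of the multi-kernel operator (Ω = [0,1)^N, kernels A_α real with bounded first derivatives, 𝒜_c the multi-kernel operator and 𝒜 its discretization at level p), assume in addition that 𝒜_c is self-adjoint, i.e. A_α(k, x_α) = A_α(k_ᾱ + x_α, k_α) for all α, k, x. Then 𝒜 is a self-adjoint bounded operator on L²(Ω), and with δ = (N/(2p)) ∑_{α⊆{1,...,N}} ‖∇A_α‖_{L^∞} the spectra satisfy sp(𝒜_c) ⊆ B_δ(sp(𝒜)) and sp(𝒜) ⊆ B_δ(sp(𝒜_c)), where B_δ(E) denotes the closed δ-neighbourhood of a set E ⊆ ℝ. -/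
/-!
STATEMENT 15: If moreover the kernels are symmetric
(A_α(k, x_α) = A_α(k_ᾱ + x_α, k_α), so that 𝒜_c is self-adjoint), then the
discretization 𝒜 is self-adjoint and, with
δ = (N/(2p)) ∑_α ‖∇A_α‖_{L^∞}, sp(𝒜_c) ⊆ B_δ(sp(𝒜)) and
sp(𝒜) ⊆ B_δ(sp(𝒜_c)) (closed δ-neighbourhoods).
-/

open MeasureTheory Finset

noncomputable section

namespace Stmt15

/-- The half-open cube `[0,h)^N`. -/
def cube (N : ℕ) (h : ℝ) : Set (Fin N → ℝ) := Set.univ.pi fun _ => Set.Ico 0 h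

/-- `x_α`: the vector whose `n`-th coordinate is `x n` for `n ∈ α` and `0` for
`n ∉ α`. -/
def proj {N : ℕ} (α : Finset (Fin N)) (x : Fin N → ℝ) : Fin N → ℝ :=
  fun n => if n ∈ α then x n else 0

/-- `k_ᾱ + x_α`: the point whose coordinates in `α` come from `x` and whose
coordinates outside `α` come from `k`. -/
def combine {N : ℕ} (α : Finset (Fin N)) (x k : Fin N → ℝ) : Fin N → ℝ :=
  fun n => if n ∈ α then x n else k n

/-- The pointwise formula of the multi-kernel operator
`𝒜_c u(k) = ∑_α ∫_{[0,1)^{|α|}} A_α(k, x_α) u(k_ᾱ + x_α) dx_α`.  The partial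
integral over the coordinates in `α` is realized as an integral over the whole
unit cube: the integrand depends only on the coordinates of `x` in `α`, and the
remaining coordinates range over `[0,1)`, contributing a factor `1` each. -/
def AcFun {N : ℕ} (A : Finset (Fin N) → (Fin N → ℝ) → (Fin N → ℝ) → ℝ)
    (u : (Fin N → ℝ) → ℂ) : (Fin N → ℝ) → ℂ :=
  fun k => ∑ α : Finset (Fin N),
    ∫ x in cube N 1, (A α k (proj α x) : ℂ) * u (combine α x k)

/-- `‖∇A_α‖_{L^∞}`: the supremum norm of the (total) derivative of the kernel
`A_α`, as a function of the joint variable `(k, x)`. -/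
def gradNorm {N : ℕ} (A : Finset (Fin N) → (Fin N → ℝ) → (Fin N → ℝ) → ℝ)
    (α : Finset (Fin N)) : ℝ :=
  ⨆ q : (Fin N → ℝ) × (Fin N → ℝ),
    ‖fderiv ℝ (fun q : (Fin N → ℝ) × (Fin N → ℝ) => A α q.1 q.2) q‖

/-- The vertex `a_i = 𝐛/p` of a subcube of the uniform partition of `[0,1)^N`
into `p^N` subcubes; the subcubes are indexed by their digit vectors
`𝐛 ∈ {0,...,p−1}^N` (the base-`p` digits of `i − 1`). -/
def aV {N : ℕ} (p : ℕ) (b : Fin N → Fin p) : Fin N → ℝ := fun n => (b n : ℝ) / p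

/-- The midpoint shift `ε = (1/(2p),...,1/(2p))`. -/
def epsV (N p : ℕ) : Fin N → ℝ := fun _ => 1 / (2 * p)

/-- The subcube `Ω_i = a_i + [0,1/p)^N`. -/
def cubeAt {N : ℕ} (p : ℕ) (b : Fin N → Fin p) : Set (Fin N → ℝ) :=
  {x | x - aV p b ∈ cube N (1 / p)}

/-- The piecewise-constant coefficients
`A_{ij}^α = A_α(a_i + ε, (a_j + ε)_α)` if `(a_i)_ᾱ = (a_j)_ᾱ`, else `0`. -/
def coefA {N : ℕ} (A : Finset (Fin N) → (Fin N → ℝ) → (Fin N → ℝ) → ℝ)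
    (p : ℕ) (α : Finset (Fin N)) (i j : Fin N → Fin p) : ℂ :=
  if ∀ n ∉ α, i n = j n then
    (A α (aV p i + epsV N p) (proj α (aV p j + epsV N p)) : ℂ)
  else 0

/-- The pointwise formula of the scalar elementary operator `𝓔_{ij}^α[c]`
(with `h = 1/p`, `M = 1`):
`(𝓔_{ij}^α[c]u)(x + a_i) = p^{|α|} c ∫_{[0,1/p)^{|α|}} u(x' + a_j) dx'_α`, and
`0` outside `Ω_i`.  The partial integral over the coordinates in `α` is realized
as an integral over the whole cube `[0,1/p)^N` (the integrand does not depend on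
the coordinates of `y` outside `α`), compensated by the additional
normalization `p^{N−|α|}`. -/
def EfunP {N : ℕ} (p : ℕ) (i j : Fin N → Fin p) (α : Finset (Fin N)) (c : ℂ)
    (u : (Fin N → ℝ) → ℂ) : (Fin N → ℝ) → ℂ :=
  (cubeAt p i).indicator fun x =>
    ((p : ℂ) ^ α.card * (p : ℂ) ^ (N - α.card)) * c *
      ∫ y in cube N (1 / p), u (aV p j + combine α y (x - aV p i))

/-- The pointwise formula of the midpoint discretization
`𝒜 = ∑_α ∑_{i,j=1}^{p^N} p^{−|α|} 𝓔_{ij}^α[A_{ij}^α]`. -/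
def AdFun {N : ℕ} (A : Finset (Fin N) → (Fin N → ℝ) → (Fin N → ℝ) → ℝ)
    (p : ℕ) (u : (Fin N → ℝ) → ℂ) : (Fin N → ℝ) → ℂ :=
  fun x => ∑ α : Finset (Fin N), ∑ i : Fin N → Fin p, ∑ j : Fin N → Fin p,
    ((p : ℂ) ^ α.card)⁻¹ * EfunP p i j α (coefA A p α i j) u x

/-!
On the unit cube the discretization is again a multi-kernel operator: its kernels are the `A_α`
evaluated at the midpoints of the cells containing the two arguments. The exchange
`(k, x) ↦ (k_ᾱ + x_α, x_ᾱ + k_α)` is a measure-preserving involution commuting with passage to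
midpoints, so kernel symmetry makes both operators self-adjoint. Points lie within `1/(2p)` of their
cell midpoints in the sup norm, hence corresponding kernels differ by at most `‖∇A_α‖/(2p)`, and by
Cauchy–Schwarz the operators differ in norm by at most `∑_α ‖∇A_α‖/(2p)`. Finally, for normal `b`
the resolvent at distance more than `‖a - b‖` from `sp(b)` has norm less than `‖a - b‖⁻¹`, so `a`
has no spectrum there.
-/

open scoped ENNReal NNReal

section SpectralPerturbation

theorem spectrum_subset_cthickening_of_isStarNormal {𝒜 : Type*} [CStarAlgebra 𝒜] (a b : 𝒜)
    [IsStarNormal b] : spectrum ℂ a ⊆ Metric.cthickening ‖a - b‖ (spectrum ℂ b) := by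
  rcases eq_or_ne a b with rfl | hab
  · exact Metric.self_subset_cthickening _
  intro z hz
  by_contra hfar
  have : Nontrivial 𝒜 := ⟨a, b, hab⟩
  have hpos : 0 < ‖a - b‖ := norm_sub_pos_iff.2 hab
  have hdist : ∀ w ∈ spectrum ℂ b, ‖a - b‖ < ‖z - w‖ := fun w hw ↦ by
    by_contra! hle
    exact hfar (Metric.mem_cthickening_of_dist_le z w _ _ hw (by rwa [dist_eq_norm]))
  have hne : ∀ w ∈ spectrum ℂ b, z - w ≠ 0 := fun w hw ↦
    norm_pos_iff.1 (hpos.trans (hdist w hw))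
  let U : 𝒜ˣ := cfcUnits (fun w ↦ z - w) b hne
  have hU : (U : 𝒜) = algebraMap ℂ 𝒜 z - b := by
    change cfc (fun w ↦ z - w) b = _
    rw [cfc_sub .., cfc_const .., cfc_id' ..]
  have hUinv : ‖(↑U⁻¹ : 𝒜)‖ < ‖a - b‖⁻¹ :=
    norm_cfc_lt (inv_pos.2 hpos) fun w hw ↦ by
      rw [norm_inv]
      exact inv_strictAnti₀ hpos (hdist w hw)
  have hnear : ‖algebraMap ℂ 𝒜 z - a - U‖ < ‖(↑U⁻¹ : 𝒜)‖⁻¹ := by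
    rw [hU, sub_sub_sub_cancel_left, norm_sub_rev]
    exact (lt_inv_comm₀ (Units.norm_pos _) hpos).1 hUinv
  exact hz (U.ofNearby _ hnear).isUnit

end SpectralPerturbation

section KernelOperator

variable {X ι 𝕜 : Type*} [MeasurableSpace X] {μ : Measure X} [RCLike 𝕜]

theorem memLp_mul_comp_measurePreserving {Y : Type*} [MeasurableSpace Y] {ν : Measure Y}
    {τ : Y → X} (hτ : MeasurePreserving τ ν μ) {K : Y → 𝕜} (hK : MemLp K ∞ ν)
    {r : ℝ≥0∞} {u : X → 𝕜} (hu : MemLp u r μ) : MemLp (fun q ↦ K q * u (τ q)) r ν :=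
  (hu.comp_measurePreserving hτ).mul' hK

theorem integrable_inner_of_memLp_two {E : Type*} [NormedAddCommGroup E] [InnerProductSpace 𝕜 E]
    {f g : X → E} (hf : MemLp f 2 μ) (hg : MemLp g 2 μ) :
    Integrable (fun x ↦ inner 𝕜 (f x) (g x)) μ :=
  (L2.integrable_inner (𝕜 := 𝕜) (hf.toLp f) (hg.toLp g)).congr <| by
    filter_upwards [hf.coeFn_toLp, hg.coeFn_toLp] with x hfx hgx
    rw [hfx, hgx]

theorem norm_integral_inner_le {E : Type*} [NormedAddCommGroup E] [InnerProductSpace 𝕜 E]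
    {f g : X → E} (hf : MemLp f 2 μ) (hg : MemLp g 2 μ) :
    ‖∫ x, inner 𝕜 (f x) (g x) ∂μ‖ ≤ (eLpNorm f 2 μ).toReal * (eLpNorm g 2 μ).toReal := by
  have hinner : ∫ x, inner 𝕜 (f x) (g x) ∂μ = inner 𝕜 (hf.toLp f) (hg.toLp g) := by
    rw [L2.inner_def]
    refine integral_congr_ae ?_
    filter_upwards [hf.coeFn_toLp, hg.coeFn_toLp] with x hfx hgx
    rw [hfx, hgx]
  rw [hinner, ← Lp.norm_toLp f hf, ← Lp.norm_toLp g hg]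
  exact norm_inner_le_norm _ _

theorem ae_forall_integrable_mul_comp [Countable ι] [IsFiniteMeasure μ]
    {τ : ι → X × X → X} (hτ : ∀ i, MeasurePreserving (τ i) (μ.prod μ) μ) {K : ι → X × X → 𝕜}
    (hK : ∀ i, MemLp (K i) ∞ (μ.prod μ)) (u : Lp 𝕜 2 μ) :
    ∀ᵐ x ∂μ, ∀ i, Integrable (fun y ↦ K i (x, y) * u (τ i (x, y))) μ :=
  ae_all_iff.2 fun i ↦
    ((memLp_mul_comp_measurePreserving (hτ i) (hK i) (Lp.memLp u)).integrable
      one_le_two).prod_right_ae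

variable [Fintype ι]

/-- `T` is the finite sum of the integral operators `u ↦ ∫ K i (·, y) u (τ i (·, y)) dμ(y)` on
`L²(μ)`, with bounded kernels `K i` and measure-preserving argument maps `τ i`. The multi-kernel
operator has `τ α (k, x) = k_ᾱ + x_α`. -/
structure IsKernelOperator (τ : ι → X × X → X) (K : ι → X × X → 𝕜)
    (T : Lp 𝕜 2 μ →L[𝕜] Lp 𝕜 2 μ) : Prop where
  measurePreserving : ∀ i, MeasurePreserving (τ i) (μ.prod μ) μ
  memLp_top : ∀ i, MemLp (K i) ∞ (μ.prod μ)
  coeFn_apply : ∀ u : Lp 𝕜 2 μ,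
    T u =ᵐ[μ] fun x ↦ ∑ i, ∫ y, K i (x, y) * u (τ i (x, y)) ∂μ

namespace IsKernelOperator

variable {τ : ι → X × X → X} {K L : ι → X × X → 𝕜} {S T : Lp 𝕜 2 μ →L[𝕜] Lp 𝕜 2 μ}

theorem memLp_two (hT : IsKernelOperator τ K T) (u : Lp 𝕜 2 μ) (i : ι) :
    MemLp (fun q ↦ K i q * u (τ i q)) 2 (μ.prod μ) :=
  memLp_mul_comp_measurePreserving (hT.measurePreserving i) (hT.memLp_top i) (Lp.memLp u)

variable [IsProbabilityMeasure μ]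

theorem sub (hS : IsKernelOperator τ K S) (hT : IsKernelOperator τ L T) :
    IsKernelOperator τ (K - L) (S - T) where
  measurePreserving := hS.measurePreserving
  memLp_top i := (hS.memLp_top i).sub (hT.memLp_top i)
  coeFn_apply u := by
    filter_upwards [Lp.coeFn_sub (S u) (T u), hS.coeFn_apply u, hT.coeFn_apply u,
      ae_forall_integrable_mul_comp hS.measurePreserving hS.memLp_top u,
      ae_forall_integrable_mul_comp hT.measurePreserving hT.memLp_top u]
      with x hsub hSx hTx hKint hLint
    simp only [sub_apply, hsub, Pi.sub_apply, hSx, hTx, sub_mul,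
      integral_sub (hKint _) (hLint _), sum_sub_distrib]

theorem inner_apply_left (hT : IsKernelOperator τ K T) (u v : Lp 𝕜 2 μ) :
    inner 𝕜 (T u) v =
      ∑ i, ∫ q, inner 𝕜 (K i q * u (τ i q)) (v q.1) ∂(μ.prod μ) := by
  have hint : ∀ i, Integrable (fun q : X × X ↦ inner 𝕜 (K i q * u (τ i q)) (v q.1))
      (μ.prod μ) := fun i ↦
    integrable_inner_of_memLp_two (hT.memLp_two u i)
      ((Lp.memLp v).comp_measurePreserving measurePreserving_fst)
  simp_rw [fun i ↦ integral_prod _ (hint i)]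
  rw [← integral_finsetSum _ fun i _ ↦ (hint i).integral_prod_left, L2.inner_def]
  refine integral_congr_ae ?_
  filter_upwards [hT.coeFn_apply u] with x hTx
  rw [hTx, sum_inner]
  refine sum_congr rfl fun i _ ↦ ?_
  simp only [RCLike.inner_apply, integral_const_mul, integral_conj]

theorem norm_le (hT : IsKernelOperator τ K T) {c : ι → ℝ}
    (hc : ∀ i, ∀ᵐ q ∂(μ.prod μ), ‖K i q‖ ≤ c i) : ‖T‖ ≤ ∑ i, c i := by
  have hc_nonneg : ∀ i, 0 ≤ c i := fun i ↦
    (hc i).exists.elim fun q hq ↦ (norm_nonneg (K i q)).trans hq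
  refine ContinuousLinearMap.opNorm_le_of_re_inner_le (𝕜 := 𝕜) (sum_nonneg fun i _ ↦ hc_nonneg i)
    fun u v hu hv ↦ (RCLike.re_le_norm _).trans ?_
  rw [hT.inner_apply_left]
  refine (norm_sum_le _ _).trans (sum_le_sum fun i _ ↦ ?_)
  have hKu : (eLpNorm (fun q ↦ K i q * u (τ i q)) 2 (μ.prod μ)).toReal ≤ c i := by
    refine ENNReal.toReal_le_of_le_ofReal (hc_nonneg i) ?_
    calc eLpNorm (fun q ↦ K i q * u (τ i q)) 2 (μ.prod μ)
        ≤ ENNReal.ofReal (c i) * eLpNorm (u ∘ τ i) 2 (μ.prod μ) :=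
          eLpNorm_le_mul_eLpNorm_of_ae_le_mul ((hc i).mono fun q hq ↦ by
            rw [norm_mul]
            exact mul_le_mul_of_nonneg_right hq (norm_nonneg _)) 2
      _ = ENNReal.ofReal (c i) := by
          rw [eLpNorm_comp_measurePreserving (Lp.memLp u).1 (hT.measurePreserving i),
            ← Lp.enorm_def, ← ofReal_norm, hu, ENNReal.ofReal_one, mul_one]
  have hv' : (eLpNorm (v ∘ Prod.fst) 2 (μ.prod μ)).toReal = 1 := by
    rw [eLpNorm_comp_measurePreserving (Lp.memLp v).1 measurePreserving_fst, ← Lp.norm_def, hv]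
  calc _ ≤ (eLpNorm (fun q ↦ K i q * u (τ i q)) 2 (μ.prod μ)).toReal *
          (eLpNorm (v ∘ Prod.fst) 2 (μ.prod μ)).toReal :=
        norm_integral_inner_le (hT.memLp_two u i)
          ((Lp.memLp v).comp_measurePreserving measurePreserving_fst)
    _ ≤ c i := by rwa [hv', mul_one]

theorem isSelfAdjoint {σ : ι → X × X → X × X}
    (hT : IsKernelOperator (fun i q ↦ (σ i q).1) K T)
    (hσ : ∀ i, MeasurePreserving (σ i) (μ.prod μ) (μ.prod μ))
    (hσσ : ∀ i, Function.Involutive (σ i))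
    (hK : ∀ i q, K i (σ i q) = star (K i q)) : IsSelfAdjoint T := by
  rw [ContinuousLinearMap.isSelfAdjoint_iff_isSymmetric]
  intro u v
  change inner 𝕜 (T u) v = inner 𝕜 u (T v)
  rw [← inner_conj_symm u (T v), hT.inner_apply_left, hT.inner_apply_left, map_sum]
  refine sum_congr rfl fun i _ ↦ ?_
  let e : X × X ≃ᵐ X × X := MeasurableEquiv.ofInvolutive (σ i) (hσσ i) (hσ i).measurable
  calc ∫ q, inner 𝕜 (K i q * u (σ i q).1) (v q.1) ∂(μ.prod μ)
      = ∫ q, inner 𝕜 (K i (σ i q) * u (σ i (σ i q)).1) (v (σ i q).1) ∂(μ.prod μ) :=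
        ((hσ i).integral_comp e.measurableEmbedding _).symm
    _ = ∫ q, (starRingEnd 𝕜) (inner 𝕜 (K i q * v (σ i q).1) (u q.1)) ∂(μ.prod μ) := by
        refine integral_congr_ae (.of_forall fun q ↦ ?_)
        simp only [hσσ i q, hK, RCLike.inner_apply, map_mul, starRingEnd_apply, star_star]
        ring
    _ = (starRingEnd 𝕜) (∫ q, inner 𝕜 (K i q * v (σ i q).1) (u q.1) ∂(μ.prod μ)) :=
        integral_conj

end IsKernelOperator

end KernelOperator

section CoordinateExchange

variable {N : ℕ} (α : Finset (Fin N))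

/-- The exchange `(k, x) ↦ (k_ᾱ + x_α, x_ᾱ + k_α)` of the coordinates in `α`. Its first component
is the argument of `u` in the multi-kernel operator, and invariance of the kernels under it is the
symmetry that makes the operator self-adjoint. -/
def exchange (q : (Fin N → ℝ) × (Fin N → ℝ)) : (Fin N → ℝ) × (Fin N → ℝ) :=
  (combine α q.2 q.1, combine α q.1 q.2)

theorem exchange_involutive : Function.Involutive (exchange α) := fun q ↦ by
  refine Prod.ext (funext fun n ↦ ?_) (funext fun n ↦ ?_) <;>
    by_cases hn : n ∈ α <;> simp [exchange, combine, hn]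

theorem measurePreserving_exchange (ν : Fin N → Measure ℝ) [∀ n, SigmaFinite (ν n)] :
    MeasurePreserving (exchange α) ((Measure.pi ν).prod (Measure.pi ν))
      ((Measure.pi ν).prod (Measure.pi ν)) := by
  have hzip := measurePreserving_arrowProdEquivProdArrow ℝ ℝ (Fin N) ν ν
  have hswap : MeasurePreserving
      (fun (f : Fin N → ℝ × ℝ) n ↦ (if n ∈ α then Prod.swap else id) (f n))
      (Measure.pi fun n ↦ (ν n).prod (ν n)) (Measure.pi fun n ↦ (ν n).prod (ν n)) := by
    refine measurePreserving_pi (f := fun n ↦ if n ∈ α then Prod.swap else id) _ _ fun n ↦ ?_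
    split_ifs
    exacts [Measure.measurePreserving_swap, .id _]
  convert hzip.comp (hswap.comp hzip.symm) using 1
  funext q
  refine Prod.ext (funext fun n ↦ ?_) (funext fun n ↦ ?_) <;> by_cases hn : n ∈ α <;>
    simp [exchange, combine, hn, MeasurableEquiv.arrowProdEquivProdArrow,
      Equiv.arrowProdEquivProdArrow]

theorem proj_combine (k x : Fin N → ℝ) : proj α (combine α k x) = proj α k := by
  funext n
  by_cases hn : n ∈ α <;> simp [proj, combine, hn]

theorem proj_congr {x y : Fin N → ℝ} (h : ∀ n ∈ α, x n = y n) : proj α x = proj α y :=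
  funext fun _ ↦ ite_congr rfl (h _) fun _ ↦ rfl

theorem combine_congr_left {x y : Fin N → ℝ} (h : ∀ n ∈ α, x n = y n) (k : Fin N → ℝ) :
    combine α x k = combine α y k :=
  funext fun _ ↦ ite_congr rfl (h _) fun _ ↦ rfl

theorem lipschitzWith_proj : LipschitzWith 1 (proj α) :=
  LipschitzWith.of_dist_le_mul fun x y ↦ by
    rw [NNReal.coe_one, one_mul, dist_pi_le_iff dist_nonneg]
    intro n
    by_cases hn : n ∈ α
    · simpa only [proj, hn, if_true] using dist_le_pi_dist x y n
    · simp [proj, hn]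

end CoordinateExchange

section Cube

theorem measurableSet_cube (N : ℕ) (h : ℝ) : MeasurableSet (cube N h) :=
  MeasurableSet.univ_pi fun _ ↦ measurableSet_Ico

theorem isBounded_cube (N : ℕ) (h : ℝ) : Bornology.IsBounded (cube N h) :=
  Bornology.IsBounded.pi fun _ ↦ Metric.isBounded_Ico 0 h

theorem volume_restrict_cube (N : ℕ) (h : ℝ) :
    volume.restrict (cube N h) =
      Measure.pi fun _ : Fin N ↦ (volume.restrict (Set.Ico 0 h) : Measure ℝ) := by
  rw [cube, volume_pi, Measure.restrict_pi_pi]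

instance isProbabilityMeasure_restrict_unitCube (N : ℕ) :
    IsProbabilityMeasure (volume.restrict (cube N 1)) :=
  ⟨by simp [cube, volume_pi_pi]⟩

theorem measurePreserving_exchange_restrict_cube {N : ℕ} (α : Finset (Fin N)) (h : ℝ) :
    MeasurePreserving (exchange α)
      ((volume.restrict (cube N h)).prod (volume.restrict (cube N h)))
      ((volume.restrict (cube N h)).prod (volume.restrict (cube N h))) := by
  rw [volume_restrict_cube]
  exact measurePreserving_exchange α _

theorem ae_mem_cube_prod_cube (N : ℕ) (h : ℝ) :
    ∀ᵐ q ∂((volume.restrict (cube N h)).prod (volume.restrict (cube N h))),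
      q ∈ cube N h ×ˢ cube N h := by
  rw [Measure.prod_restrict]
  exact ae_restrict_mem ((measurableSet_cube N h).prod (measurableSet_cube N h))

end Cube

section CellMidpoint

variable {N p : ℕ}

/-- The midpoint of the cell `a_i + [0,1/p)^N` containing `k`. The sampled coefficients `A_{ij}^α`
are values of the kernels at these midpoints. -/
def cellMidpoint (p : ℕ) (k : Fin N → ℝ) : Fin N → ℝ := fun n ↦ ⌊p * k n⌋ / p + 1 / (2 * p)

theorem measurable_cellMidpoint : Measurable (cellMidpoint p : (Fin N → ℝ) → Fin N → ℝ) := by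
  unfold cellMidpoint
  fun_prop

theorem cellMidpoint_combine (α : Finset (Fin N)) (x k : Fin N → ℝ) :
    cellMidpoint p (combine α x k) = combine α (cellMidpoint p x) (cellMidpoint p k) := by
  funext n
  by_cases hn : n ∈ α <;> simp [cellMidpoint, combine, hn]

theorem map_cellMidpoint_exchange (α : Finset (Fin N)) (q : (Fin N → ℝ) × (Fin N → ℝ)) :
    Prod.map (cellMidpoint p) (cellMidpoint p) (exchange α q) =
      exchange α (Prod.map (cellMidpoint p) (cellMidpoint p) q) := by
  simp only [exchange, Prod.map, cellMidpoint_combine]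

theorem dist_cellMidpoint_le (hp : 0 < p) (k : Fin N → ℝ) :
    dist k (cellMidpoint p k) ≤ 1 / (2 * p) := by
  have hp' : (0 : ℝ) < p := Nat.cast_pos.2 hp
  refine (dist_pi_le_iff (by positivity)).2 fun n ↦ ?_
  have hfract : k n - cellMidpoint p k n = (Int.fract (p * k n) - 1 / 2) / p := by
    rw [cellMidpoint, Int.fract]
    field
  have hhalf : |Int.fract (p * k n) - 1 / 2| ≤ 1 / 2 := by
    rw [abs_le]
    constructor <;> linarith [Int.fract_nonneg (p * k n), Int.fract_lt_one (p * k n)]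
  calc dist (k n) (cellMidpoint p k n) = |Int.fract (p * k n) - 1 / 2| / p := by
        rw [Real.dist_eq, hfract, abs_div, abs_of_pos hp']
    _ ≤ 1 / 2 / p := by gcongr
    _ = 1 / (2 * p) := by rw [div_div]

theorem isBounded_image_cellMidpoint (hp : 0 < p) {s : Set (Fin N → ℝ)}
    (hs : Bornology.IsBounded s) : Bornology.IsBounded (cellMidpoint p '' s) := by
  refine (hs.cthickening (δ := 1 / (2 * p))).subset ?_
  rintro _ ⟨k, hk, rfl⟩
  exact Metric.mem_cthickening_of_dist_le _ k _ _ hk (dist_comm k _ ▸ dist_cellMidpoint_le hp k)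

end CellMidpoint

section Counting

variable {ι κ M : Type*} [Fintype ι] [DecidableEq ι] [Fintype κ]

theorem card_filter_piecewise_eq [DecidableEq κ] {α : Finset ι} {i m : ι → κ}
    (hm : ∀ n ∉ α, i n = m n) :
    #{j : ι → κ | α.piecewise j i = m} = Fintype.card κ ^ #αᶜ := by
  have hfiber : ({j : ι → κ | α.piecewise j i = m} : Finset (ι → κ)) =
      Fintype.piFinset fun n ↦ if n ∈ α then {m n} else univ := by
    ext j
    simp only [mem_filter_univ, Fintype.mem_piFinset, funext_iff]
    refine forall_congr' fun n ↦ ?_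
    by_cases hn : n ∈ α
    · simp [hn]
    · simp [hn, hm n hn]
  rw [hfiber, Fintype.card_piFinset]
  simp_rw [apply_ite card, card_singleton, card_univ]
  rw [prod_ite, prod_const_one, one_mul, prod_const, filter_not, filter_univ_mem,
    compl_eq_univ_sdiff]

theorem sum_eq_card_pow_smul_sum_filter [AddCommMonoid M] (α : Finset ι) (i : ι → κ)
    [DecidablePred fun j : ι → κ ↦ ∀ n ∉ α, i n = j n] {F : (ι → κ) → M}
    (hF : ∀ j j', (∀ n ∈ α, j n = j' n) → F j = F j') :
    ∑ j, F j = Fintype.card κ ^ #αᶜ • ∑ j ∈ {j : ι → κ | ∀ n ∉ α, i n = j n}, F j := by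
  have hmaps : ∀ j ∈ (univ : Finset (ι → κ)),
      α.piecewise j i ∈ ({j | ∀ n ∉ α, i n = j n} : Finset (ι → κ)) := fun j _ ↦ by
    simp +contextual
  classical
  rw [← sum_fiberwise_of_maps_to hmaps, smul_sum]
  refine sum_congr rfl fun m hm ↦ ?_
  rw [← card_filter_piecewise_eq (mem_filter_univ _ |>.1 hm), ← sum_const]
  refine sum_congr rfl fun j hj ↦ hF j m fun n hn ↦ ?_
  rw [← (mem_filter_univ _).1 hj, piecewise_eq_of_mem _ _ _ hn]

end Counting

section Cells

variable {N p : ℕ}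

theorem mem_cubeAt_iff_floor (hp : 0 < p) {b : Fin N → Fin p} {x : Fin N → ℝ} :
    x ∈ cubeAt p b ↔ ∀ n, ⌊(p : ℝ) * x n⌋ = ((b n : ℕ) : ℤ) := by
  have hp' : (0 : ℝ) < p := Nat.cast_pos.2 hp
  simp only [cubeAt, cube, aV, Set.mem_ofPred_eq, Set.mem_univ_pi, Pi.sub_apply, Set.mem_Ico]
  refine forall_congr' fun n ↦ ?_
  rw [Int.floor_eq_iff, Int.cast_natCast, sub_nonneg, div_le_iff₀ hp', sub_lt_iff_lt_add',
    ← add_div, lt_div_iff₀ hp', mul_comm]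

theorem cellMidpoint_of_mem_cubeAt (hp : 0 < p) {b : Fin N → Fin p} {x : Fin N → ℝ}
    (hx : x ∈ cubeAt p b) : cellMidpoint p x = aV p b + epsV N p := by
  funext n
  simp [cellMidpoint, aV, epsV, (mem_cubeAt_iff_floor hp).1 hx n]

theorem iUnion_cubeAt (N : ℕ) (hp : 0 < p) : ⋃ b : Fin N → Fin p, cubeAt p b = cube N 1 := by
  have hp' : (0 : ℝ) < p := Nat.cast_pos.2 hp
  ext x
  simp only [Set.mem_iUnion, mem_cubeAt_iff_floor hp, cube, Set.mem_univ_pi, Set.mem_Ico]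
  constructor
  · rintro ⟨b, hb⟩ n
    obtain ⟨hlower, hupper⟩ := Int.floor_eq_iff.1 (hb n)
    rw [Int.cast_natCast] at hlower hupper
    have hlast : ((b n : ℕ) : ℝ) + 1 ≤ p := mod_cast (b n).2
    exact ⟨nonneg_of_mul_nonneg_right ((Nat.cast_nonneg _).trans hlower) hp',
      lt_of_mul_lt_mul_left (by linarith) hp'.le⟩
  · intro hx
    have hnonneg (n : Fin N) : 0 ≤ p * x n := mul_nonneg hp'.le (hx n).1
    refine ⟨fun n ↦ ⟨⌊p * x n⌋₊, ?_⟩, fun n ↦ (Int.natCast_floor_eq_floor (hnonneg n)).symm⟩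
    exact (Nat.floor_lt (hnonneg n)).2 (mul_lt_of_lt_one_right hp' (hx n).2)

theorem pairwise_disjoint_cubeAt (hp : 0 < p) :
    Pairwise (Function.onFun Disjoint (cubeAt p : (Fin N → Fin p) → Set (Fin N → ℝ))) := by
  intro b c hbc
  refine Set.disjoint_left.2 fun x hb hc ↦ hbc (funext fun n ↦ Fin.ext ?_)
  rw [mem_cubeAt_iff_floor hp] at hb hc
  exact_mod_cast (hb n).symm.trans (hc n)

theorem measurableSet_cubeAt (b : Fin N → Fin p) : MeasurableSet (cubeAt p b) :=
  (measurableSet_cube N (1 / p)).preimage (measurable_id.sub_const _)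

variable {E : Type*} [NormedAddCommGroup E] [NormedSpace ℝ E]

theorem setIntegral_cubeAt (b : Fin N → Fin p) (f : (Fin N → ℝ) → E) :
    ∫ x in cubeAt p b, f x = ∫ y in cube N (1 / p), f (aV p b + y) := by
  have hpreimage : (aV p b + ·) ⁻¹' cubeAt p b = cube N (1 / p) := by
    ext y
    simp [cubeAt]
  rw [← hpreimage]
  exact ((measurePreserving_add_left volume (aV p b)).setIntegral_preimage_emb
    (measurableEmbedding_addLeft _) f _).symm

theorem setIntegral_cube_eq_sum_cubeAt (hp : 0 < p) {f : (Fin N → ℝ) → E}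
    (hf : IntegrableOn f (cube N 1)) :
    ∫ x in cube N 1, f x = ∑ b : Fin N → Fin p, ∫ x in cubeAt p b, f x := by
  rw [← iUnion_cubeAt N hp] at hf ⊢
  exact integral_iUnion_fintype measurableSet_cubeAt (pairwise_disjoint_cubeAt hp)
    fun b ↦ hf.mono_set (Set.subset_iUnion _ b)

end Cells

section Discretization

variable {N p : ℕ} (A : Finset (Fin N) → (Fin N → ℝ) → (Fin N → ℝ) → ℝ)

/-- The kernel `(k, x) ↦ A_α(k, x_α)` of the multi-kernel operator, as a complex function of two
points of the cube. Composing both arguments with `cellMidpoint p` gives the kernel of the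
discretization. -/
def reducedKernel (α : Finset (Fin N)) (q : (Fin N → ℝ) × (Fin N → ℝ)) : ℂ :=
  A α q.1 (proj α q.2)

variable {A}

theorem aV_add_combine_sub {α : Finset (Fin N)} {i j : Fin N → Fin p} (hij : ∀ n ∉ α, i n = j n)
    (y k : Fin N → ℝ) : aV p j + combine α y (k - aV p i) = combine α (aV p j + y) k := by
  funext n
  by_cases hn : n ∈ α
  · simp [combine, hn]
  · simp [combine, hn, aV, hij n hn]

theorem EfunP_coefA_of_mem_cubeAt (hp : 0 < p) (α : Finset (Fin N)) {i : Fin N → Fin p}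
    (j : Fin N → Fin p) (u : (Fin N → ℝ) → ℂ) {k : Fin N → ℝ} (hk : k ∈ cubeAt p i) :
    ((p : ℂ) ^ #α)⁻¹ * EfunP p i j α (coefA A p α i j) u k =
      if ∀ n ∉ α, i n = j n then (p : ℂ) ^ (N - #α) *
        (reducedKernel A α (aV p i + epsV N p, aV p j + epsV N p) *
          ∫ x in cubeAt p j, u (combine α x k))
      else 0 := by
  have hp' : (p : ℂ) ≠ 0 := Nat.cast_ne_zero.2 hp.ne'
  rw [EfunP, Set.indicator_of_mem hk, coefA]
  split_ifs with hij
  · simp_rw [aV_add_combine_sub hij]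
    rw [setIntegral_cubeAt, reducedKernel]
    field
  · simp

/-- Each term of the full sum depends only on `j_α`, so it equals one of the terms with `j_ᾱ = i_ᾱ`
kept by `coefA`; the normalization `p^(N - |α|)` in `EfunP` counts these repetitions. -/
theorem sum_EfunP_coefA_of_mem_cubeAt (hp : 0 < p) (α : Finset (Fin N)) {i : Fin N → Fin p}
    (u : (Fin N → ℝ) → ℂ) {k : Fin N → ℝ} (hk : k ∈ cubeAt p i) :
    ∑ j, ((p : ℂ) ^ #α)⁻¹ * EfunP p i j α (coefA A p α i j) u k =
      ∑ j, reducedKernel A α (aV p i + epsV N p, aV p j + epsV N p) *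
        ∫ x in cubeAt p j, u (combine α x k) := by
  simp_rw [EfunP_coefA_of_mem_cubeAt hp α _ u hk]
  rw [← sum_filter, ← mul_sum, sum_eq_card_pow_smul_sum_filter α i, nsmul_eq_mul,
    card_compl, Fintype.card_fin, Fintype.card_fin, Nat.cast_pow]
  intro j j' hjj'
  have haV (y : Fin N → ℝ) : ∀ n ∈ α, (aV p j + y) n = (aV p j' + y) n := fun n hn ↦ by
    simp [aV, hjj' n hn]
  simp_rw [reducedKernel, setIntegral_cubeAt, proj_congr α (haV _), combine_congr_left α (haV _)]

theorem AdFun_of_mem_cubeAt (hp : 0 < p) (u : (Fin N → ℝ) → ℂ) {i : Fin N → Fin p}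
    {k : Fin N → ℝ} (hk : k ∈ cubeAt p i) :
    AdFun A p u k = ∑ α, ∑ j, reducedKernel A α (aV p i + epsV N p, aV p j + epsV N p) *
      ∫ x in cubeAt p j, u (combine α x k) := by
  refine sum_congr rfl fun α _ ↦ ?_
  rw [← sum_EfunP_coefA_of_mem_cubeAt hp α u hk]
  refine sum_eq_single_of_mem i (mem_univ i) fun i' _ hne ↦ sum_eq_zero fun j _ ↦ ?_
  have hk' : k ∉ cubeAt p i' := Set.disjoint_right.1 (pairwise_disjoint_cubeAt hp hne) hk
  rw [EfunP, Set.indicator_of_notMem hk', mul_zero]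

theorem AdFun_eq_sum_setIntegral (hp : 0 < p) {u : (Fin N → ℝ) → ℂ} {k : Fin N → ℝ}
    (hk : k ∈ cube N 1)
    (hu : ∀ α, IntegrableOn (fun x ↦
      reducedKernel A α (cellMidpoint p k, cellMidpoint p x) * u (combine α x k)) (cube N 1)) :
    AdFun A p u k = ∑ α, ∫ x in cube N 1,
      reducedKernel A α (cellMidpoint p k, cellMidpoint p x) * u (combine α x k) := by
  obtain ⟨i, hi⟩ := Set.mem_iUnion.1 ((iUnion_cubeAt N hp).symm ▸ hk)
  rw [AdFun_of_mem_cubeAt hp u hi]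
  refine sum_congr rfl fun α _ ↦ ?_
  rw [setIntegral_cube_eq_sum_cubeAt hp (hu α)]
  refine sum_congr rfl fun j _ ↦ ?_
  rw [← integral_const_mul]
  refine setIntegral_congr_fun (measurableSet_cubeAt j) fun x hx ↦ ?_
  simp only [cellMidpoint_of_mem_cubeAt hp hi, cellMidpoint_of_mem_cubeAt hp hx]

end Discretization

section KernelOperators

variable {N p : ℕ} {A : Finset (Fin N) → (Fin N → ℝ) → (Fin N → ℝ) → ℝ}

theorem memLp_top_comp_of_isBounded {X Y E : Type*} [MeasurableSpace X] {μ : Measure X}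
    [PseudoMetricSpace Y] [ProperSpace Y] [MeasurableSpace Y] [OpensMeasurableSpace Y]
    [SecondCountableTopology Y] [NormedAddCommGroup E] {f : Y → E} (hf : Continuous f)
    {φ : X → Y} (hφ : AEMeasurable φ μ) {s : Set Y} (hs : Bornology.IsBounded s)
    (hφs : ∀ᵐ x ∂μ, φ x ∈ s) : MemLp (f ∘ φ) ∞ μ := by
  obtain ⟨C, hC⟩ := hs.isCompact_closure.exists_bound_of_continuousOn hf.continuousOn
  refine memLp_top_of_bound (hf.comp_aestronglyMeasurable hφ.aestronglyMeasurable) C ?_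
  filter_upwards [hφs] with x hx using hC _ (subset_closure hx)

theorem reducedKernel_exchange
    (hsym : ∀ α (k x : Fin N → ℝ), A α k (proj α x) = A α (combine α x k) (proj α k))
    (α : Finset (Fin N)) (q : (Fin N → ℝ) × (Fin N → ℝ)) :
    reducedKernel A α (exchange α q) = star (reducedKernel A α q) := by
  simp only [reducedKernel, exchange, proj_combine, ← hsym, Complex.star_def, Complex.conj_ofReal]

theorem continuous_reducedKernel {α : Finset (Fin N)}
    (hA : Continuous fun q : (Fin N → ℝ) × (Fin N → ℝ) ↦ A α q.1 q.2) :
    Continuous (reducedKernel A α) :=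
  Complex.continuous_ofReal.comp
    (hA.comp (continuous_id.prodMap (lipschitzWith_proj α).continuous))

theorem lipschitzWith_reducedKernel {α : Finset (Fin N)} {L : ℝ≥0}
    (hL : LipschitzWith L fun q : (Fin N → ℝ) × (Fin N → ℝ) ↦ A α q.1 q.2) :
    LipschitzWith L (reducedKernel A α) := by
  have hproj : LipschitzWith 1 fun q : (Fin N → ℝ) × (Fin N → ℝ) ↦ (q.1, proj α q.2) := by
    simpa using LipschitzWith.prod_fst.prodMk ((lipschitzWith_proj α).comp LipschitzWith.prod_snd)
  have hcomp := (Complex.isometry_ofReal.lipschitz.comp hL).comp hproj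
  rwa [one_mul, mul_one] at hcomp

theorem norm_reducedKernel_sub_le (hp : 0 < p) {α : Finset (Fin N)} {L : ℝ≥0}
    (hL : LipschitzWith L fun q : (Fin N → ℝ) × (Fin N → ℝ) ↦ A α q.1 q.2)
    (q : (Fin N → ℝ) × (Fin N → ℝ)) :
    ‖reducedKernel A α q -
      reducedKernel A α (Prod.map (cellMidpoint p) (cellMidpoint p) q)‖ ≤ 1 / (2 * p) * L := by
  rw [← dist_eq_norm, mul_comm]
  refine (lipschitzWith_reducedKernel hL).dist_le_mul_of_le ?_
  exact max_le (dist_cellMidpoint_le hp _) (dist_cellMidpoint_le hp _)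

theorem isKernelOperator_of_ae_eq_AcFun
    (hA : ∀ α, Continuous fun q : (Fin N → ℝ) × (Fin N → ℝ) ↦ A α q.1 q.2)
    {T : Lp ℂ 2 (volume.restrict (cube N 1)) →L[ℂ] Lp ℂ 2 (volume.restrict (cube N 1))}
    (hT : ∀ u, T u =ᵐ[volume.restrict (cube N 1)] AcFun A u) :
    IsKernelOperator (fun α q ↦ (exchange α q).1) (reducedKernel A) T where
  measurePreserving α :=
    measurePreserving_fst.comp (measurePreserving_exchange_restrict_cube α 1)
  memLp_top α := memLp_top_comp_of_isBounded (continuous_reducedKernel (hA α)) aemeasurable_id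
    ((isBounded_cube N 1).prod (isBounded_cube N 1)) (ae_mem_cube_prod_cube N 1)
  coeFn_apply := hT

theorem isKernelOperator_of_ae_eq_AdFun (hp : 0 < p)
    (hA : ∀ α, Continuous fun q : (Fin N → ℝ) × (Fin N → ℝ) ↦ A α q.1 q.2)
    {T : Lp ℂ 2 (volume.restrict (cube N 1)) →L[ℂ] Lp ℂ 2 (volume.restrict (cube N 1))}
    (hT : ∀ u, T u =ᵐ[volume.restrict (cube N 1)] AdFun A p u) :
    IsKernelOperator (fun α q ↦ (exchange α q).1)
      (fun α ↦ reducedKernel A α ∘ Prod.map (cellMidpoint p) (cellMidpoint p)) T := by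
  have hτ (α : Finset (Fin N)) :=
    (measurePreserving_fst (μ := volume.restrict (cube N 1))).comp
      (measurePreserving_exchange_restrict_cube α 1)
  have hmidpoint : Measurable (Prod.map (cellMidpoint p) (cellMidpoint p) :
      (Fin N → ℝ) × (Fin N → ℝ) → (Fin N → ℝ) × (Fin N → ℝ)) :=
    measurable_cellMidpoint.prodMap measurable_cellMidpoint
  have hbounded := isBounded_image_cellMidpoint hp (isBounded_cube N 1)
  have hK (α : Finset (Fin N)) :=
    memLp_top_comp_of_isBounded (continuous_reducedKernel (hA α)) hmidpoint.aemeasurable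
      (hbounded.prod hbounded) <| (ae_mem_cube_prod_cube N 1).mono fun q hq ↦
        ⟨Set.mem_image_of_mem _ hq.1, Set.mem_image_of_mem _ hq.2⟩
  refine ⟨hτ, hK, fun u ↦ ?_⟩
  filter_upwards [hT u, ae_forall_integrable_mul_comp hτ hK u,
    ae_restrict_mem (measurableSet_cube N 1)] with k hTk hint hk
  rw [hTk]
  exact AdFun_eq_sum_setIntegral hp hk hint

end KernelOperators

theorem gradNorm_nonneg {N : ℕ} (A : Finset (Fin N) → (Fin N → ℝ) → (Fin N → ℝ) → ℝ)
    (α : Finset (Fin N)) : 0 ≤ gradNorm A α :=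
  Real.iSup_nonneg fun _ ↦ norm_nonneg _

theorem lipschitzWith_gradNorm {N : ℕ} {A : Finset (Fin N) → (Fin N → ℝ) → (Fin N → ℝ) → ℝ}
    {α : Finset (Fin N)}
    (hdiff : Differentiable ℝ fun q : (Fin N → ℝ) × (Fin N → ℝ) ↦ A α q.1 q.2)
    (hbdd : ∃ C : ℝ, ∀ q : (Fin N → ℝ) × (Fin N → ℝ),
      ‖fderiv ℝ (fun q : (Fin N → ℝ) × (Fin N → ℝ) ↦ A α q.1 q.2) q‖ ≤ C) :
    LipschitzWith (gradNorm A α).toNNReal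
      fun q : (Fin N → ℝ) × (Fin N → ℝ) ↦ A α q.1 q.2 := by
  obtain ⟨C, hC⟩ := hbdd
  refine lipschitzWith_of_nnnorm_fderiv_le hdiff fun q ↦ ?_
  rw [← NNReal.coe_le_coe, coe_nnnorm, Real.coe_toNNReal _ (gradNorm_nonneg A α)]
  exact le_ciSup (f := fun q ↦ ‖fderiv ℝ (fun q : (Fin N → ℝ) × (Fin N → ℝ) ↦ A α q.1 q.2) q‖)
    ⟨C, Set.forall_mem_range.2 hC⟩ q

theorem selfadjoint_discretization_spectral_estimates_general {N p : ℕ} (hp : 0 < p)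
    {A : Finset (Fin N) → (Fin N → ℝ) → (Fin N → ℝ) → ℝ} {L : Finset (Fin N) → ℝ≥0}
    (hL : ∀ α, LipschitzWith (L α) fun q : (Fin N → ℝ) × (Fin N → ℝ) ↦ A α q.1 q.2)
    (hsym : ∀ α (k x : Fin N → ℝ), A α k (proj α x) = A α (combine α x k) (proj α k))
    {Ac Ad : Lp ℂ 2 (volume.restrict (cube N 1)) →L[ℂ] Lp ℂ 2 (volume.restrict (cube N 1))}
    (hAc : ∀ u, Ac u =ᵐ[volume.restrict (cube N 1)] AcFun A u)
    (hAd : ∀ u, Ad u =ᵐ[volume.restrict (cube N 1)] AdFun A p u) :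
    IsSelfAdjoint Ad ∧
    spectrum ℂ Ac ⊆ Metric.cthickening (1 / (2 * p) * ∑ α, L α) (spectrum ℂ Ad) ∧
    spectrum ℂ Ad ⊆ Metric.cthickening (1 / (2 * p) * ∑ α, L α) (spectrum ℂ Ac) := by
  have hAc_kernel := isKernelOperator_of_ae_eq_AcFun (fun α ↦ (hL α).continuous) hAc
  have hAd_kernel := isKernelOperator_of_ae_eq_AdFun hp (fun α ↦ (hL α).continuous) hAd
  have hAc_self : IsSelfAdjoint Ac := hAc_kernel.isSelfAdjoint
    (measurePreserving_exchange_restrict_cube · 1) exchange_involutive (reducedKernel_exchange hsym)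
  have hAd_self : IsSelfAdjoint Ad := hAd_kernel.isSelfAdjoint
    (measurePreserving_exchange_restrict_cube · 1) exchange_involutive fun α q ↦ by
      rw [Function.comp_apply, map_cellMidpoint_exchange, reducedKernel_exchange hsym,
        Function.comp_apply]
  have hnorm : ‖Ac - Ad‖ ≤ 1 / (2 * p) * ∑ α, L α := by
    push_cast
    rw [mul_sum]
    exact (hAc_kernel.sub hAd_kernel).norm_le fun α ↦
      .of_forall (norm_reducedKernel_sub_le hp (hL α))
  have := hAc_self.isStarNormal
  have := hAd_self.isStarNormal
  exact ⟨hAd_self,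
    (spectrum_subset_cthickening_of_isStarNormal Ac Ad).trans (Metric.cthickening_mono hnorm _),
    (spectrum_subset_cthickening_of_isStarNormal Ad Ac).trans
      (Metric.cthickening_mono (norm_sub_rev Ac Ad ▸ hnorm) _)⟩

/-- **Corollary 2 of the paper, spectral part.** Under the
assumptions of the discretization theorem, if moreover `𝒜_c` is self-adjoint,
i.e. `A_α(k, x_α) = A_α(k_ᾱ + x_α, k_α)`, then the discretization `𝒜 = Ad p`
is self-adjoint, and with `δ = (N/(2p)) ∑_α ‖∇A_α‖_{L^∞}` each of the spectra
`sp(𝒜_c)`, `sp(𝒜)` is contained in the closed `δ`-neighbourhood of the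
other. -/
theorem selfadjoint_discretization_spectral_estimates (N : ℕ) (hN : 1 ≤ N)
    (A : Finset (Fin N) → (Fin N → ℝ) → (Fin N → ℝ) → ℝ)
    (hdiff : ∀ α, Differentiable ℝ
      (fun q : (Fin N → ℝ) × (Fin N → ℝ) => A α q.1 q.2))
    (hbdd : ∀ α, ∃ C : ℝ, ∀ q : (Fin N → ℝ) × (Fin N → ℝ),
      ‖fderiv ℝ (fun q : (Fin N → ℝ) × (Fin N → ℝ) => A α q.1 q.2) q‖ ≤ C)
    (hsym : ∀ α (k x : Fin N → ℝ),
      A α k (proj α x) = A α (combine α x k) (proj α k))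
    (Ac : Lp ℂ 2 (volume.restrict (cube N 1)) →L[ℂ]
      Lp ℂ 2 (volume.restrict (cube N 1)))
    (hAc : ∀ u : Lp ℂ 2 (volume.restrict (cube N 1)),
      (Ac u : (Fin N → ℝ) → ℂ) =ᵐ[volume.restrict (cube N 1)]
        AcFun A (u : (Fin N → ℝ) → ℂ))
    (Ad : ℕ → (Lp ℂ 2 (volume.restrict (cube N 1)) →L[ℂ]
      Lp ℂ 2 (volume.restrict (cube N 1))))
    (hAd : ∀ p : ℕ, 1 ≤ p → ∀ u : Lp ℂ 2 (volume.restrict (cube N 1)),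
      (Ad p u : (Fin N → ℝ) → ℂ) =ᵐ[volume.restrict (cube N 1)]
        AdFun A p (u : (Fin N → ℝ) → ℂ))
    (p : ℕ) (hp : 1 ≤ p) :
    IsSelfAdjoint (Ad p) ∧
    spectrum ℂ Ac ⊆ Metric.cthickening
      ((N / (2 * p)) * ∑ α : Finset (Fin N), gradNorm A α)
      (spectrum ℂ (Ad p)) ∧
    spectrum ℂ (Ad p) ⊆ Metric.cthickening
      ((N / (2 * p)) * ∑ α : Finset (Fin N), gradNorm A α)
      (spectrum ℂ Ac) := by
  have hradius : 1 / (2 * p) * ((∑ α, (gradNorm A α).toNNReal : ℝ≥0) : ℝ) ≤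
      N / (2 * p) * ∑ α, gradNorm A α := by
    simp only [NNReal.coe_sum, Real.coe_toNNReal _ (gradNorm_nonneg A _)]
    gcongr
    · exact sum_nonneg fun α _ ↦ gradNorm_nonneg A α
    · exact_mod_cast hN
  obtain ⟨hself, hAc_subset, hAd_subset⟩ := selfadjoint_discretization_spectral_estimates_general hp
    (fun α ↦ lipschitzWith_gradNorm (hdiff α) (hbdd α)) hsym hAc (hAd p hp)
  exact ⟨hself, hAc_subset.trans (Metric.cthickening_mono hradius _),
    hAd_subset.trans (Metric.cthickening_mono hradius _)⟩

end Stmt15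
end
end

section
/- Under the setting of the midpoint discretization of the multi-kernel operator with self-adjoint kernels (A_α(k, x_α) = A_α(k_ᾱ + x_α, k_α)), let δ = (N/(2p)) ∑_{α⊆{1,...,N}} ‖∇A_α‖_{L^∞} and suppose the discretization 𝒜 is invertible with δ·‖𝒜⁻¹‖_{L²→L²} < 1. Then the multi-kernel operator 𝒜_c is invertible and ‖𝒜_c⁻¹ − 𝒜⁻¹‖_{L²→L²} ≤ δ‖𝒜⁻¹‖²_{L²→L²} / (1 − δ‖𝒜⁻¹‖_{L²→L²}). -/
/-!
STATEMENT 16: If moreover the discretization 𝒜 = Ad p is invertible with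
δ‖𝒜⁻¹‖ < 1 (δ = (N/(2p)) ∑_α ‖∇A_α‖_{L^∞}), then 𝒜_c is invertible and
‖𝒜_c⁻¹ − 𝒜⁻¹‖ ≤ δ‖𝒜⁻¹‖² / (1 − δ‖𝒜⁻¹‖).
-/

open MeasureTheory Finset

noncomputable section

namespace Stmt16

/-- The half-open cube `[0,h)^N`. -/
def cube (N : ℕ) (h : ℝ) : Set (Fin N → ℝ) := Set.univ.pi fun _ => Set.Ico 0 h

/-- `x_α`: the vector whose `n`-th coordinate is `x n` for `n ∈ α` and `0` for
`n ∉ α`. -/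
def proj {N : ℕ} (α : Finset (Fin N)) (x : Fin N → ℝ) : Fin N → ℝ :=
  fun n => if n ∈ α then x n else 0

/-- `k_ᾱ + x_α`: the point whose coordinates in `α` come from `x` and whose
coordinates outside `α` come from `k`. -/
def combine {N : ℕ} (α : Finset (Fin N)) (x k : Fin N → ℝ) : Fin N → ℝ :=
  fun n => if n ∈ α then x n else k n

/-- The pointwise formula of the multi-kernel operator
`𝒜_c u(k) = ∑_α ∫_{[0,1)^{|α|}} A_α(k, x_α) u(k_ᾱ + x_α) dx_α`.  The partial
integral over the coordinates in `α` is realized as an integral over the whole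
unit cube: the integrand depends only on the coordinates of `x` in `α`, and the
remaining coordinates range over `[0,1)`, contributing a factor `1` each. -/
def AcFun {N : ℕ} (A : Finset (Fin N) → (Fin N → ℝ) → (Fin N → ℝ) → ℝ)
    (u : (Fin N → ℝ) → ℂ) : (Fin N → ℝ) → ℂ :=
  fun k => ∑ α : Finset (Fin N),
    ∫ x in cube N 1, (A α k (proj α x) : ℂ) * u (combine α x k)

/-- `‖∇A_α‖_{L^∞}`: the supremum norm of the (total) derivative of the kernel
`A_α`, as a function of the joint variable `(k, x)`. -/
def gradNorm {N : ℕ} (A : Finset (Fin N) → (Fin N → ℝ) → (Fin N → ℝ) → ℝ)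
    (α : Finset (Fin N)) : ℝ :=
  ⨆ q : (Fin N → ℝ) × (Fin N → ℝ),
    ‖fderiv ℝ (fun q : (Fin N → ℝ) × (Fin N → ℝ) => A α q.1 q.2) q‖

/-- The vertex `a_i = 𝐛/p` of a subcube of the uniform partition of `[0,1)^N`
into `p^N` subcubes; the subcubes are indexed by their digit vectors
`𝐛 ∈ {0,...,p−1}^N` (the base-`p` digits of `i − 1`). -/
def aV {N : ℕ} (p : ℕ) (b : Fin N → Fin p) : Fin N → ℝ := fun n => (b n : ℝ) / p

/-- The midpoint shift `ε = (1/(2p),...,1/(2p))`. -/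
def epsV (N p : ℕ) : Fin N → ℝ := fun _ => 1 / (2 * p)

/-- The subcube `Ω_i = a_i + [0,1/p)^N`. -/
def cubeAt {N : ℕ} (p : ℕ) (b : Fin N → Fin p) : Set (Fin N → ℝ) :=
  {x | x - aV p b ∈ cube N (1 / p)}

/-- The piecewise-constant coefficients
`A_{ij}^α = A_α(a_i + ε, (a_j + ε)_α)` if `(a_i)_ᾱ = (a_j)_ᾱ`, else `0`. -/
def coefA {N : ℕ} (A : Finset (Fin N) → (Fin N → ℝ) → (Fin N → ℝ) → ℝ)
    (p : ℕ) (α : Finset (Fin N)) (i j : Fin N → Fin p) : ℂ :=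
  if ∀ n ∉ α, i n = j n then
    (A α (aV p i + epsV N p) (proj α (aV p j + epsV N p)) : ℂ)
  else 0

/-- The pointwise formula of the scalar elementary operator `𝓔_{ij}^α[c]`
(with `h = 1/p`, `M = 1`):
`(𝓔_{ij}^α[c]u)(x + a_i) = p^{|α|} c ∫_{[0,1/p)^{|α|}} u(x' + a_j) dx'_α`, and
`0` outside `Ω_i`.  The partial integral over the coordinates in `α` is realized
as an integral over the whole cube `[0,1/p)^N` (the integrand does not depend on
the coordinates of `y` outside `α`), compensated by the additional
normalization `p^{N−|α|}`. -/
def EfunP {N : ℕ} (p : ℕ) (i j : Fin N → Fin p) (α : Finset (Fin N)) (c : ℂ)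
    (u : (Fin N → ℝ) → ℂ) : (Fin N → ℝ) → ℂ :=
  (cubeAt p i).indicator fun x =>
    ((p : ℂ) ^ α.card * (p : ℂ) ^ (N - α.card)) * c *
      ∫ y in cube N (1 / p), u (aV p j + combine α y (x - aV p i))

/-- The pointwise formula of the midpoint discretization
`𝒜 = ∑_α ∑_{i,j=1}^{p^N} p^{−|α|} 𝓔_{ij}^α[A_{ij}^α]`. -/
def AdFun {N : ℕ} (A : Finset (Fin N) → (Fin N → ℝ) → (Fin N → ℝ) → ℝ)
    (p : ℕ) (u : (Fin N → ℝ) → ℂ) : (Fin N → ℝ) → ℂ :=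
  fun x => ∑ α : Finset (Fin N), ∑ i : Fin N → Fin p, ∑ j : Fin N → Fin p,
    ((p : ℂ) ^ α.card)⁻¹ * EfunP p i j α (coefA A p α i j) u x

/-!
On the unit cube the discretization is again a multi-kernel operator: up to integrating over the
redundant coordinates outside `α`, its kernels are the given ones evaluated at the midpoints of the
cells containing `k` and `x`. The two operators therefore differ by a multi-kernel operator whose
`α`-kernel is bounded by the Lipschitz constant of `A_α` times `1 / (2p)`. Since
`(k, x) ↦ k_ᾱ + x_α` preserves the uniform measure, Jensen's inequality shows that a multi-kernel
operator with kernels bounded by `c α` has norm at most `∑ α, c α`. The inverse is then controlled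
by the Neumann series and the resolvent identity `a⁻¹ - b⁻¹ = a⁻¹ (b - a) b⁻¹`.
-/

open scoped NNReal ENNReal

section Ring

variable {R : Type*} [NormedRing R] {a b c : R} {δ : ℝ}

lemma isUnit_of_norm_sub_le_of_mul_norm_lt_one [HasSummableGeomSeries R] (hab : ‖a - b‖ ≤ δ)
    (hbc : b * c = 1) (hcb : c * b = 1) (hδ : δ * ‖c‖ < 1) : IsUnit a := by
  have hnorm : ‖c * (b - a)‖ < 1 := calc
    ‖c * (b - a)‖ ≤ ‖c‖ * ‖b - a‖ := norm_mul_le _ _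
    _ = ‖a - b‖ * ‖c‖ := by rw [norm_sub_rev, mul_comm]
    _ ≤ δ * ‖c‖ := by gcongr
    _ < 1 := hδ
  have ha : a = b * (1 - c * (b - a)) := by
    rw [mul_sub, mul_one, ← mul_assoc, hbc, one_mul, sub_sub_cancel]
  rw [ha]
  exact IsUnit.mul ⟨⟨b, c, hbc, hcb⟩, rfl⟩ (isUnit_one_sub_of_norm_lt_one hnorm)

lemma norm_leftInverse_sub_le {d : R} (hab : ‖a - b‖ ≤ δ) (hbc : b * c = 1) (hda : d * a = 1)
    (hδ : δ * ‖c‖ < 1) : ‖d - c‖ ≤ δ * ‖c‖ ^ 2 / (1 - δ * ‖c‖) := by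
  have resolvent : d - c = d * (b - a) * c := by
    rw [mul_sub, sub_mul, mul_assoc, hbc, hda, mul_one, one_mul]
  have hself : ‖d - c‖ ≤ (‖c‖ + ‖d - c‖) * δ * ‖c‖ := calc
    ‖d - c‖ ≤ ‖d‖ * ‖b - a‖ * ‖c‖ := by rw [resolvent]; exact norm_mul₃_le
    _ ≤ (‖c‖ + ‖d - c‖) * δ * ‖c‖ := by
      rw [norm_sub_rev b a]
      gcongr
      exact norm_le_norm_add_norm_sub' d c
  rw [le_div_iff₀ (sub_pos.2 hδ)]
  linear_combination hself

end Ring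

section Averaging

lemma measurePreserving_finset_piecewise {ι : Type*} [Fintype ι] [DecidableEq ι] {X : ι → Type*}
    [∀ i, MeasurableSpace (X i)] (μ : ∀ i, Measure (X i)) [∀ i, IsProbabilityMeasure (μ i)]
    (s : Finset ι) :
    MeasurePreserving (fun q : (∀ i, X i) × (∀ i, X i) => s.piecewise q.2 q.1)
      ((Measure.pi μ).prod (Measure.pi μ)) (Measure.pi μ) := by
  have hmeas : Measurable fun q : (∀ i, X i) × (∀ i, X i) => s.piecewise q.2 q.1 :=
    measurable_pi_lambda _ fun i => by
      by_cases hi : i ∈ s <;> simp only [hi, piecewise, if_true, if_false] <;> fun_prop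
  refine ⟨hmeas, (Measure.pi_eq fun t ht => ?_).symm⟩
  have hpreimage : (fun q : (∀ i, X i) × (∀ i, X i) => s.piecewise q.2 q.1) ⁻¹' Set.univ.pi t =
      (Set.univ.pi fun i => if i ∈ s then Set.univ else t i) ×ˢ
        (Set.univ.pi fun i => if i ∈ s then t i else Set.univ) := by
    ext ⟨k, x⟩
    simp only [Set.mem_preimage, Set.mem_univ_pi, Set.mem_prod, piecewise, ← forall_and]
    refine forall_congr' fun i => ?_
    by_cases hi : i ∈ s <;> simp [hi]
  rw [Measure.map_apply hmeas (.univ_pi ht), hpreimage, Measure.prod_prod, Measure.pi_pi,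
    Measure.pi_pi, ← prod_mul_distrib]
  refine prod_congr rfl fun i _ => ?_
  by_cases hi : i ∈ s <;> simp [hi]

variable {X Y E : Type*} [MeasurableSpace X] [MeasurableSpace Y] [NormedAddCommGroup E]

lemma lintegral_enorm_rpow_le_lintegral_rpow_enorm {ν : Measure Y} [IsProbabilityMeasure ν]
    {f : Y → E} (hf : AEStronglyMeasurable f ν) {r : ℝ} (hr : 1 ≤ r) :
    (∫⁻ y, ‖f y‖ₑ ∂ν) ^ r ≤ ∫⁻ y, ‖f y‖ₑ ^ r ∂ν := by
  have hr₀ : 0 < r := zero_lt_one.trans_le hr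
  have hmono := eLpNorm'_le_eLpNorm'_of_exponent_le zero_lt_one hr ν hf
  rw [eLpNorm'_eq_lintegral_enorm, eLpNorm'_eq_lintegral_enorm] at hmono
  simpa [ENNReal.le_rpow_inv_iff hr₀] using hmono

lemma eLpNorm_lintegral_enorm_le {μ : Measure X} [SFinite μ] {ν : Measure Y}
    [IsProbabilityMeasure ν] {f : X × Y → E} (hf : AEStronglyMeasurable f (μ.prod ν))
    {q : ℝ≥0∞} (hq : 1 ≤ q) (hq_top : q ≠ ∞) :
    eLpNorm (fun x => ∫⁻ y, ‖f (x, y)‖ₑ ∂ν) q μ ≤ eLpNorm f q (μ.prod ν) := by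
  have hq₀ : q ≠ 0 := (zero_lt_one.trans_le hq).ne'
  rw [eLpNorm_eq_lintegral_rpow_enorm_toReal hq₀ hq_top,
    eLpNorm_eq_lintegral_rpow_enorm_toReal hq₀ hq_top,
    lintegral_prod _ (hf.enorm.pow_const _)]
  gcongr ?_ ^ _
  refine lintegral_mono_ae ?_
  filter_upwards [hf.prodMk_left] with x hx
  exact lintegral_enorm_rpow_le_lintegral_rpow_enorm hx (ENNReal.toReal_mono hq_top hq)

end Averaging

section UnitCube

variable {N : ℕ} {E : Type*} [NormedAddCommGroup E]

lemma measurableSet_cube (N : ℕ) (h : ℝ) : MeasurableSet (cube N h) :=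
  .univ_pi fun _ => measurableSet_Ico

/-- The uniform probability measure on the unit cube, over which the operators act. -/
abbrev cubeMeasure (N : ℕ) : Measure (Fin N → ℝ) := volume.restrict (cube N 1)

instance isProbabilityMeasure_restrict_Ico_zero_one :
    IsProbabilityMeasure (volume.restrict (Set.Ico (0 : ℝ) 1)) :=
  ⟨by simp⟩

lemma cubeMeasure_eq_pi :
    cubeMeasure N = Measure.pi fun _ => volume.restrict (Set.Ico (0 : ℝ) 1) := by
  rw [cubeMeasure, cube, volume_pi, Measure.restrict_pi_pi]

instance isProbabilityMeasure_cubeMeasure : IsProbabilityMeasure (cubeMeasure N) := by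
  rw [cubeMeasure_eq_pi]
  infer_instance

lemma measurePreserving_combine (α : Finset (Fin N)) :
    MeasurePreserving (fun q : (Fin N → ℝ) × (Fin N → ℝ) => combine α q.2 q.1)
      ((cubeMeasure N).prod (cubeMeasure N)) (cubeMeasure N) := by
  rw [cubeMeasure_eq_pi]
  exact measurePreserving_finset_piecewise _ α

lemma ae_forall_integrable_combine {u : (Fin N → ℝ) → E} (hu : Integrable u (cubeMeasure N)) :
    ∀ᵐ k ∂cubeMeasure N, ∀ α, Integrable (fun x => u (combine α x k)) (cubeMeasure N) :=
  ae_all_iff.2 fun α =>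
    ((measurePreserving_combine α).integrable_comp_of_integrable hu).prod_right_ae

lemma eLpNorm_lintegral_combine_le (α : Finset (Fin N)) {u : (Fin N → ℝ) → E}
    (hu : AEStronglyMeasurable u (cubeMeasure N)) {q : ℝ≥0∞} (hq : 1 ≤ q) (hq_top : q ≠ ∞) :
    eLpNorm (fun k => ∫⁻ x, ‖u (combine α x k)‖ₑ ∂cubeMeasure N) q (cubeMeasure N) ≤
      eLpNorm u q (cubeMeasure N) := by
  have hcombine := measurePreserving_combine α
  rw [← eLpNorm_comp_measurePreserving hu hcombine]
  exact eLpNorm_lintegral_enorm_le (hu.comp_measurePreserving hcombine) hq hq_top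

end UnitCube

section BoundedKernel

variable {N : ℕ} {B : Finset (Fin N) → (Fin N → ℝ) → (Fin N → ℝ) → ℝ} {c : Finset (Fin N) → ℝ≥0}

lemma enorm_AcFun_le (hB : ∀ α k x, ‖B α k (proj α x)‖₊ ≤ c α) (u : (Fin N → ℝ) → ℂ)
    (k : Fin N → ℝ) :
    ‖AcFun B u k‖ₑ ≤ ∑ α, c α • ∫⁻ x, ‖u (combine α x k)‖ₑ ∂cubeMeasure N := by
  refine (enorm_sum_le _ _).trans (sum_le_sum fun α _ => ?_)
  calc ‖∫ x in cube N 1, (B α k (proj α x) : ℂ) * u (combine α x k)‖ₑ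
      ≤ ∫⁻ x in cube N 1, ‖(B α k (proj α x) : ℂ) * u (combine α x k)‖ₑ :=
        enorm_integral_le_lintegral_enorm _
    _ ≤ ∫⁻ x in cube N 1, c α * ‖u (combine α x k)‖ₑ := by
        gcongr with x
        rw [enorm_mul]
        gcongr
        rw [enorm_eq_nnnorm, Complex.nnnorm_real]
        exact ENNReal.coe_le_coe.2 (hB α k x)
    _ = c α • ∫⁻ x in cube N 1, ‖u (combine α x k)‖ₑ :=
        lintegral_const_mul' _ _ ENNReal.coe_ne_top

lemma eLpNorm_AcFun_le (hB : ∀ α k x, ‖B α k (proj α x)‖₊ ≤ c α) {u : (Fin N → ℝ) → ℂ}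
    (hu : AEStronglyMeasurable u (cubeMeasure N)) {q : ℝ≥0∞} (hq : 1 ≤ q) (hq_top : q ≠ ∞) :
    eLpNorm (AcFun B u) q (cubeMeasure N) ≤ (∑ α, c α) • eLpNorm u q (cubeMeasure N) := by
  let avg (α : Finset (Fin N)) (k : Fin N → ℝ) : ℝ≥0∞ :=
    ∫⁻ x, ‖u (combine α x k)‖ₑ ∂cubeMeasure N
  have havg (α) : AEMeasurable (avg α) (cubeMeasure N) :=
    (hu.comp_measurePreserving (measurePreserving_combine α)).enorm.lintegral_prod_right'
  calc eLpNorm (AcFun B u) q (cubeMeasure N)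
      ≤ eLpNorm (∑ α, c α • avg α) q (cubeMeasure N) :=
        eLpNorm_mono_enorm fun k => by simpa [avg] using enorm_AcFun_le hB u k
    _ ≤ ∑ α, eLpNorm (c α • avg α) q (cubeMeasure N) :=
        eLpNorm_sum_le (fun α _ => ((havg α).const_smul (c α)).aestronglyMeasurable) hq
    _ ≤ ∑ α, c α • eLpNorm u q (cubeMeasure N) := by
        gcongr with α
        calc eLpNorm (c α • avg α) q (cubeMeasure N)
            ≤ c α • eLpNorm (avg α) q (cubeMeasure N) :=
              eLpNorm_le_nnreal_smul_eLpNorm_of_ae_le_mul' (.of_forall fun _ => le_rfl) q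
          _ ≤ c α • eLpNorm u q (cubeMeasure N) := by
              gcongr
              exact eLpNorm_lintegral_combine_le α hu hq hq_top
    _ = (∑ α, c α) • eLpNorm u q (cubeMeasure N) := (sum_smul ..).symm

lemma opNorm_le_of_ae_eq_AcFun (hB : ∀ α k x, ‖B α k (proj α x)‖₊ ≤ c α) {q : ℝ≥0∞}
    [hq : Fact (1 ≤ q)] (hq_top : q ≠ ∞)
    {T : Lp ℂ q (cubeMeasure N) →L[ℂ] Lp ℂ q (cubeMeasure N)}
    (hT : ∀ u : Lp ℂ q (cubeMeasure N), T u =ᵐ[cubeMeasure N] AcFun B u) :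
    ‖T‖ ≤ ∑ α, c α := by
  refine T.opNorm_le_bound (NNReal.coe_nonneg _) fun u => ?_
  have hbound := eLpNorm_AcFun_le hB (Lp.aestronglyMeasurable u) hq.out hq_top
  rw [← eLpNorm_congr_ae (hT u), ENNReal.smul_def, smul_eq_mul] at hbound
  have htop : (∑ α, c α : ℝ≥0) * eLpNorm u q (cubeMeasure N) ≠ ∞ :=
    ENNReal.mul_ne_top ENNReal.coe_ne_top (Lp.eLpNorm_ne_top u)
  simpa only [ENNReal.toReal_mul, ENNReal.coe_toReal, ← Lp.norm_def] using
    ENNReal.toReal_mono htop hbound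

end BoundedKernel

section Cells

variable {N p : ℕ}

lemma mem_cubeAt_iff_floor_eq (hp : 1 ≤ p) {b : Fin N → Fin p} {x : Fin N → ℝ} :
    x ∈ cubeAt p b ↔ ∀ n, ⌊(p : ℝ) * x n⌋ = (b n : ℕ) := by
  have hp₀ : (0 : ℝ) < p := by exact_mod_cast hp
  simp only [cubeAt, cube, aV, Set.mem_ofPred_eq, Set.mem_univ_pi, Set.mem_Ico, Pi.sub_apply]
  refine forall_congr' fun n => ?_
  rw [Int.floor_eq_iff, sub_nonneg, div_le_iff₀ hp₀, sub_lt_iff_lt_add', ← add_div,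
    lt_div_iff₀ hp₀, mul_comm (x n)]
  norm_cast

lemma pairwise_disjoint_cubeAt (hp : 1 ≤ p) :
    Pairwise (Function.onFun Disjoint (cubeAt p : (Fin N → Fin p) → Set (Fin N → ℝ))) := by
  refine fun i j hij => Set.disjoint_left.2 fun x hi hj => hij (funext fun n => Fin.ext ?_)
  have hfloor := (mem_cubeAt_iff_floor_eq hp).1 hi n
  rw [(mem_cubeAt_iff_floor_eq hp).1 hj n] at hfloor
  exact_mod_cast hfloor.symm

lemma iUnion_cubeAt (hp : 1 ≤ p) : ⋃ b : Fin N → Fin p, cubeAt p b = cube N 1 := by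
  have hp₀ : (0 : ℝ) < p := by exact_mod_cast hp
  have hcoord (t : ℝ) : (∃ d : Fin p, ⌊(p : ℝ) * t⌋ = (d : ℕ)) ↔ t ∈ Set.Ico 0 1 := by
    have hlt : t < 1 ↔ ⌊(p : ℝ) * t⌋ < p := by
      rw [Int.floor_lt, Int.cast_natCast, mul_lt_iff_lt_one_right hp₀]
    rw [Set.mem_Ico, hlt, ← mul_nonneg_iff_of_pos_left hp₀, ← Int.floor_nonneg]
    constructor
    · rintro ⟨d, hd⟩
      exact ⟨by omega, by omega⟩
    · rintro ⟨h0, h1⟩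
      exact ⟨⟨⌊(p : ℝ) * t⌋.toNat, by omega⟩, (Int.toNat_of_nonneg h0).symm⟩
  ext x
  simp only [Set.mem_iUnion, mem_cubeAt_iff_floor_eq hp, cube, Set.mem_univ_pi, ← hcoord]
  exact (Classical.skolem (p := fun n (d : Fin p) => ⌊(p : ℝ) * x n⌋ = (d : ℕ))).symm

lemma cubeAt_subset_cube (hp : 1 ≤ p) (b : Fin N → Fin p) : cubeAt p b ⊆ cube N 1 :=
  iUnion_cubeAt hp ▸ Set.subset_iUnion (cubeAt p) b

lemma measurableSet_cubeAt (b : Fin N → Fin p) : MeasurableSet (cubeAt p b) :=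
  (measurable_id.sub_const (aV p b)) (measurableSet_cube N _)

lemma setIntegral_cube_add_aV {E : Type*} [NormedAddCommGroup E] [NormedSpace ℝ E]
    (b : Fin N → Fin p) (f : (Fin N → ℝ) → E) :
    ∫ y in cube N (1 / p), f (aV p b + y) = ∫ x in cubeAt p b, f x := by
  have hpreimage : (aV p b + ·) ⁻¹' cubeAt p b = cube N (1 / p) := by
    ext y
    simp [cubeAt]
  rw [← hpreimage]
  exact (measurePreserving_add_left volume (aV p b)).setIntegral_preimage_emb
    (MeasurableEquiv.addLeft (aV p b)).measurableEmbedding f (cubeAt p b)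

end Cells

section Midpoint

variable {N p : ℕ}

/-- The midpoint of the cell containing `x` in the partition of `ℝ^N` into translates of
`[0,1/p)^N`; it extends `a_i + ε` on `Ω_i` to all of space. -/
def cellMidpoint (p : ℕ) (x : Fin N → ℝ) : Fin N → ℝ := fun n => ⌊(p : ℝ) * x n⌋ / p + 1 / (2 * p)

lemma cellMidpoint_of_mem_cubeAt (hp : 1 ≤ p) {b : Fin N → Fin p} {x : Fin N → ℝ}
    (hx : x ∈ cubeAt p b) : cellMidpoint p x = aV p b + epsV N p := by
  funext n
  simp [cellMidpoint, aV, epsV, (mem_cubeAt_iff_floor_eq hp).1 hx n]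

lemma norm_sub_cellMidpoint_le (hp : 1 ≤ p) (x : Fin N → ℝ) :
    ‖x - cellMidpoint p x‖ ≤ 1 / (2 * p) := by
  have hp₀ : (0 : ℝ) < p := by exact_mod_cast hp
  refine (pi_norm_le_iff_of_nonneg (by positivity)).2 fun n => ?_
  have hcoord : x n - cellMidpoint p x n = (Int.fract (p * x n) - 1 / 2) / p := by
    rw [cellMidpoint, Int.fract]
    field_simp
    ring
  have hfract : |Int.fract (p * x n) - 1 / 2| ≤ 1 / 2 :=
    abs_le.2 ⟨by linarith [Int.fract_nonneg (p * x n)], by linarith [Int.fract_lt_one (p * x n)]⟩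
  rw [Pi.sub_apply, hcoord, norm_div, Real.norm_eq_abs, Real.norm_of_nonneg hp₀.le, ← div_div]
  gcongr

lemma norm_proj_sub_proj_le (α : Finset (Fin N)) (x y : Fin N → ℝ) :
    ‖proj α x - proj α y‖ ≤ ‖x - y‖ := by
  refine (pi_norm_le_iff_of_nonneg (norm_nonneg _)).2 fun n => ?_
  by_cases hn : n ∈ α
  · simpa [proj, hn] using norm_le_pi_norm (x - y) n
  · simp [proj, hn]

lemma continuous_proj (α : Finset (Fin N)) : Continuous (proj α) :=
  (LipschitzWith.of_dist_le_mul (K := 1) fun x y => by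
    simpa [dist_eq_norm] using norm_proj_sub_proj_le α x y).continuous

/-- The kernels of the discretization, viewed as a multi-kernel operator: the original kernels
sampled at the midpoints of cells. -/
def midpointKernel (A : Finset (Fin N) → (Fin N → ℝ) → (Fin N → ℝ) → ℝ) (p : ℕ) :
    Finset (Fin N) → (Fin N → ℝ) → (Fin N → ℝ) → ℝ :=
  fun α k x => A α (cellMidpoint p k) (proj α (cellMidpoint p x))

variable {A : Finset (Fin N) → (Fin N → ℝ) → (Fin N → ℝ) → ℝ}

lemma midpointKernel_proj (α : Finset (Fin N)) (k x : Fin N → ℝ) :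
    midpointKernel A p α k (proj α x) = midpointKernel A p α k x := by
  have hproj : proj α (cellMidpoint p (proj α x)) = proj α (cellMidpoint p x) := by
    funext n
    by_cases hn : n ∈ α <;> simp [proj, cellMidpoint, hn]
  rw [midpointKernel, hproj, midpointKernel]

lemma midpointKernel_of_mem_cubeAt (hp : 1 ≤ p) (α : Finset (Fin N)) {i j : Fin N → Fin p}
    {k x : Fin N → ℝ} (hk : k ∈ cubeAt p i) (hx : x ∈ cubeAt p j) :
    midpointKernel A p α k (proj α x) = A α (aV p i + epsV N p) (proj α (aV p j + epsV N p)) := by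
  rw [midpointKernel_proj, midpointKernel, cellMidpoint_of_mem_cubeAt hp hk,
    cellMidpoint_of_mem_cubeAt hp hx]

lemma nnnorm_sub_midpointKernel_le (hp : 1 ≤ p) {α : Finset (Fin N)} {K : ℝ≥0}
    (hA : LipschitzWith K fun q : (Fin N → ℝ) × (Fin N → ℝ) => A α q.1 q.2) (k x : Fin N → ℝ) :
    ‖(A - midpointKernel A p) α k (proj α x)‖₊ ≤ K / (2 * p) := by
  have hdist : ‖(k - cellMidpoint p k, proj α x - proj α (cellMidpoint p x))‖ ≤ 1 / (2 * p) :=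
    max_le (norm_sub_cellMidpoint_le hp k)
      ((norm_proj_sub_proj_le α _ _).trans (norm_sub_cellMidpoint_le hp x))
  rw [← NNReal.coe_le_coe]
  calc ‖A α k (proj α x) - midpointKernel A p α k (proj α x)‖
      = ‖A α k (proj α x) - A α (cellMidpoint p k) (proj α (cellMidpoint p x))‖ := by
        rw [midpointKernel_proj, midpointKernel]
    _ ≤ K * ‖(k - cellMidpoint p k, proj α x - proj α (cellMidpoint p x))‖ :=
        hA.norm_sub_le (k, proj α x) (cellMidpoint p k, proj α (cellMidpoint p x))
    _ ≤ K * (1 / (2 * p)) := by gcongr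
    _ = K / (2 * p) := mul_one_div ..

end Midpoint

section Discretization

lemma sum_comp_piecewise {ι κ M : Type*} [Fintype ι] [DecidableEq ι] [Fintype κ] [DecidableEq κ]
    [AddCommMonoid M] (s : Finset ι) (i : ι → κ) (f : (ι → κ) → M) :
    ∑ j, f (s.piecewise j i) =
      Fintype.card κ ^ #sᶜ • ∑ j with ∀ n ∉ s, i n = j n, f j := by
  have himage : univ.image (fun j => s.piecewise j i) =
      ({j | ∀ n ∉ s, i n = j n} : Finset (ι → κ)) := by
    ext j
    simp only [mem_image, mem_univ, true_and, mem_filter]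
    refine ⟨?_, fun hj => ⟨j, funext fun n => ?_⟩⟩
    · rintro ⟨j, rfl⟩ n hn
      simp [hn]
    · by_cases hn : n ∈ s <;> simp [hn, hj]
  have hfiber {j : ι → κ} (hj : ∀ n ∉ s, i n = j n) :
      #{j' | s.piecewise j' i = j} = Fintype.card κ ^ #sᶜ := by
    have hpi : ({j' | s.piecewise j' i = j} : Finset (ι → κ)) =
        Fintype.piFinset fun n => if n ∈ s then {j n} else univ := by
      ext j'
      simp only [mem_filter, mem_univ, true_and, Fintype.mem_piFinset, funext_iff]
      refine forall_congr' fun n => ?_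
      by_cases hn : n ∈ s <;> simp [hn, hj]
    simp [hpi, Fintype.card_piFinset, apply_ite card, prod_ite, filter_not, compl_eq_univ_sdiff]
  rw [sum_comp, himage, smul_sum]
  exact sum_congr rfl fun j hj => by rw [hfiber (mem_filter.1 hj).2]

variable {N p : ℕ} {A : Finset (Fin N) → (Fin N → ℝ) → (Fin N → ℝ) → ℝ}

lemma EfunP_of_mem_cubeAt {α : Finset (Fin N)} {i j : Fin N → Fin p} (hij : ∀ n ∉ α, i n = j n)
    (c : ℂ) (u : (Fin N → ℝ) → ℂ) {k : Fin N → ℝ} (hk : k ∈ cubeAt p i) :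
    EfunP p i j α c u k = (p : ℂ) ^ #α * (p : ℂ) ^ (N - #α) * c *
      ∫ x in cubeAt p j, u (combine α x k) := by
  have hcombine (y : Fin N → ℝ) :
      aV p j + combine α y (k - aV p i) = combine α (aV p j + y) k := by
    funext n
    by_cases hn : n ∈ α
    · simp [combine, hn]
    · simp [combine, hn, aV, hij n hn]
  rw [EfunP, Set.indicator_of_mem hk, ← setIntegral_cube_add_aV]
  simp only [hcombine]

/-- The contribution of the `j`-th cell to the `α`-part of the discretized operator on the
`i`-th cell, as an integral over the whole cell. -/
def cellTerm (A : Finset (Fin N) → (Fin N → ℝ) → (Fin N → ℝ) → ℝ) (u : (Fin N → ℝ) → ℂ)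
    (k : Fin N → ℝ) (α : Finset (Fin N)) (i j : Fin N → Fin p) : ℂ :=
  A α (aV p i + epsV N p) (proj α (aV p j + epsV N p)) * ∫ x in cubeAt p j, u (combine α x k)

lemma cellTerm_piecewise (u : (Fin N → ℝ) → ℂ) (k : Fin N → ℝ) (α : Finset (Fin N))
    (i j : Fin N → Fin p) : cellTerm A u k α i (α.piecewise j i) = cellTerm A u k α i j := by
  have hproj : proj α (aV p (α.piecewise j i) + epsV N p) = proj α (aV p j + epsV N p) := by
    funext n
    by_cases hn : n ∈ α <;> simp [proj, hn, aV]
  have hcombine (y : Fin N → ℝ) :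
      combine α (aV p (α.piecewise j i) + y) k = combine α (aV p j + y) k := by
    funext n
    by_cases hn : n ∈ α <;> simp [combine, hn, aV]
  simp only [cellTerm, hproj, ← setIntegral_cube_add_aV, hcombine]

lemma sum_EfunP_coefA_of_mem_cubeAt (hp : 1 ≤ p) (u : (Fin N → ℝ) → ℂ) (α : Finset (Fin N))
    {i : Fin N → Fin p} {k : Fin N → ℝ} (hk : k ∈ cubeAt p i) :
    ∑ j, ((p : ℂ) ^ #α)⁻¹ * EfunP p i j α (coefA A p α i j) u k =
      ∑ j, cellTerm A u k α i j := by
  have hp₀ : (p : ℂ) ≠ 0 := by exact_mod_cast Nat.one_le_iff_ne_zero.1 hp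
  have hterm (j : Fin N → Fin p) : ((p : ℂ) ^ #α)⁻¹ * EfunP p i j α (coefA A p α i j) u k =
      if ∀ n ∉ α, i n = j n then (p : ℂ) ^ (N - #α) * cellTerm A u k α i j else 0 := by
    split_ifs with hij
    · rw [EfunP_of_mem_cubeAt hij _ u hk, coefA, if_pos hij, cellTerm]
      field_simp
    · simp [EfunP, coefA, hij]
  -- The leftover factor `p ^ (N - |α|)` counts the cells `j` with prescribed digits on `α`.
  calc ∑ j, ((p : ℂ) ^ #α)⁻¹ * EfunP p i j α (coefA A p α i j) u k
      = p ^ #αᶜ • ∑ j with ∀ n ∉ α, i n = j n, cellTerm A u k α i j := by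
        simp only [hterm, ← sum_filter, ← mul_sum, card_compl, Fintype.card_fin, nsmul_eq_mul,
          Nat.cast_pow]
    _ = ∑ j, cellTerm A u k α i (α.piecewise j i) := by
        rw [sum_comp_piecewise, Fintype.card_fin]
        congr!
    _ = ∑ j, cellTerm A u k α i j := by simp only [cellTerm_piecewise]

lemma AdFun_of_mem_cubeAt (hp : 1 ≤ p) (u : (Fin N → ℝ) → ℂ) {i : Fin N → Fin p}
    {k : Fin N → ℝ} (hk : k ∈ cubeAt p i) : AdFun A p u k = ∑ α, ∑ j, cellTerm A u k α i j := by
  refine sum_congr rfl fun α _ => ?_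
  rw [← sum_EfunP_coefA_of_mem_cubeAt hp u α hk]
  refine sum_eq_single_of_mem i (mem_univ i) fun i' _ hi' => sum_eq_zero fun j _ => ?_
  have hk' : k ∉ cubeAt p i' := Set.disjoint_right.1 (pairwise_disjoint_cubeAt hp hi') hk
  rw [EfunP, Set.indicator_of_notMem hk', mul_zero]

lemma setIntegral_cubeAt_midpointKernel_mul (hp : 1 ≤ p) (u : (Fin N → ℝ) → ℂ)
    (α : Finset (Fin N)) {i : Fin N → Fin p} {k : Fin N → ℝ} (hk : k ∈ cubeAt p i)
    (j : Fin N → Fin p) :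
    ∫ x in cubeAt p j, (midpointKernel A p α k (proj α x) : ℂ) * u (combine α x k) =
      cellTerm A u k α i j := by
  rw [cellTerm, ← integral_const_mul]
  exact setIntegral_congr_fun (measurableSet_cubeAt j) fun x hx => by
    rw [midpointKernel_of_mem_cubeAt hp α hk hx]

lemma integrable_midpointKernel_mul (hp : 1 ≤ p) {α : Finset (Fin N)} {u : (Fin N → ℝ) → ℂ}
    {k : Fin N → ℝ} (hk : k ∈ cube N 1)
    (hu : Integrable (fun x => u (combine α x k)) (cubeMeasure N)) :
    Integrable (fun x => (midpointKernel A p α k (proj α x) : ℂ) * u (combine α x k))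
      (cubeMeasure N) := by
  obtain ⟨i, hi⟩ := Set.mem_iUnion.1 ((iUnion_cubeAt hp).symm ▸ hk)
  rw [cubeMeasure, ← IntegrableOn, ← iUnion_cubeAt hp, integrableOn_finite_iUnion]
  intro j
  have hconst := (IntegrableOn.mono_set hu (cubeAt_subset_cube hp j)).const_mul
    (A α (aV p i + epsV N p) (proj α (aV p j + epsV N p)) : ℂ)
  refine IntegrableOn.congr_fun hconst (fun x hx => ?_) (measurableSet_cubeAt j)
  rw [midpointKernel_of_mem_cubeAt hp α hi hx]

lemma AcFun_midpointKernel (hp : 1 ≤ p) {u : (Fin N → ℝ) → ℂ} {k : Fin N → ℝ}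
    (hk : k ∈ cube N 1)
    (hu : ∀ α, Integrable (fun x => u (combine α x k)) (cubeMeasure N)) :
    AcFun (midpointKernel A p) u k = AdFun A p u k := by
  obtain ⟨i, hi⟩ := Set.mem_iUnion.1 ((iUnion_cubeAt hp).symm ▸ hk)
  rw [AdFun_of_mem_cubeAt hp u hi]
  refine sum_congr rfl fun α _ => ?_
  have hcells := integral_iUnion_fintype measurableSet_cubeAt (pairwise_disjoint_cubeAt hp)
    fun j => IntegrableOn.mono_set (integrable_midpointKernel_mul (A := A) hp hk (hu α))
      (cubeAt_subset_cube hp j)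
  simpa only [iUnion_cubeAt hp, setIntegral_cubeAt_midpointKernel_mul hp u α hi] using hcells

lemma integrable_kernel_mul {α : Finset (Fin N)} {k : Fin N → ℝ} (hA : Continuous (A α k))
    {u : (Fin N → ℝ) → ℂ} (hu : Integrable (fun x => u (combine α x k)) (cubeMeasure N)) :
    Integrable (fun x => (A α k (proj α x) : ℂ) * u (combine α x k)) (cubeMeasure N) := by
  have hcont : Continuous fun x => (A α k (proj α x) : ℂ) :=
    Complex.continuous_ofReal.comp (hA.comp (continuous_proj α))
  have hsubset : cube N 1 ⊆ Set.Icc 0 1 := fun x hx =>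
    ⟨fun n => (hx n trivial).1, fun n => (hx n trivial).2.le⟩
  exact IntegrableOn.continuousOn_mul_of_subset hcont.continuousOn hu isCompact_Icc
    (measurableSet_cube N 1) hsubset

lemma AcFun_sub_AdFun (hp : 1 ≤ p) {u : (Fin N → ℝ) → ℂ} {k : Fin N → ℝ}
    (hA : ∀ α, Continuous (A α k)) (hk : k ∈ cube N 1)
    (hu : ∀ α, Integrable (fun x => u (combine α x k)) (cubeMeasure N)) :
    AcFun A u k - AdFun A p u k = AcFun (A - midpointKernel A p) u k := by
  rw [← AcFun_midpointKernel hp hk hu, AcFun, AcFun, AcFun, ← sum_sub_distrib]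
  refine sum_congr rfl fun α _ => ?_
  rw [← integral_sub (integrable_kernel_mul (hA α) (hu α))
    (integrable_midpointKernel_mul hp hk (hu α))]
  simp only [Pi.sub_apply, Complex.ofReal_sub, sub_mul]

lemma norm_sub_le_of_lipschitzWith (hp : 1 ≤ p) {K : Finset (Fin N) → ℝ≥0}
    (hA : ∀ α, LipschitzWith (K α) fun q : (Fin N → ℝ) × (Fin N → ℝ) => A α q.1 q.2)
    {Ac Ad : Lp ℂ 2 (cubeMeasure N) →L[ℂ] Lp ℂ 2 (cubeMeasure N)}
    (hAc : ∀ u : Lp ℂ 2 (cubeMeasure N), Ac u =ᵐ[cubeMeasure N] AcFun A u)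
    (hAd : ∀ u : Lp ℂ 2 (cubeMeasure N), Ad u =ᵐ[cubeMeasure N] AdFun A p u) :
    ‖Ac - Ad‖ ≤ (∑ α, (K α : ℝ)) / (2 * p) := by
  have hcont (α k) : Continuous (A α k) := (hA α).continuous.comp (.prodMk_right k)
  have hdiff (u : Lp ℂ 2 (cubeMeasure N)) :
      (Ac - Ad) u =ᵐ[cubeMeasure N] AcFun (A - midpointKernel A p) u := by
    filter_upwards [hAc u, hAd u, Lp.coeFn_sub (Ac u) (Ad u),
      ae_restrict_mem (measurableSet_cube N 1),
      ae_forall_integrable_combine ((Lp.memLp u).integrable one_le_two)]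
      with k hAck hAdk hsub hk hint
    rw [sub_apply, hsub, Pi.sub_apply, hAck, hAdk,
      AcFun_sub_AdFun hp (fun α => hcont α k) hk hint]
  have hnorm := opNorm_le_of_ae_eq_AcFun (fun α => nnnorm_sub_midpointKernel_le hp (hA α))
    ENNReal.ofNat_ne_top hdiff
  simpa [sum_div] using hnorm

end Discretization

section Gradient

variable {N : ℕ} {A : Finset (Fin N) → (Fin N → ℝ) → (Fin N → ℝ) → ℝ} {α : Finset (Fin N)}

lemma gradNorm_nonneg : 0 ≤ gradNorm A α := Real.iSup_nonneg fun _ => norm_nonneg _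

lemma lipschitzWith_gradNorm
    (hdiff : Differentiable ℝ fun q : (Fin N → ℝ) × (Fin N → ℝ) => A α q.1 q.2)
    (hbdd : ∃ C : ℝ, ∀ q : (Fin N → ℝ) × (Fin N → ℝ),
      ‖fderiv ℝ (fun q : (Fin N → ℝ) × (Fin N → ℝ) => A α q.1 q.2) q‖ ≤ C) :
    LipschitzWith ⟨gradNorm A α, gradNorm_nonneg⟩
      fun q : (Fin N → ℝ) × (Fin N → ℝ) => A α q.1 q.2 :=
  lipschitzWith_of_nnnorm_fderiv_le hdiff fun q =>
    le_ciSup (f := fun q => ‖fderiv ℝ (fun q : (Fin N → ℝ) × (Fin N → ℝ) => A α q.1 q.2) q‖)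
      (hbdd.imp fun _ hC => Set.forall_mem_range.2 hC) q

lemma sum_gradNorm_div_le (hN : 1 ≤ N) (p : ℕ) :
    (∑ α, gradNorm A α) / (2 * p) ≤ N / (2 * p) * ∑ α, gradNorm A α := by
  have hsum : 0 ≤ ∑ α, gradNorm A α := sum_nonneg fun α _ => gradNorm_nonneg
  rw [div_mul_eq_mul_div]
  gcongr
  exact le_mul_of_one_le_left hsum (by exact_mod_cast hN)

end Gradient

theorem inverse_approximation_bound_general {N p : ℕ} (hp : 1 ≤ p)
    {A : Finset (Fin N) → (Fin N → ℝ) → (Fin N → ℝ) → ℝ} {K : Finset (Fin N) → ℝ≥0}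
    (hA : ∀ α, LipschitzWith (K α) fun q : (Fin N → ℝ) × (Fin N → ℝ) => A α q.1 q.2)
    {Ac Ad Ainv : Lp ℂ 2 (cubeMeasure N) →L[ℂ] Lp ℂ 2 (cubeMeasure N)}
    (hAc : ∀ u : Lp ℂ 2 (cubeMeasure N), Ac u =ᵐ[cubeMeasure N] AcFun A u)
    (hAd : ∀ u : Lp ℂ 2 (cubeMeasure N), Ad u =ᵐ[cubeMeasure N] AdFun A p u)
    (hAinv₁ : Ad * Ainv = 1) (hAinv₂ : Ainv * Ad = 1) {δ : ℝ}
    (hδ : (∑ α, (K α : ℝ)) / (2 * p) ≤ δ) (hsmall : δ * ‖Ainv‖ < 1) :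
    IsUnit Ac ∧ ∀ Acinv : Lp ℂ 2 (cubeMeasure N) →L[ℂ] Lp ℂ 2 (cubeMeasure N),
      Acinv * Ac = 1 → ‖Acinv - Ainv‖ ≤ δ * ‖Ainv‖ ^ 2 / (1 - δ * ‖Ainv‖) := by
  have hdist : ‖Ac - Ad‖ ≤ δ := (norm_sub_le_of_lipschitzWith hp hA hAc hAd).trans hδ
  exact ⟨isUnit_of_norm_sub_le_of_mul_norm_lt_one hdist hAinv₁ hAinv₂ hsmall,
    fun _ hleft => norm_leftInverse_sub_le hdist hAinv₁ hleft hsmall⟩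

/-- **Corollary 2 of the paper, inverse part.** Under the
assumptions of the discretization theorem with self-adjoint kernels, if the
discretization `𝒜 = Ad p` is invertible (with two-sided inverse `Ainv`) and
`δ·‖𝒜⁻¹‖ < 1` where `δ = (N/(2p)) ∑_α ‖∇A_α‖_{L^∞}`, then the multi-kernel
operator `𝒜_c` is invertible and every two-sided inverse `Acinv` of `𝒜_c`
satisfies `‖𝒜_c⁻¹ − 𝒜⁻¹‖ ≤ δ‖𝒜⁻¹‖²/(1 − δ‖𝒜⁻¹‖)`. -/
theorem inverse_approximation_bound (N : ℕ) (hN : 1 ≤ N)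
    (A : Finset (Fin N) → (Fin N → ℝ) → (Fin N → ℝ) → ℝ)
    (hdiff : ∀ α, Differentiable ℝ
      (fun q : (Fin N → ℝ) × (Fin N → ℝ) => A α q.1 q.2))
    (hbdd : ∀ α, ∃ C : ℝ, ∀ q : (Fin N → ℝ) × (Fin N → ℝ),
      ‖fderiv ℝ (fun q : (Fin N → ℝ) × (Fin N → ℝ) => A α q.1 q.2) q‖ ≤ C)
    (hsym : ∀ α (k x : Fin N → ℝ),
      A α k (proj α x) = A α (combine α x k) (proj α k))
    (Ac : Lp ℂ 2 (volume.restrict (cube N 1)) →L[ℂ]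
      Lp ℂ 2 (volume.restrict (cube N 1)))
    (hAc : ∀ u : Lp ℂ 2 (volume.restrict (cube N 1)),
      (Ac u : (Fin N → ℝ) → ℂ) =ᵐ[volume.restrict (cube N 1)]
        AcFun A (u : (Fin N → ℝ) → ℂ))
    (Ad : ℕ → (Lp ℂ 2 (volume.restrict (cube N 1)) →L[ℂ]
      Lp ℂ 2 (volume.restrict (cube N 1))))
    (hAd : ∀ p : ℕ, 1 ≤ p → ∀ u : Lp ℂ 2 (volume.restrict (cube N 1)),
      (Ad p u : (Fin N → ℝ) → ℂ) =ᵐ[volume.restrict (cube N 1)]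
        AdFun A p (u : (Fin N → ℝ) → ℂ))
    (p : ℕ) (hp : 1 ≤ p)
    (Ainv : Lp ℂ 2 (volume.restrict (cube N 1)) →L[ℂ]
      Lp ℂ 2 (volume.restrict (cube N 1)))
    (hAinv₁ : Ad p * Ainv = 1) (hAinv₂ : Ainv * Ad p = 1)
    (hsmall : ((N / (2 * p)) * ∑ α : Finset (Fin N), gradNorm A α) * ‖Ainv‖ < 1) :
    IsUnit Ac ∧
    ∀ Acinv : Lp ℂ 2 (volume.restrict (cube N 1)) →L[ℂ]
        Lp ℂ 2 (volume.restrict (cube N 1)),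
      Ac * Acinv = 1 → Acinv * Ac = 1 →
      ‖Acinv - Ainv‖ ≤
        ((N / (2 * p)) * ∑ α : Finset (Fin N), gradNorm A α) * ‖Ainv‖ ^ 2 /
          (1 - ((N / (2 * p)) * ∑ α : Finset (Fin N), gradNorm A α) * ‖Ainv‖) := by
  obtain ⟨hunit, hbound⟩ := inverse_approximation_bound_general hp
    (fun α => lipschitzWith_gradNorm (hdiff α) (hbdd α)) hAc (hAd p hp) hAinv₁ hAinv₂
    (sum_gradNorm_div_le hN p) hsmall
  exact ⟨hunit, fun Acinv _ hleft => hbound Acinv hleft⟩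

end Stmt16
end
end

section
/- Let S ≥ 1, let χ_i be the indicator function of [(i−1)/S, i/S) ⊂ [0,1) for i = 1,...,S, let A_i, B_{ij} ∈ ℂ, and let 𝒜 : L²([0,1)) → L²([0,1)) be the operator 𝒜u(x) = A(x)u(x) + ∫₀¹ B(x,y)u(y)dy with A(x) = ∑_{i=1}^S A_i χ_i(x) and B(x,y) = S ∑_{i,j=1}^S B_{ij} χ_i(x)χ_j(y). Put 𝐀 = diag(A_1,...,A_S) and 𝐁 = (B_{ij})_{i,j=1}^S. Then 𝒜 is invertible if and only if both matrices 𝐀 and 𝐀 + 𝐁 are invertible, and in that case 𝒜⁻¹u(x) = χᵀ(x)𝐀⁻¹χ(x)u(x) + S ∫₀¹ χᵀ(x)((𝐀+𝐁)⁻¹ − 𝐀⁻¹)χ(y)u(y)dy, where χ(x) = (χ_1(x),...,χ_S(x))ᵀ. -/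
/-!
STATEMENT 17: The operator 𝒜u(x) = A(x)u(x) + ∫₀¹B(x,y)u(y)dy on L²([0,1))
with S-step multiplier A and S-step kernel B is invertible iff the matrices
𝐀 = diag(A_i) and 𝐀 + 𝐁 (𝐁 = (B_{ij})) are invertible, in which case
𝒜⁻¹u(x) = χᵀ(x)𝐀⁻¹χ(x)u(x) + S∫₀¹ χᵀ(x)((𝐀+𝐁)⁻¹ − 𝐀⁻¹)χ(y)u(y)dy.
-/

open MeasureTheory Finset

noncomputable section

namespace Stmt17

/-- The step function `χ_i`, the indicator of the `i`-th subinterval of `[0,1)`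
of length `1/S` (the subintervals are indexed by `i = 0,...,S−1`). -/
def chi (S : ℕ) (i : Fin S) (x : ℝ) : ℂ :=
  if x ∈ Set.Ico ((i : ℝ) / S) (((i : ℝ) + 1) / S) then (1 : ℂ) else 0

/-- The pointwise formula of the operator
`𝒜u(x) = A(x)u(x) + ∫₀¹ B(x,y)u(y)dy` with the `S`-step multiplier
`A(x) = ∑_i A_i χ_i(x)` and the `S`-step kernel
`B(x,y) = S ∑_{i,j} B_{ij} χ_i(x) χ_j(y)`. -/
def Tformula (S : ℕ) (A : Fin S → ℂ) (B : Fin S → Fin S → ℂ)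
    (u : ℝ → ℂ) : ℝ → ℂ :=
  fun x => (∑ i, A i * chi S i x) * u x +
    ∫ y in Set.Ico (0 : ℝ) 1,
      ((S : ℂ) * ∑ i, ∑ j, B i j * chi S i x * chi S j y) * u y

/-!
Write the operator with multiplier `a` and kernel matrix `B` as a pair `(a, c)` with
`c = diagonal a + B`. Averaging over the cells turns it into multiplication by `c`, and therefore
operators compose by multiplying their pairs componentwise: the pairs `(a, c)` form the product
ring `(ι → K) × Matrix ι ι K`. This representation is faithful as soon as every cell carries a
function that is not constant there (on an interval, the function `x`). Since the ring is Artinian,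
a non-invertible pair is a zero divisor and so cannot become invertible among all operators; the
inverse of an invertible operator is the one of the pair `(a⁻¹, c⁻¹)`, whose kernel matrix is
`c⁻¹ - diagonal a⁻¹`.
-/

open scoped Matrix Ring ENNReal

theorem isUnit_map_iff_of_injective {R S : Type*} [Ring R] [IsArtinianRing R] [Semiring S]
    (f : R →+* S) (hf : Function.Injective f) {r : R} : IsUnit (f r) ↔ IsUnit r := by
  refine ⟨fun hfr ↦ IsArtinianRing.isUnit_iff_isRightRegular.2 fun s t hst ↦ ?_, fun hr ↦ hr.map f⟩
  refine hf (hfr.isRegular.right ?_)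
  simpa only [map_mul] using congrArg f hst

/-- The algebra of functions on a space cut into cells indexed by `ι`, where `E` is the space of
functions: `mul` multiplies by a step function, `step` is the step function with given values, and
`mean` is the vector of averages over the cells. -/
structure StepCalculus (K ι E : Type*) [CommRing K] [AddCommGroup E] [Module K E] where
  mul : (ι → K) →+* Module.End K E
  step : (ι → K) →ₗ[K] E
  mean : E →ₗ[K] ι → K
  mean_step (b : ι → K) : mean (step b) = b
  mul_step (a b : ι → K) : mul a (step b) = step (a * b)
  mean_mul (a : ι → K) (u : E) : mean (mul a u) = a * mean u

namespace StepCalculus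

variable {K ι E : Type*} [AddCommGroup E] [Fintype ι] [DecidableEq ι]

section CommRing

variable [CommRing K] [Module K E] (P : StepCalculus K ι E)

/-- The Fredholm operator with multiplier `a` and kernel matrix `c - diagonal a`. The parameter `c`
is the matrix by which it acts on step functions and on averages. -/
def fredholm (a : ι → K) (c : Matrix ι ι K) : Module.End K E :=
  P.mul a + P.step ∘ₗ (c - Matrix.diagonal a).mulVecLin ∘ₗ P.mean

theorem fredholm_apply (a : ι → K) (c : Matrix ι ι K) (u : E) :
    P.fredholm a c u = P.mul a u + P.step ((c - Matrix.diagonal a) *ᵥ P.mean u) :=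
  rfl

theorem mean_fredholm (a : ι → K) (c : Matrix ι ι K) (u : E) :
    P.mean (P.fredholm a c u) = c *ᵥ P.mean u := by
  rw [fredholm_apply, map_add, P.mean_mul, P.mean_step, Matrix.sub_mulVec]
  ext i
  simp [Matrix.mulVec_diagonal]

theorem fredholm_one : P.fredholm 1 1 = 1 := by
  ext u
  simp [fredholm_apply]

theorem fredholm_add (a a' : ι → K) (c c' : Matrix ι ι K) :
    P.fredholm (a + a') (c + c') = P.fredholm a c + P.fredholm a' c' := by
  ext u
  have hdiag : c + c' - Matrix.diagonal (a + a') =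
      (c - Matrix.diagonal a) + (c' - Matrix.diagonal a') := by
    rw [← add_sub_add_comm, Matrix.diagonal_add]
    rfl
  simp only [fredholm_apply, hdiag, Matrix.add_mulVec, map_add, LinearMap.add_apply]
  abel

theorem fredholm_mul (a a' : ι → K) (c c' : Matrix ι ι K) :
    P.fredholm (a * a') (c * c') = P.fredholm a c * P.fredholm a' c' := by
  ext u
  have hkernel : c * c' - Matrix.diagonal (a * a') =
      Matrix.diagonal a * (c' - Matrix.diagonal a') + (c - Matrix.diagonal a) * c' := by
    rw [mul_sub, Matrix.diagonal_mul_diagonal', sub_mul]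
    abel
  have hdiag (b : ι → K) : Matrix.diagonal a *ᵥ b = a * b := by
    ext i
    exact Matrix.mulVec_diagonal a b i
  calc P.fredholm (a * a') (c * c') u
      = P.mul a (P.mul a' u) + (P.step (a * ((c' - Matrix.diagonal a') *ᵥ P.mean u)) +
          P.step ((c - Matrix.diagonal a) *ᵥ c' *ᵥ P.mean u)) := by
        rw [fredholm_apply, hkernel, Matrix.add_mulVec, ← Matrix.mulVec_mulVec,
          ← Matrix.mulVec_mulVec, hdiag, map_add, map_mul, Module.End.mul_apply]
    _ = P.fredholm a c (P.fredholm a' c' u) := by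
        rw [P.fredholm_apply a c, mean_fredholm, P.fredholm_apply a' c', map_add, P.mul_step,
          add_assoc]

/-- The Fredholm operators as a representation of the product ring. -/
def fredholmHom : (ι → K) × Matrix ι ι K →+* Module.End K E where
  toFun r := P.fredholm r.1 r.2
  map_one' := P.fredholm_one
  map_mul' r s := P.fredholm_mul r.1 s.1 r.2 s.2
  map_zero' := by simp [fredholm]
  map_add' r s := P.fredholm_add r.1 s.1 r.2 s.2

theorem fredholm_step (a b : ι → K) (c : Matrix ι ι K) :
    P.fredholm a c (P.step b) = P.step (c *ᵥ b) := by
  rw [fredholm_apply, P.mul_step, P.mean_step, ← map_add, Matrix.sub_mulVec]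
  congr 1
  ext i
  simp [Matrix.mulVec_diagonal]

theorem eq_fredholm_inv_of_fredholm_mul_eq_one {a : ι → K} {c : Matrix ι ι K} (ha : IsUnit a)
    (hc : IsUnit c) {R : Module.End K E} (hR : P.fredholm a c * R = 1) :
    R = P.fredholm a⁻¹ʳ c⁻¹ := by
  have hleft : P.fredholm a⁻¹ʳ c⁻¹ * P.fredholm a c = 1 := by
    rw [← fredholm_mul, Ring.inverse_mul_cancel a ha,
      Matrix.nonsing_inv_mul c ((Matrix.isUnit_iff_isUnit_det c).1 hc), fredholm_one]
  exact (left_inv_eq_right_inv hleft hR).symm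

end CommRing

section Field

variable [Field K] [Module K E] (P : StepCalculus K ι E)

theorem fredholmHom_injective
    (hP : ∀ i, ∃ u, ∀ k, P.mul (Pi.single i 1) u ≠ P.step (Pi.single i k)) :
    Function.Injective P.fredholmHom := by
  rw [injective_iff_map_eq_zero]
  rintro ⟨a, c⟩ (hac : P.fredholm a c = 0)
  have ha : a = 0 := by
    ext i
    by_contra hai
    obtain ⟨u, hu⟩ := hP i
    set b := (c - Matrix.diagonal a) *ᵥ P.mean u
    have hmul : P.mul a u = P.step (-b) := by
      rw [map_neg, eq_neg_iff_add_eq_zero, ← fredholm_apply, hac, LinearMap.zero_apply]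
    apply hu ((a i)⁻¹ * (-b) i)
    calc P.mul (Pi.single i 1) u = P.mul (Pi.single i (a i)⁻¹) (P.mul a u) := by
          rw [← Module.End.mul_apply, ← map_mul, ← Pi.single_mul_left, inv_mul_cancel₀ hai]
      _ = P.step (Pi.single i ((a i)⁻¹ * (-b) i)) := by
          rw [hmul, P.mul_step, ← Pi.single_mul_left]
  have hc : c = 0 := by
    refine Matrix.ext_of_mulVec_single fun j ↦ ?_
    rw [← P.mean_step (c *ᵥ _), ← P.fredholm_step a, hac, LinearMap.zero_apply, map_zero,
      Matrix.zero_mulVec]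
  rw [ha, hc, Prod.mk_zero_zero]

theorem isUnit_fredholm_iff
    (hP : ∀ i, ∃ u, ∀ k, P.mul (Pi.single i 1) u ≠ P.step (Pi.single i k))
    (a : ι → K) (c : Matrix ι ι K) :
    IsUnit (P.fredholm a c) ↔ IsUnit a ∧ IsUnit c :=
  (isUnit_map_iff_of_injective P.fredholmHom (P.fredholmHom_injective hP) (r := (a, c))).trans
    Prod.isUnit_iff

end Field
end StepCalculus

section CellMean

variable {X ι 𝕜 : Type*} [MeasurableSpace X] [RCLike 𝕜]

/-- The vector of averages of `u` over the cells `cell ⁻¹' {i}`. -/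
def cellMean (μ : Measure X) (cell : X → ι) (u : X → 𝕜) : ι → 𝕜 :=
  fun i ↦ ⨍ x in cell ⁻¹' {i}, u x ∂μ

variable {μ : Measure X} {cell : X → ι}

theorem cellMean_congr_ae {u v : X → 𝕜} (huv : u =ᵐ[μ] v) :
    cellMean μ cell u = cellMean μ cell v :=
  funext fun _ ↦ average_congr (ae_restrict_of_ae huv)

theorem cellMean_add {u v : X → 𝕜} (hu : Integrable u μ) (hv : Integrable v μ) :
    cellMean μ cell (u + v) = cellMean μ cell u + cellMean μ cell v := by
  ext i
  simp only [cellMean, setAverage_eq, Pi.add_apply,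
    integral_add hu.integrableOn hv.integrableOn, smul_add]

theorem cellMean_smul (k : 𝕜) (u : X → 𝕜) :
    cellMean μ cell (k • u) = k • cellMean μ cell u := by
  ext i
  simp only [cellMean, setAverage_eq, Pi.smul_apply, integral_smul, smul_comm k]

variable [MeasurableSpace ι] [MeasurableSingletonClass ι]

theorem setIntegral_cell_comp_mul (hcell : Measurable cell) (a : ι → 𝕜) (u : X → 𝕜) (i : ι) :
    ∫ x in cell ⁻¹' {i}, a (cell x) * u x ∂μ = a i * ∫ x in cell ⁻¹' {i}, u x ∂μ := by
  rw [← integral_const_mul]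
  refine setIntegral_congr_fun (hcell (measurableSet_singleton i)) fun x hx ↦ ?_
  rw [show cell x = i from hx]

theorem cellMean_comp_mul (hcell : Measurable cell) (a : ι → 𝕜) (u : X → 𝕜) :
    cellMean μ cell (fun x ↦ a (cell x) * u x) = a * cellMean μ cell u := by
  ext i
  rw [Pi.mul_apply, cellMean, cellMean, setAverage_eq, setAverage_eq,
    setIntegral_cell_comp_mul hcell, mul_smul_comm]

theorem cellMean_comp [IsFiniteMeasure μ] (hcell : Measurable cell)
    (hpos : ∀ i, μ (cell ⁻¹' {i}) ≠ 0) (b : ι → 𝕜) : cellMean μ cell (b ∘ cell) = b := by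
  have hone : cellMean μ cell (fun _ ↦ (1 : 𝕜)) = 1 :=
    funext fun i ↦ setAverage_const (hpos i) (measure_ne_top μ _) 1
  calc cellMean μ cell (b ∘ cell) = cellMean μ cell (fun x ↦ b (cell x) * 1) := by
        simp only [mul_one, Function.comp_def]
    _ = b := by rw [cellMean_comp_mul hcell, hone, mul_one]

variable [IsFiniteMeasure μ]

theorem memLp_comp_of_finite [Finite ι] (hcell : Measurable cell) (q : ℝ≥0∞) (b : ι → 𝕜) :
    MemLp (b ∘ cell) q μ := by
  obtain ⟨C, hC⟩ := Finite.bddAbove_range fun i ↦ ‖b i‖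
  exact .of_bound ((measurable_of_finite b).comp hcell).aestronglyMeasurable C
    (.of_forall fun x ↦ hC ⟨cell x, rfl⟩)

theorem memLp_comp_mul [Finite ι] (hcell : Measurable cell) (a : ι → 𝕜) {q : ℝ≥0∞} {u : X → 𝕜}
    (hu : MemLp u q μ) : MemLp (fun x ↦ a (cell x) * u x) q μ :=
  hu.mul (memLp_comp_of_finite hcell ∞ a)

theorem integral_comp_mul [Fintype ι] (hcell : Measurable cell) (a : ι → 𝕜) {u : X → 𝕜}
    (hu : Integrable u μ) :
    ∫ x, a (cell x) * u x ∂μ = ∑ i, a i * ∫ x in cell ⁻¹' {i}, u x ∂μ := by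
  have hau : Integrable (fun x ↦ a (cell x) * u x) μ :=
    memLp_one_iff_integrable.1 (memLp_comp_mul hcell a (memLp_one_iff_integrable.2 hu))
  have hdisj : Pairwise (Function.onFun Disjoint fun i ↦ cell ⁻¹' {i}) := fun i j hij ↦
    Disjoint.preimage cell (Set.disjoint_singleton.2 hij)
  have hunion : ⋃ i, cell ⁻¹' {i} = Set.univ := by
    rw [← Set.preimage_iUnion, Set.iUnion_of_singleton, Set.preimage_univ]
  rw [← setIntegral_univ, ← hunion, integral_iUnion_fintype
    (fun i ↦ hcell (measurableSet_singleton i)) hdisj fun i ↦ hau.integrableOn]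
  simp only [setIntegral_cell_comp_mul hcell]

end CellMean

theorem measure_ne_zero_of_not_ae_eq {X β : Type*} [MeasurableSpace X] {μ : Measure X}
    {s : Set X} {u v : X → β} (h : ¬ u =ᵐ[μ.restrict s] v) : μ s ≠ 0 := fun h0 ↦
  h (by rw [Measure.restrict_eq_zero.2 h0]; exact ae_zero.le trivial)

section LpStepCalculus

variable {X ι 𝕜 : Type*} [MeasurableSpace X] [RCLike 𝕜] [MeasurableSpace ι]
  [MeasurableSingletonClass ι] {μ : Measure X} [IsFiniteMeasure μ] {cell : X → ι}
  {p : ℝ≥0∞}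

/-- Multiplication by the step function `a ∘ cell` on `Lp`. -/
def lpCompMul [Finite ι] (hcell : Measurable cell) (a : ι → 𝕜) :
    Module.End 𝕜 (Lp 𝕜 p μ) where
  toFun u := (memLp_comp_mul hcell a (Lp.memLp u)).toLp _
  map_add' u v := by
    rw [← MemLp.toLp_add]
    refine MemLp.toLp_congr _ _ ?_
    filter_upwards [Lp.coeFn_add u v] with x hx
    simp only [hx, Pi.add_apply, mul_add]
  map_smul' k u := by
    rw [RingHom.id_apply, ← MemLp.toLp_const_smul]
    refine MemLp.toLp_congr _ _ ?_
    filter_upwards [Lp.coeFn_smul k u] with x hx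
    simp only [hx, Pi.smul_apply, mul_smul_comm]

theorem coeFn_lpCompMul [Finite ι] (hcell : Measurable cell) (a : ι → 𝕜) (u : Lp 𝕜 p μ) :
    lpCompMul hcell a u =ᵐ[μ] fun x ↦ a (cell x) * u x :=
  (memLp_comp_mul hcell a (Lp.memLp u)).coeFn_toLp

/-- The step function `b ∘ cell` as an element of `Lp`. -/
def lpComp [Finite ι] (hcell : Measurable cell) : (ι → 𝕜) →ₗ[𝕜] Lp 𝕜 p μ where
  toFun b := (memLp_comp_of_finite hcell p b).toLp _
  map_add' _ _ := rfl
  map_smul' _ _ := rfl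

theorem coeFn_lpComp [Finite ι] (hcell : Measurable cell) (b : ι → 𝕜) :
    (lpComp hcell b : Lp 𝕜 p μ) =ᵐ[μ] b ∘ cell :=
  (memLp_comp_of_finite hcell p b).coeFn_toLp

theorem lpCompMul_eq_of_ae [Finite ι] (hcell : Measurable cell) {a : ι → 𝕜} {u v : Lp 𝕜 p μ}
    (h : v =ᵐ[μ] fun x ↦ a (cell x) * u x) : lpCompMul hcell a u = v :=
  Lp.ext ((coeFn_lpCompMul hcell a u).trans h.symm)

theorem ae_eq_const_of_lpCompMul_single_eq [Finite ι] [DecidableEq ι]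
    (hcell : Measurable cell) {i : ι} {u : Lp 𝕜 p μ} {k : 𝕜}
    (h : lpCompMul hcell (Pi.single i 1) u = lpComp hcell (Pi.single i k)) :
    u =ᵐ[μ.restrict (cell ⁻¹' {i})] fun _ ↦ k := by
  refine (ae_restrict_iff' (hcell (measurableSet_singleton i))).2 ?_
  have hmul := coeFn_lpCompMul hcell (Pi.single i 1) u
  rw [h] at hmul
  filter_upwards [hmul, coeFn_lpComp (p := p) (μ := μ) hcell (Pi.single i k)]
    with x hmul hstep (hx : cell x = i)
  simpa [hx, hmul] using hstep

/-- `lpCompMul` as a representation of the ring of step functions. -/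
def lpCompMulHom [Finite ι] (hcell : Measurable cell) :
    (ι → 𝕜) →+* Module.End 𝕜 (Lp 𝕜 p μ) :=
  RingHom.mk'
    { toFun := lpCompMul hcell
      map_one' := LinearMap.ext fun u ↦ lpCompMul_eq_of_ae hcell (by simp)
      map_mul' := fun a b ↦ LinearMap.ext fun u ↦ lpCompMul_eq_of_ae hcell <| by
        filter_upwards [coeFn_lpCompMul hcell a (lpCompMul hcell b u),
          coeFn_lpCompMul hcell b u] with x ha hb
        rw [Module.End.mul_apply, ha, hb, Pi.mul_apply, mul_assoc] }
    fun a b ↦ LinearMap.ext fun u ↦ lpCompMul_eq_of_ae hcell <| by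
      filter_upwards [coeFn_lpCompMul hcell a u, coeFn_lpCompMul hcell b u,
        Lp.coeFn_add (lpCompMul hcell a u) (lpCompMul hcell b u)] with x ha hb hadd
      exact hadd.trans (by rw [Pi.add_apply, Pi.add_apply, ha, hb, add_mul])

/-- The averages over the cells as a linear map on `Lp`. -/
def lpCellMean (μ : Measure X) [IsFiniteMeasure μ] (p : ℝ≥0∞) [Fact (1 ≤ p)] (cell : X → ι) :
    Lp 𝕜 p μ →ₗ[𝕜] ι → 𝕜 where
  toFun u := cellMean μ cell u
  map_add' u v := by
    rw [cellMean_congr_ae (Lp.coeFn_add u v), cellMean_add]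
    exacts [(Lp.memLp u).integrable Fact.out, (Lp.memLp v).integrable Fact.out]
  map_smul' k u := by
    rw [cellMean_congr_ae (Lp.coeFn_smul k u), cellMean_smul, RingHom.id_apply]

/-- The step calculus on `Lp 𝕜 p μ` for the partition into the fibres of `cell`. -/
def lpStepCalculus [Finite ι] (p : ℝ≥0∞) [Fact (1 ≤ p)] (hcell : Measurable cell)
    (hpos : ∀ i, μ (cell ⁻¹' {i}) ≠ 0) : StepCalculus 𝕜 ι (Lp 𝕜 p μ) where
  mul := lpCompMulHom hcell
  step := lpComp hcell
  mean := lpCellMean μ p cell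
  mean_step b :=
    (cellMean_congr_ae (coeFn_lpComp hcell b)).trans (cellMean_comp hcell hpos b)
  mul_step a b := lpCompMul_eq_of_ae hcell <| by
    filter_upwards [coeFn_lpComp (p := p) (μ := μ) hcell b,
      coeFn_lpComp (p := p) (μ := μ) hcell (a * b)] with x hb hab
    rw [hb, hab]
    rfl
  mean_mul a u :=
    (cellMean_congr_ae (coeFn_lpCompMul hcell a u)).trans (cellMean_comp_mul hcell a u)

variable [Fintype ι] [DecidableEq ι]

/-- The pointwise formula of the Fredholm operator on functions with multiplier `a ∘ cell` and with
kernel equal to `B i j / μ (cell ⁻¹' {j})` on the product of the cells `i` and `j`. -/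
def fredholmStep (μ : Measure X) (cell : X → ι) (a : ι → 𝕜) (B : Matrix ι ι 𝕜) (u : X → 𝕜) :
    X → 𝕜 :=
  fun x ↦ a (cell x) * u x + (B *ᵥ cellMean μ cell u) (cell x)

theorem coeFn_fredholm_lpStepCalculus [Fact (1 ≤ p)] (hcell : Measurable cell)
    (hpos : ∀ i, μ (cell ⁻¹' {i}) ≠ 0) (a : ι → 𝕜) (c : Matrix ι ι 𝕜) (u : Lp 𝕜 p μ) :
    (lpStepCalculus p hcell hpos).fredholm a c u =ᵐ[μ]
      fredholmStep μ cell a (c - Matrix.diagonal a) u := by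
  filter_upwards [Lp.coeFn_add (lpCompMul hcell a u)
      (lpComp hcell ((c - Matrix.diagonal a) *ᵥ cellMean μ cell u)),
    coeFn_lpCompMul hcell a u,
    coeFn_lpComp (p := p) (μ := μ) hcell ((c - Matrix.diagonal a) *ᵥ cellMean μ cell u)]
    with x hadd hmul hstep
  exact hadd.trans (congrArg₂ (· + ·) hmul hstep)

theorem toLinearMap_eq_fredholm_lpStepCalculus [Fact (1 ≤ p)] (hcell : Measurable cell)
    (hpos : ∀ i, μ (cell ⁻¹' {i}) ≠ 0) {a : ι → 𝕜} {B : Matrix ι ι 𝕜}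
    {T : Lp 𝕜 p μ →L[𝕜] Lp 𝕜 p μ} (hT : ∀ u : Lp 𝕜 p μ, T u =ᵐ[μ] fredholmStep μ cell a B u) :
    (T : Lp 𝕜 p μ →ₗ[𝕜] Lp 𝕜 p μ) =
      (lpStepCalculus p hcell hpos).fredholm a (Matrix.diagonal a + B) := by
  refine LinearMap.ext fun u ↦ Lp.ext ((hT u).trans ?_)
  simpa only [add_sub_cancel_left] using
    (coeFn_fredholm_lpStepCalculus hcell hpos a (Matrix.diagonal a + B) u).symm

theorem fredholm_step_inverse_general [Fact (1 ≤ p)] (hcell : Measurable cell)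
    (hnonconst : ∀ i, ∃ u : Lp 𝕜 p μ, ∀ k, ¬ u =ᵐ[μ.restrict (cell ⁻¹' {i})] fun _ ↦ k)
    (a : ι → 𝕜) (B : Matrix ι ι 𝕜) (T : Lp 𝕜 p μ →L[𝕜] Lp 𝕜 p μ)
    (hT : ∀ u : Lp 𝕜 p μ, T u =ᵐ[μ] fredholmStep μ cell a B u) :
    (IsUnit T ↔ IsUnit (Matrix.diagonal a) ∧ IsUnit (Matrix.diagonal a + B)) ∧
      ∀ Tinv : Lp 𝕜 p μ →L[𝕜] Lp 𝕜 p μ, T * Tinv = 1 → Tinv * T = 1 → ∀ u : Lp 𝕜 p μ,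
        Tinv u =ᵐ[μ] fredholmStep μ cell (Matrix.diagonal a)⁻¹.diag
          ((Matrix.diagonal a + B)⁻¹ - (Matrix.diagonal a)⁻¹) u := by
  have hpos (i : ι) : μ (cell ⁻¹' {i}) ≠ 0 :=
    measure_ne_zero_of_not_ae_eq ((hnonconst i).choose_spec 0)
  let P : StepCalculus 𝕜 ι (Lp 𝕜 p μ) := lpStepCalculus p hcell hpos
  have hP (i : ι) : ∃ u, ∀ k, P.mul (Pi.single i 1) u ≠ P.step (Pi.single i k) :=
    (hnonconst i).imp fun _ hu k h ↦ hu k (ae_eq_const_of_lpCompMul_single_eq hcell h)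
  have hTP : (T : Lp 𝕜 p μ →ₗ[𝕜] Lp 𝕜 p μ) = P.fredholm a (Matrix.diagonal a + B) :=
    toLinearMap_eq_fredholm_lpStepCalculus hcell hpos hT
  have hunit : IsUnit T ↔ IsUnit (Matrix.diagonal a) ∧ IsUnit (Matrix.diagonal a + B) := by
    rw [Matrix.isUnit_diagonal, ← P.isUnit_fredholm_iff hP, ← hTP,
      ContinuousLinearMap.isUnit_iff_bijective, Module.End.isUnit_iff,
      ContinuousLinearMap.coe_coe]
  refine ⟨hunit, fun Tinv hright hleft u ↦ ?_⟩
  obtain ⟨ha, hc⟩ := hunit.1 ⟨⟨T, Tinv, hright, hleft⟩, rfl⟩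
  have hTinv : (Tinv : Lp 𝕜 p μ →ₗ[𝕜] Lp 𝕜 p μ) = P.fredholm a⁻¹ʳ (Matrix.diagonal a + B)⁻¹ := by
    refine P.eq_fredholm_inv_of_fredholm_mul_eq_one (Matrix.isUnit_diagonal.1 ha) hc ?_
    rw [← hTP]
    exact congrArg ContinuousLinearMap.toLinearMap hright
  have hformula := coeFn_fredholm_lpStepCalculus hcell hpos a⁻¹ʳ (Matrix.diagonal a + B)⁻¹ u
  have hdiag : (Matrix.diagonal a)⁻¹.diag = a⁻¹ʳ := by
    rw [Matrix.inv_diagonal, Matrix.diag_diagonal]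
  rwa [← hTinv, ← Matrix.inv_diagonal, ← hdiag] at hformula

end LpStepCalculus

section UnitInterval

/-- Lebesgue measure on `[0, 1)`. -/
abbrev unitMeasure : Measure ℝ := volume.restrict (Set.Ico (0 : ℝ) 1)

variable (S : ℕ) [NeZero S]

/-- The index `i` of the interval `[i / S, (i + 1) / S)` containing `x ∈ [0, 1)`; outside `[0, 1)`
the value is a junk one, reduced modulo `S`. -/
def cellIndex (x : ℝ) : Fin S :=
  Fin.ofNat S ⌊x * S⌋₊

theorem measurable_cellIndex : Measurable (cellIndex S) :=
  (measurable_of_countable (Fin.ofNat S)).comp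
    (Nat.measurable_floor.comp (measurable_id.mul_const (S : ℝ)))

variable {S}

theorem cellIndex_eq_iff {x : ℝ} (hx : x ∈ Set.Ico (0 : ℝ) 1) (i : Fin S) :
    cellIndex S x = i ↔ x ∈ Set.Ico ((i : ℝ) / S) (((i : ℝ) + 1) / S) := by
  have hS : (0 : ℝ) < S := Nat.cast_pos.2 (NeZero.pos S)
  have hxS : 0 ≤ x * S := mul_nonneg hx.1 hS.le
  have hfloor : ⌊x * S⌋₊ < S := (Nat.floor_lt hxS).2 (mul_lt_of_lt_one_left hS hx.2)
  rw [Fin.ext_iff, cellIndex, Fin.val_ofNat, Nat.mod_eq_of_lt hfloor, Nat.floor_eq_iff hxS,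
    Set.mem_Ico, div_le_iff₀ hS, lt_div_iff₀ hS]

theorem cellIndex_preimage_inter (i : Fin S) :
    cellIndex S ⁻¹' {i} ∩ Set.Ico 0 1 = Set.Ico ((i : ℝ) / S) (((i : ℝ) + 1) / S) := by
  have hsub : Set.Ico ((i : ℝ) / S) (((i : ℝ) + 1) / S) ⊆ Set.Ico 0 1 :=
    Set.Ico_subset_Ico (by positivity) (div_le_one_of_le₀ (mod_cast i.2) (by positivity))
  ext x
  exact ⟨fun ⟨hi, hx⟩ ↦ (cellIndex_eq_iff hx i).1 hi,
    fun h ↦ ⟨(cellIndex_eq_iff (hsub h) i).2 h, hsub h⟩⟩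

theorem measureReal_cellIndex_preimage (i : Fin S) :
    unitMeasure.real (cellIndex S ⁻¹' {i}) = (S : ℝ)⁻¹ := by
  rw [measureReal_restrict_apply (measurable_cellIndex S (measurableSet_singleton i)),
    cellIndex_preimage_inter, Real.volume_real_Ico, add_div, add_sub_cancel_left, one_div]
  exact max_eq_left (by positivity)

theorem chi_eq_ite {x : ℝ} (hx : x ∈ Set.Ico (0 : ℝ) 1) (i : Fin S) :
    chi S i x = if cellIndex S x = i then 1 else 0 := by
  simp only [chi, cellIndex_eq_iff hx]

theorem sum_mul_chi (a : Fin S → ℂ) {x : ℝ} (hx : x ∈ Set.Ico (0 : ℝ) 1) :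
    ∑ i, a i * chi S i x = a (cellIndex S x) := by
  simp [chi_eq_ite hx]

theorem sum_sum_mul_chi_mul_chi (B : Matrix (Fin S) (Fin S) ℂ) {x y : ℝ}
    (hx : x ∈ Set.Ico (0 : ℝ) 1) (hy : y ∈ Set.Ico (0 : ℝ) 1) :
    ∑ i, ∑ j, B i j * chi S i x * chi S j y = B (cellIndex S x) (cellIndex S y) := by
  simp only [sum_mul_chi _ hy, sum_mul_chi (fun i ↦ B i (cellIndex S y)) hx]

theorem setIntegral_chi_kernel (B : Matrix (Fin S) (Fin S) ℂ) {u : ℝ → ℂ}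
    (hu : Integrable u unitMeasure) {x : ℝ} (hx : x ∈ Set.Ico (0 : ℝ) 1) :
    ∫ y in Set.Ico (0 : ℝ) 1, ((S : ℂ) * ∑ i, ∑ j, B i j * chi S i x * chi S j y) * u y =
      (B *ᵥ cellMean unitMeasure (cellIndex S) u) (cellIndex S x) := by
  calc ∫ y in Set.Ico (0 : ℝ) 1, ((S : ℂ) * ∑ i, ∑ j, B i j * chi S i x * chi S j y) * u y
      = ∫ y, (S * B (cellIndex S x) (cellIndex S y)) * u y ∂unitMeasure :=
        setIntegral_congr_fun measurableSet_Ico fun y hy ↦ by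
          simp only [sum_sum_mul_chi_mul_chi B hx hy]
    _ = ∑ j, S * B (cellIndex S x) j * ∫ y in cellIndex S ⁻¹' {j}, u y ∂unitMeasure :=
        integral_comp_mul (measurable_cellIndex S) (fun j ↦ S * B (cellIndex S x) j) hu
    _ = (B *ᵥ cellMean unitMeasure (cellIndex S) u) (cellIndex S x) := by
        refine sum_congr rfl fun j _ ↦ ?_
        rw [cellMean, setAverage_eq, measureReal_cellIndex_preimage, inv_inv, Complex.real_smul,
          Complex.ofReal_natCast]
        ring

theorem Tformula_ae_eq_fredholmStep (A : Fin S → ℂ) (B : Fin S → Fin S → ℂ) {u : ℝ → ℂ}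
    (hu : Integrable u unitMeasure) :
    Tformula S A B u =ᵐ[unitMeasure]
      fredholmStep unitMeasure (cellIndex S) A (Matrix.of B) u := by
  filter_upwards [ae_restrict_mem measurableSet_Ico] with x hx
  rw [Tformula, sum_mul_chi A hx, fredholmStep]
  exact congrArg _ (setIntegral_chi_kernel (Matrix.of B) hu hx)

theorem fredholmStep_diag_ae_eq (D C : Matrix (Fin S) (Fin S) ℂ) {u : ℝ → ℂ}
    (hu : Integrable u unitMeasure) :
    fredholmStep unitMeasure (cellIndex S) D.diag C u =ᵐ[unitMeasure] fun x ↦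
      (∑ i, ∑ j, chi S i x * D i j * chi S j x) * u x +
        ∫ y in Set.Ico (0 : ℝ) 1, ((S : ℂ) * ∑ i, ∑ j, chi S i x * C i j * chi S j y) * u y := by
  filter_upwards [ae_restrict_mem measurableSet_Ico] with x hx
  simp only [mul_comm (chi S _ x), sum_sum_mul_chi_mul_chi D hx hx, setIntegral_chi_kernel C hu hx,
    fredholmStep, Matrix.diag_apply]

theorem exists_Lp_not_ae_eq_const_on_cell (i : Fin S) :
    ∃ u : Lp ℂ 2 unitMeasure,
      ∀ k, ¬ u =ᵐ[unitMeasure.restrict (cellIndex S ⁻¹' {i})] fun _ ↦ k := by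
  have hmem : MemLp (fun x : ℝ ↦ (x : ℂ)) 2 unitMeasure :=
    .of_bound Complex.measurable_ofReal.aestronglyMeasurable 1 <| by
      filter_upwards [ae_restrict_mem measurableSet_Ico] with x hx
      rw [Complex.norm_real, Real.norm_of_nonneg hx.1]
      exact hx.2.le
  refine ⟨hmem.toLp _, fun k hk ↦ ?_⟩
  have hconst : ∀ᵐ x : ℝ ∂unitMeasure.restrict (cellIndex S ⁻¹' {i}), (x : ℂ) = k :=
    (Filter.EventuallyEq.symm (ae_restrict_of_ae hmem.coeFn_toLp)).trans hk
  have hne : ∀ᵐ x : ℝ ∂unitMeasure.restrict (cellIndex S ⁻¹' {i}), x ≠ k.re :=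
    Measure.ae_ne _ _
  have hfalse : ∀ᵐ _ : ℝ ∂unitMeasure.restrict (cellIndex S ⁻¹' {i}), False := by
    filter_upwards [hconst, hne] with x hxk hxne
    exact hxne (by rw [← hxk, Complex.ofReal_re])
  have hzero : unitMeasure (cellIndex S ⁻¹' {i}) = 0 := by
    rwa [Filter.eventually_false_iff_eq_bot, ae_eq_bot, Measure.restrict_eq_zero] at hfalse
  have hreal : (S : ℝ)⁻¹ = 0 := by
    rw [← measureReal_cellIndex_preimage i, measureReal_def, hzero, ENNReal.toReal_zero]
  exact inv_ne_zero (NeZero.ne (S : ℝ)) hreal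

end UnitInterval

/-- Invertibility criterion and explicit inverse for the
extended Fredholm operator with `S`-step data. -/
theorem fredholm_step_inverse (S : ℕ) (hS : 1 ≤ S)
    (A : Fin S → ℂ) (B : Fin S → Fin S → ℂ)
    (T : Lp ℂ 2 (volume.restrict (Set.Ico (0 : ℝ) 1)) →L[ℂ]
      Lp ℂ 2 (volume.restrict (Set.Ico (0 : ℝ) 1)))
    (hT : ∀ u : Lp ℂ 2 (volume.restrict (Set.Ico (0 : ℝ) 1)),
      (T u : ℝ → ℂ) =ᵐ[volume.restrict (Set.Ico (0 : ℝ) 1)]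
        Tformula S A B (u : ℝ → ℂ)) :
    (IsUnit T ↔
      (IsUnit (Matrix.diagonal A) ∧ IsUnit (Matrix.diagonal A + Matrix.of B))) ∧
    (∀ Tinv : Lp ℂ 2 (volume.restrict (Set.Ico (0 : ℝ) 1)) →L[ℂ]
        Lp ℂ 2 (volume.restrict (Set.Ico (0 : ℝ) 1)),
      T * Tinv = 1 → Tinv * T = 1 →
      ∀ u : Lp ℂ 2 (volume.restrict (Set.Ico (0 : ℝ) 1)),
        (Tinv u : ℝ → ℂ) =ᵐ[volume.restrict (Set.Ico (0 : ℝ) 1)]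
          fun x =>
            (∑ i, ∑ j, chi S i x * (Matrix.diagonal A)⁻¹ i j * chi S j x) *
                (u : ℝ → ℂ) x +
              ∫ y in Set.Ico (0 : ℝ) 1,
                ((S : ℂ) * ∑ i, ∑ j, chi S i x *
                    ((Matrix.diagonal A + Matrix.of B)⁻¹ -
                      (Matrix.diagonal A)⁻¹) i j * chi S j y) *
                  (u : ℝ → ℂ) y) := by
  have : NeZero S := ⟨Nat.one_le_iff_ne_zero.1 hS⟩
  have integrable_coe (u : Lp ℂ 2 unitMeasure) : Integrable u unitMeasure :=
    (Lp.memLp u).integrable one_le_two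
  refine (fredholm_step_inverse_general (measurable_cellIndex S) exists_Lp_not_ae_eq_const_on_cell
    A (Matrix.of B) T fun u ↦ (hT u).trans (Tformula_ae_eq_fredholmStep A B (integrable_coe u))).imp
    id fun hinv Tinv hright hleft u ↦ ?_
  exact (hinv Tinv hright hleft u).trans (fredholmStep_diag_ae_eq _ _ (integrable_coe u))

end Stmt17
end
end

section
/- Let S ≥ 1, let χ_i be the indicator function of [(i−1)/S, i/S) ⊂ [0,1), let A_i, B_{ij} ∈ ℂ, and let 𝒜 : L²([0,1)) → L²([0,1)) be the operator 𝒜u(x) = A(x)u(x) + ∫₀¹ B(x,y)u(y)dy with A(x) = ∑_{i=1}^S A_i χ_i(x) and B(x,y) = S ∑_{i,j=1}^S B_{ij} χ_i(x)χ_j(y). Put 𝐀 = diag(A_1,...,A_S) and 𝐁 = (B_{ij})_{i,j=1}^S. Then the spectrum of the bounded operator 𝒜 equals the union of the set of eigenvalues of the matrix 𝐀 and the set of eigenvalues of the matrix 𝐀 + 𝐁. -/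
/-!
STATEMENT 18: The spectrum of the operator 𝒜u(x) = A(x)u(x) + ∫₀¹B(x,y)u(y)dy
on L²([0,1)) with S-step data equals the union of the set of eigenvalues of
𝐀 = diag(A_i) and the set of eigenvalues of 𝐀 + 𝐁 (𝐁 = (B_{ij})).
-/

open MeasureTheory Finset

noncomputable section

namespace Stmt18

/-- The step function `χ_i`, the indicator of the `i`-th subinterval of `[0,1)`
of length `1/S` (the subintervals are indexed by `i = 0,...,S−1`). -/
def chi (S : ℕ) (i : Fin S) (x : ℝ) : ℂ :=
  if x ∈ Set.Ico ((i : ℝ) / S) (((i : ℝ) + 1) / S) then (1 : ℂ) else 0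

/-- The pointwise formula of the operator
`𝒜u(x) = A(x)u(x) + ∫₀¹ B(x,y)u(y)dy` with the `S`-step multiplier
`A(x) = ∑_i A_i χ_i(x)` and the `S`-step kernel
`B(x,y) = S ∑_{i,j} B_{ij} χ_i(x) χ_j(y)`. -/
def Tformula (S : ℕ) (A : Fin S → ℂ) (B : Fin S → Fin S → ℂ)
    (u : ℝ → ℂ) : ℝ → ℂ :=
  fun x => (∑ i, A i * chi S i x) * u x +
    ∫ y in Set.Ico (0 : ℝ) 1,
      ((S : ℂ) * ∑ i, ∑ j, B i j * chi S i x * chi S j y) * u y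

/-!
Sorting the points of the underlying space into cells makes `Lᵖ` a module over the ring `ι → 𝕜` of
functions constant on cells. Integration over the cells is a module map `φ` onto `ι → 𝕜`, and
`e = 1 / μ(cell)` is a vector with `φ e = 1`, so `Lᵖ` is the direct sum of the step functions and
of `ker φ`, the functions of mean zero on every cell. In these terms `𝒜 u = A • u + (𝐁 φ(u)) • e`.
Both summands are invariant: on the step functions, in the coordinates `φ`, the operator is the
matrix `𝐀 + 𝐁`; on `ker φ` the integral term vanishes and the operator is multiplication by `A`.
Each cell splits into two parts of positive measure, so each carries a nonzero function of mean
zero; hence `ker φ` is a faithful module and contributes exactly the values `A i`.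
-/

open scoped ENNReal

section AlgebraicPerturbation

variable {R M : Type*} [CommRing R] [AddCommGroup M] [Module R M]
  {φ : M →ₗ[R] R} {e : M} {a : R} {B : R → R}

theorem bijective_mul_add_of_bijective_smul_add (he : φ e = 1)
    (h : Function.Bijective fun u : M ↦ a • u + B (φ u) • e) :
    Function.Bijective fun r ↦ a * r + B r := by
  refine ⟨fun r s hrs ↦ ?_, fun r ↦ ?_⟩
  · have hsmul : r • e = s • e := h.1 <| by
      simpa [he, smul_smul, ← add_smul] using congrArg (· • e) hrs
    simpa [he] using congrArg φ hsmul
  · obtain ⟨u, hu⟩ := h.2 (r • e)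
    exact ⟨φ u, by simpa [he] using congrArg φ hu⟩

theorem isUnit_of_injective_smul_add [IsArtinianRing R] [FaithfulSMul R (LinearMap.ker φ)]
    (h : Function.Injective fun u : M ↦ a • u + B (φ u) • e) : IsUnit a := by
  rw [IsArtinianRing.isUnit_iff_mem_nonZeroDivisors, mem_nonZeroDivisors_iff_left]
  intro r har
  have hkill (w : LinearMap.ker φ) : r • (w : M) = 0 := h <| by
    simp [smul_smul, har, LinearMap.mem_ker.1 w.2]
  exact eq_of_smul_eq_smul (α := LinearMap.ker φ) fun w ↦ Subtype.ext (by simp [hkill])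

theorem bijective_smul_add_of_bijective_mul_add (he : φ e = 1) (ha : IsUnit a)
    (h : Function.Bijective fun r ↦ a * r + B r) :
    Function.Bijective fun u : M ↦ a • u + B (φ u) • e := by
  refine ⟨fun u v huv ↦ ?_, fun f ↦ ?_⟩
  · have hφ : φ u = φ v := h.1 <| by simpa [he] using congrArg φ huv
    simpa [hφ, ha.smul_left_cancel] using huv
  · obtain ⟨r, hr⟩ := h.2 (φ f)
    obtain ⟨a, rfl⟩ := ha
    refine ⟨a⁻¹ • (f - B r • e), ?_⟩
    have hφ : φ (a⁻¹ • (f - B r • e)) = r := by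
      simp [Units.smul_def, he, ← hr]
    simp [hφ, ← Units.smul_def]

theorem spectrum_smul_add_eq_union {K : Type*} [CommRing K] [Algebra K R] [Module K M]
    [IsScalarTower K R M] [IsArtinianRing R] [FaithfulSMul R (LinearMap.ker φ)] (he : φ e = 1)
    (B : Module.End K R) {T : Module.End K M} (hT : ∀ u, T u = a • u + B (φ u) • e) :
    spectrum K T = spectrum K a ∪ spectrum K (LinearMap.mulLeft K a + B) := by
  ext z
  have hM : ⇑(algebraMap K (Module.End K M) z - T) =
      fun u ↦ (algebraMap K R z - a) • u + (-B) (φ u) • e := by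
    ext u
    simp [hT, sub_smul, Module.algebraMap_end_apply, sub_sub, ← sub_eq_add_neg]
  have hR : ⇑(algebraMap K (Module.End K R) z - (LinearMap.mulLeft K a + B)) =
      fun r ↦ (algebraMap K R z - a) * r + (-B) r := by
    ext r
    simp [sub_mul, Algebra.smul_def, sub_sub, ← sub_eq_add_neg]
  rw [Set.mem_union, spectrum.mem_iff, spectrum.mem_iff, spectrum.mem_iff, ← not_and_or,
    not_iff_not, Module.End.isUnit_iff, Module.End.isUnit_iff, hM, hR]
  exact ⟨fun h ↦ ⟨isUnit_of_injective_smul_add h.1, bijective_mul_add_of_bijective_smul_add he h⟩,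
    fun h ↦ bijective_smul_add_of_bijective_mul_add he h.1 h.2⟩

end AlgebraicPerturbation

section MatrixSpectrum

variable {n : Type*} [Fintype n] [DecidableEq n]

theorem mulLeft_add_toLin'_eq_toLin'_diagonal_add {R : Type*} [CommSemiring R] (d : n → R)
    (N : Matrix n n R) :
    LinearMap.mulLeft R d + N.toLin' = (Matrix.diagonal d + N).toLin' := by
  refine LinearMap.ext fun v ↦ funext fun i ↦ ?_
  simp [Matrix.mulVec_diagonal]

variable {K : Type*} [Field K]

theorem setOf_det_sub_smul_one_eq_zero (N : Matrix n n K) :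
    {z : K | (N - z • (1 : Matrix n n K)).det = 0} = spectrum K N := by
  ext z
  rw [Set.mem_ofPred_eq, spectrum.mem_iff, Algebra.algebraMap_eq_smul_one, IsUnit.sub_iff,
    Matrix.isUnit_iff_isUnit_det, isUnit_iff_ne_zero, not_not]

theorem spectrum_pi_eq_spectrum_diagonal (d : n → K) :
    spectrum K d = spectrum K (Matrix.diagonal d) := by
  rw [Pi.spectrum_eq, spectrum_diagonal]
  ext z
  simp [spectrum.mem_iff, sub_eq_zero, eq_comm]

end MatrixSpectrum

section StepMultiplication

variable {X ι 𝕜 : Type*} [MeasurableSpace X] {μ : Measure X} [Finite ι] [MeasurableSpace ι]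
  [DiscreteMeasurableSpace ι] [NormedField 𝕜] {p : ℝ≥0∞} {c : X → ι}

theorem memLp_comp_mul (hc : Measurable c) (a : ι → 𝕜) {u : X → 𝕜} (hu : MemLp u p μ) :
    MemLp (fun x ↦ a (c x) * u x) p μ := by
  have := Fintype.ofFinite ι
  refine hu.of_le_mul (c := ‖a‖) (.mul ?_ hu.1) (.of_forall fun x ↦ ?_)
  · exact (StronglyMeasurable.of_discrete.comp_measurable hc).aestronglyMeasurable
  · grw [norm_mul, norm_le_pi_norm a]

/-- The action of `ι → 𝕜` on `Lᵖ` by step multipliers: `a` multiplies by `x ↦ a (c x)`. The map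
`c : X → ι` encodes a partition of `X` into the cells `c ⁻¹' {i}`. -/
def stepMul (hc : Measurable c) : (ι → 𝕜) →ₐ[𝕜] Module.End 𝕜 (Lp 𝕜 p μ) :=
  AlgHom.ofLinearMap
    (LinearMap.mk₂ 𝕜 (fun a u ↦ (memLp_comp_mul hc a (Lp.memLp u)).toLp _)
      (fun a b u ↦ by
        rw [← MemLp.toLp_add]
        congr 1
        ext x
        simp [add_mul])
      (fun k a u ↦ by
        rw [← MemLp.toLp_const_smul]
        congr 1
        ext x
        simp [mul_assoc])
      (fun a u v ↦ by
        rw [← MemLp.toLp_add, MemLp.toLp_eq_toLp_iff]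
        filter_upwards [Lp.coeFn_add u v] with x hx
        simp only [Pi.add_apply, hx, mul_add])
      (fun k a u ↦ by
        rw [← MemLp.toLp_const_smul, MemLp.toLp_eq_toLp_iff]
        filter_upwards [Lp.coeFn_smul k u] with x hx
        simp only [Pi.smul_apply, smul_eq_mul, hx, mul_left_comm]))
    (by
      ext1 u
      simp)
    (fun a b ↦ by
      ext1 u
      simp only [LinearMap.mk₂_apply, Module.End.mul_apply, MemLp.toLp_eq_toLp_iff]
      filter_upwards [MemLp.coeFn_toLp (memLp_comp_mul hc b (Lp.memLp u))] with x hx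
      simp [hx, mul_assoc])

/-- The `(ι → 𝕜)`-module structure on `Lᵖ` given by `stepMul`. It depends on `c`, hence is not an
instance. -/
abbrev stepModule (hc : Measurable c) : Module (ι → 𝕜) (Lp 𝕜 p μ) :=
  Module.compHom (Lp 𝕜 p μ) (stepMul hc : (ι → 𝕜) →ₐ[𝕜] Module.End 𝕜 (Lp 𝕜 p μ)).toRingHom

theorem coeFn_stepMul (hc : Measurable c) (a : ι → 𝕜) (u : Lp 𝕜 p μ) :
    stepMul hc a u =ᵐ[μ] fun x ↦ a (c x) * u x :=
  MemLp.coeFn_toLp (memLp_comp_mul hc a (Lp.memLp u))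

end StepMultiplication

section CellDensity

variable {X ι 𝕜 : Type*} [MeasurableSpace X] {μ : Measure X} [IsFiniteMeasure μ] [Finite ι]
  [MeasurableSpace ι] [DiscreteMeasurableSpace ι] [RCLike 𝕜] {p : ℝ≥0∞} {c : X → ι}

/-- The function equal to `1 / μ (c ⁻¹' {i})` on the cell `c ⁻¹' {i}`, so that it integrates to `1`
over every cell of nonzero measure. -/
def cellDensity (hc : Measurable c) : Lp 𝕜 p μ :=
  stepMul hc (fun i ↦ (μ.real (c ⁻¹' {i}) : 𝕜)⁻¹) (Lp.const p μ 1)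

theorem coeFn_cellDensity (hc : Measurable c) :
    (cellDensity hc : Lp 𝕜 p μ) =ᵐ[μ] fun x ↦ (μ.real (c ⁻¹' {c x}) : 𝕜)⁻¹ := by
  filter_upwards [coeFn_stepMul hc _ (Lp.const p μ (1 : 𝕜)), Lp.coeFn_const p μ (1 : 𝕜)]
    with x hmul hone
  rw [cellDensity, hmul, hone, Function.const_apply, mul_one]

end CellDensity

section CellIntegral

variable {X ι 𝕜 : Type*} [MeasurableSpace X] {μ : Measure X} [IsFiniteMeasure μ] [RCLike 𝕜]
  {p : ℝ≥0∞} [Fact (1 ≤ p)] {c : X → ι}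

theorem integrable_of_Lp (u : Lp 𝕜 p μ) : Integrable u μ :=
  (Lp.memLp u).integrable Fact.out

/-- The vector of integrals of an `Lᵖ` function over the cells `c ⁻¹' {i}`; its kernel consists of
the functions with mean zero on every cell. -/
def cellIntegral (c : X → ι) : Lp 𝕜 p μ →ₗ[𝕜] ι → 𝕜 where
  toFun u i := ∫ x in c ⁻¹' {i}, u x ∂μ
  map_add' u v := by
    ext i
    rw [Pi.add_apply, ← integral_add (integrable_of_Lp u).integrableOn
      (integrable_of_Lp v).integrableOn]
    exact integral_congr_ae (ae_restrict_of_ae (Lp.coeFn_add u v))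
  map_smul' k u := by
    ext i
    rw [RingHom.id_apply, Pi.smul_apply, ← integral_smul]
    exact integral_congr_ae (ae_restrict_of_ae (Lp.coeFn_smul k u))

theorem cellIntegral_apply (u : Lp 𝕜 p μ) (i : ι) :
    cellIntegral c u i = ∫ x in c ⁻¹' {i}, u x ∂μ :=
  rfl

variable [MeasurableSpace ι] [DiscreteMeasurableSpace ι]

theorem integral_comp_mul [Fintype ι] (hc : Measurable c) (b : ι → 𝕜) (u : Lp 𝕜 p μ) :
    ∫ x, b (c x) * u x ∂μ = ∑ i, b i * cellIntegral c u i := by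
  have hcell (i : ι) : MeasurableSet (c ⁻¹' {i}) := hc (.of_discrete)
  have hint : Integrable (fun x ↦ b (c x) * u x) μ :=
    (memLp_comp_mul hc b (Lp.memLp u)).integrable Fact.out
  have hcover : ⋃ i, c ⁻¹' {i} = Set.univ := by
    rw [← Set.preimage_iUnion, Set.iUnion_of_singleton, Set.preimage_univ]
  calc
    ∫ x, b (c x) * u x ∂μ = ∑ i, ∫ x in c ⁻¹' {i}, b (c x) * u x ∂μ := by
      rw [← setIntegral_univ, ← hcover, integral_iUnion_fintype hcell
        (pairwise_disjoint_fiber c) fun i ↦ hint.integrableOn]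
    _ = ∑ i, ∫ x in c ⁻¹' {i}, b i * u x ∂μ := by
      refine Finset.sum_congr rfl fun i _ ↦ setIntegral_congr_fun (hcell i) fun x hx ↦ ?_
      rw [Set.mem_preimage, Set.mem_singleton_iff] at hx
      simp only [hx]
    _ = ∑ i, b i * cellIntegral c u i := by
      simp only [integral_const_mul, cellIntegral_apply]

variable [Finite ι]

theorem cellIntegral_stepMul (hc : Measurable c) (a : ι → 𝕜) (u : Lp 𝕜 p μ) :
    cellIntegral c (stepMul hc a u) = a * cellIntegral c u := by
  ext i
  have hcell : MeasurableSet (c ⁻¹' {i}) := hc (.of_discrete)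
  rw [Pi.mul_apply, cellIntegral_apply, cellIntegral_apply, ← integral_const_mul]
  refine setIntegral_congr_ae hcell ?_
  filter_upwards [coeFn_stepMul hc a u] with x hx hxi
  rw [hx, hxi]

theorem cellIntegral_cellDensity (hc : Measurable c) (hμ : ∀ i, μ (c ⁻¹' {i}) ≠ 0) :
    cellIntegral c (cellDensity hc : Lp 𝕜 p μ) = 1 := by
  ext i
  have hone : cellIntegral c (Lp.const p μ (1 : 𝕜)) i = (μ.real (c ⁻¹' {i}) : 𝕜) := by
    rw [cellIntegral_apply, integral_congr_ae (ae_restrict_of_ae (Lp.coeFn_const p μ (1 : 𝕜)))]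
    simp [RCLike.real_smul_eq_coe_mul]
  have hne : (μ.real (c ⁻¹' {i}) : 𝕜) ≠ 0 :=
    RCLike.ofReal_ne_zero.2 ((measureReal_ne_zero_iff).2 (hμ i))
  rw [cellDensity, cellIntegral_stepMul, Pi.mul_apply, hone, inv_mul_cancel₀ hne, Pi.one_apply]

-- Subtracting from the indicator of `t` the step function with the same cell integrals gives such
-- a function `w`: a step function cannot agree with this indicator on a cell that `t` splits.
theorem exists_cellIntegral_eq_zero_and_not_ae_eq_zero (hc : Measurable c)
    (hμ : ∀ i, μ (c ⁻¹' {i}) ≠ 0) {k : ι} {t : Set X} (ht : MeasurableSet t)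
    (hin : μ (c ⁻¹' {k} ∩ t) ≠ 0) (hout : μ (c ⁻¹' {k} \ t) ≠ 0) :
    ∃ w : Lp 𝕜 p μ, cellIntegral c w = 0 ∧ ¬ ∀ᵐ x ∂μ, c x = k → w x = 0 := by
  let v : Lp 𝕜 p μ := indicatorConstLp p ht (measure_ne_top μ t) 1
  refine ⟨v - stepMul hc (cellIntegral c v) (cellDensity hc), ?_, fun hvanish ↦ ?_⟩
  · rw [map_sub, cellIntegral_stepMul, cellIntegral_cellDensity hc hμ, mul_one, sub_self]
  obtain ⟨C, hC⟩ : ∃ C : 𝕜, ∀ᵐ x ∂μ, c x = k → t.indicator (fun _ ↦ (1 : 𝕜)) x = C := by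
    refine ⟨cellIntegral c v k * (μ.real (c ⁻¹' {k}) : 𝕜)⁻¹, ?_⟩
    have hv : v =ᵐ[μ] t.indicator fun _ ↦ 1 := indicatorConstLp_coeFn
    filter_upwards [hvanish, Lp.coeFn_sub v _, coeFn_stepMul hc (cellIntegral c v) (cellDensity hc),
      coeFn_cellDensity (𝕜 := 𝕜) (p := p) hc, hv] with x hx hsub hmul hdensity hvx hxk
    have hzero := hx hxk
    rwa [hsub, Pi.sub_apply, hmul, hdensity, hvx, hxk, sub_eq_zero] at hzero
  obtain ⟨x, ⟨hxk, hxt⟩, hx⟩ := ((frequently_ae_mem_iff.2 hin).and_eventually hC).exists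
  obtain ⟨y, ⟨hyk, hyt⟩, hy⟩ := ((frequently_ae_mem_iff.2 hout).and_eventually hC).exists
  have hone : 1 = C := by rw [← hx hxk, Set.indicator_of_mem hxt]
  have hzero : 0 = C := by rw [← hy hyk, Set.indicator_of_notMem hyt]
  exact one_ne_zero (hone.trans hzero.symm)

theorem eq_of_stepMul_eq_on_ker_cellIntegral (hc : Measurable c)
    (hsplit : ∀ i, ∃ t, MeasurableSet t ∧ μ (c ⁻¹' {i} ∩ t) ≠ 0 ∧ μ (c ⁻¹' {i} \ t) ≠ 0)
    {r s : ι → 𝕜}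
    (h : ∀ w : Lp 𝕜 p μ, cellIntegral c w = 0 → stepMul hc r w = stepMul hc s w) : r = s := by
  ext k
  by_contra hrs
  have hμ (i : ι) : μ (c ⁻¹' {i}) ≠ 0 :=
    have ⟨_, _, hi, _⟩ := hsplit i
    (measure_pos_of_superset Set.inter_subset_left hi).ne'
  obtain ⟨t, ht, hin, hout⟩ := hsplit k
  obtain ⟨w, hw, hwk⟩ :=
    exists_cellIntegral_eq_zero_and_not_ae_eq_zero (𝕜 := 𝕜) (p := p) hc hμ ht hin hout
  have hrw : stepMul hc r w =ᵐ[μ] stepMul hc s w := by rw [h w hw]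
  refine hwk ?_
  filter_upwards [hrw, coeFn_stepMul hc r w, coeFn_stepMul hc s w] with x hx hr hs hxk
  rw [hr, hs, hxk] at hx
  exact (mul_eq_mul_right_iff.1 hx).resolve_left hrs

end CellIntegral

section StepOperator

variable {X ι 𝕜 : Type*} [MeasurableSpace X] {μ : Measure X} [IsFiniteMeasure μ] [RCLike 𝕜]
  {p : ℝ≥0∞} [Fact (1 ≤ p)] {c : X → ι} [Fintype ι] [MeasurableSpace ι]
  [DiscreteMeasurableSpace ι]

theorem coeFn_stepMul_add_stepMul_cellDensity (hc : Measurable c) (A : ι → 𝕜)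
    (B : Matrix ι ι 𝕜) (u : Lp 𝕜 p μ) :
    (stepMul hc A u + stepMul hc (B.mulVec (cellIntegral c u)) (cellDensity hc) : Lp 𝕜 p μ) =ᵐ[μ]
      fun x ↦ A (c x) * u x + ∫ y, B (c x) (c y) / μ.real (c ⁻¹' {c x}) * u y ∂μ := by
  filter_upwards [Lp.coeFn_add (stepMul hc A u) _, coeFn_stepMul hc A u,
    coeFn_cellDensity (𝕜 := 𝕜) (p := p) hc,
    coeFn_stepMul hc (B.mulVec (cellIntegral c u)) (cellDensity hc)] with x hadd hA hdensity hB
  rw [hadd, Pi.add_apply, hA, hB, hdensity,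
    integral_comp_mul hc (fun j ↦ B (c x) j / (μ.real (c ⁻¹' {c x}) : 𝕜)) u, Matrix.mulVec,
    dotProduct, Finset.sum_mul]
  simp only [div_eq_mul_inv, mul_right_comm]

theorem fredholm_step_spectrum_general [DecidableEq ι] (hc : Measurable c)
    (hsplit : ∀ i, ∃ t, MeasurableSet t ∧ μ (c ⁻¹' {i} ∩ t) ≠ 0 ∧ μ (c ⁻¹' {i} \ t) ≠ 0)
    (A : ι → 𝕜) (B : Matrix ι ι 𝕜) (T : Lp 𝕜 p μ →L[𝕜] Lp 𝕜 p μ)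
    (hT : ∀ u : Lp 𝕜 p μ, T u =ᵐ[μ]
      fun x ↦ A (c x) * u x + ∫ y, B (c x) (c y) / μ.real (c ⁻¹' {c x}) * u y ∂μ) :
    spectrum 𝕜 T =
      spectrum 𝕜 (Matrix.diagonal A) ∪ spectrum 𝕜 (Matrix.diagonal A + B) := by
  let : Module (ι → 𝕜) (Lp 𝕜 p μ) := stepModule hc
  let φ : Lp 𝕜 p μ →ₗ[ι → 𝕜] ι → 𝕜 :=
    { cellIntegral c with map_smul' := cellIntegral_stepMul hc }
  have : IsScalarTower 𝕜 (ι → 𝕜) (Lp 𝕜 p μ) :=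
    ⟨fun k a u ↦ LinearMap.congr_fun (map_smul (stepMul hc) k a) u⟩
  have : FaithfulSMul (ι → 𝕜) (LinearMap.ker φ) :=
    ⟨fun h ↦ eq_of_stepMul_eq_on_ker_cellIntegral hc hsplit fun w hw ↦
      congrArg Subtype.val (h ⟨w, hw⟩)⟩
  have hdensity : φ (cellDensity hc) = 1 := cellIntegral_cellDensity hc fun i ↦
    have ⟨_, _, hi, _⟩ := hsplit i
    (measure_pos_of_superset Set.inter_subset_left hi).ne'
  have hTu (u : Lp 𝕜 p μ) : T u = A • u + B.toLin' (φ u) • cellDensity hc :=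
    Lp.ext ((hT u).trans (coeFn_stepMul_add_stepMul_cellDensity hc A B u).symm)
  rw [ContinuousLinearMap.spectrum_eq, spectrum_smul_add_eq_union hdensity B.toLin' hTu,
    mulLeft_add_toLin'_eq_toLin'_diagonal_add, Matrix.spectrum_toLin',
    spectrum_pi_eq_spectrum_diagonal]

end StepOperator

section UnitIntervalCells

/-- The index of the subinterval `[i / S, (i + 1) / S)` of `[0, 1)` containing `x`. Outside
`[0, 1)` it is a junk value: the floor truncates at `0` and `Fin.ofNat` reduces modulo `S`. -/
def cellIndex (S : ℕ) [NeZero S] (x : ℝ) : Fin S := Fin.ofNat S ⌊(S : ℝ) * x⌋₊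

variable {S : ℕ} [NeZero S]

theorem measurable_cellIndex : Measurable (cellIndex S) :=
  (Measurable.of_discrete (f := Fin.ofNat S)).comp (measurable_id.const_mul (S : ℝ)).nat_floor

theorem cellIndex_eq_iff {x : ℝ} (hx : x ∈ Set.Ico (0 : ℝ) 1) (i : Fin S) :
    cellIndex S x = i ↔ x ∈ Set.Ico ((i : ℝ) / S) (((i : ℝ) + 1) / S) := by
  have hS : (0 : ℝ) < S := Nat.cast_pos.2 (NeZero.pos S)
  have hSx : 0 ≤ (S : ℝ) * x := mul_nonneg hS.le hx.1
  have hlt : ⌊(S : ℝ) * x⌋₊ < S := (Nat.floor_lt hSx).2 (mul_lt_of_lt_one_right hS hx.2)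
  rw [cellIndex, Fin.ext_iff, Fin.val_ofNat, Nat.mod_eq_of_lt hlt, Nat.floor_eq_iff hSx,
    Set.mem_Ico, div_le_iff₀' hS, lt_div_iff₀' hS]

theorem chi_eq_ite {x : ℝ} (hx : x ∈ Set.Ico (0 : ℝ) 1) (i : Fin S) :
    chi S i x = if cellIndex S x = i then 1 else 0 := by
  simp only [chi, cellIndex_eq_iff hx]

theorem restrict_cellIndex_preimage_inter (i : Fin S) (t : Set ℝ) :
    volume.restrict (Set.Ico (0 : ℝ) 1) (cellIndex S ⁻¹' {i} ∩ t) =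
      volume (Set.Ico ((i : ℝ) / S) (((i : ℝ) + 1) / S) ∩ t) := by
  have hi : (i : ℝ) + 1 ≤ S := mod_cast i.2
  have hsub : Set.Ico ((i : ℝ) / S) (((i : ℝ) + 1) / S) ⊆ Set.Ico 0 1 :=
    Set.Ico_subset_Ico (by positivity) (div_le_one_of_le₀ hi (Nat.cast_nonneg S))
  rw [Measure.restrict_apply' measurableSet_Ico, Set.inter_right_comm]
  congr 2
  ext x
  exact ⟨fun ⟨hxi, hx⟩ ↦ (cellIndex_eq_iff hx i).1 hxi,
    fun hxi ↦ ⟨(cellIndex_eq_iff (hsub hxi) i).2 hxi, hsub hxi⟩⟩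

theorem measureReal_cellIndex_preimage (i : Fin S) :
    (volume.restrict (Set.Ico (0 : ℝ) 1)).real (cellIndex S ⁻¹' {i}) = (S : ℝ)⁻¹ := by
  rw [Measure.real, ← Set.inter_univ (cellIndex S ⁻¹' {i}), restrict_cellIndex_preimage_inter,
    Set.inter_univ, Real.volume_Ico, ← sub_div, add_sub_cancel_left, one_div,
    ENNReal.toReal_ofReal (by positivity)]

theorem exists_measurableSet_split_cellIndex_preimage (i : Fin S) :
    ∃ t, MeasurableSet t ∧
      volume.restrict (Set.Ico (0 : ℝ) 1) (cellIndex S ⁻¹' {i} ∩ t) ≠ 0 ∧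
      volume.restrict (Set.Ico (0 : ℝ) 1) (cellIndex S ⁻¹' {i} \ t) ≠ 0 := by
  have hS : (0 : ℝ) < S := Nat.cast_pos.2 (NeZero.pos S)
  obtain ⟨m, hleft, hright⟩ : ∃ m, (i : ℝ) / S < m ∧ m < ((i : ℝ) + 1) / S :=
    exists_between (by gcongr; linarith)
  refine ⟨Set.Iio m, measurableSet_Iio, ?_, ?_⟩
  · rw [restrict_cellIndex_preimage_inter, Set.Ico_inter_Iio, min_eq_right hright.le]
    simpa using hleft
  · rw [Set.sdiff_eq, Set.compl_Iio, restrict_cellIndex_preimage_inter, Set.Ico_inter_Ici,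
      max_eq_right hleft.le]
    simpa using hright

theorem Tformula_ae_eq (A : Fin S → ℂ) (B : Fin S → Fin S → ℂ) (u : ℝ → ℂ) :
    Tformula S A B u =ᵐ[volume.restrict (Set.Ico (0 : ℝ) 1)] fun x ↦
      A (cellIndex S x) * u x + ∫ y in Set.Ico (0 : ℝ) 1, B (cellIndex S x) (cellIndex S y) /
        (volume.restrict (Set.Ico (0 : ℝ) 1)).real (cellIndex S ⁻¹' {cellIndex S x}) * u y := by
  filter_upwards [ae_restrict_mem measurableSet_Ico] with x hx
  rw [Tformula, measureReal_cellIndex_preimage]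
  congr 1
  · simp [chi_eq_ite hx]
  · refine setIntegral_congr_fun measurableSet_Ico fun y hy ↦ ?_
    simp [chi_eq_ite hx, chi_eq_ite hy, mul_comm]

end UnitIntervalCells

/-- `sp(𝒜)` is the union of the eigenvalue sets (roots of the
characteristic polynomials) of the matrices `𝐀` and `𝐀 + 𝐁`. -/
theorem fredholm_step_spectrum (S : ℕ) (hS : 1 ≤ S)
    (A : Fin S → ℂ) (B : Fin S → Fin S → ℂ)
    (T : Lp ℂ 2 (volume.restrict (Set.Ico (0 : ℝ) 1)) →L[ℂ]
      Lp ℂ 2 (volume.restrict (Set.Ico (0 : ℝ) 1)))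
    (hT : ∀ u : Lp ℂ 2 (volume.restrict (Set.Ico (0 : ℝ) 1)),
      (T u : ℝ → ℂ) =ᵐ[volume.restrict (Set.Ico (0 : ℝ) 1)]
        Tformula S A B (u : ℝ → ℂ)) :
    spectrum ℂ T =
      {z : ℂ | (Matrix.diagonal A - z • (1 : Matrix (Fin S) (Fin S) ℂ)).det = 0} ∪
      {z : ℂ | (Matrix.diagonal A + Matrix.of B -
        z • (1 : Matrix (Fin S) (Fin S) ℂ)).det = 0} := by
  have : NeZero S := ⟨by lia⟩
  rw [setOf_det_sub_smul_one_eq_zero, setOf_det_sub_smul_one_eq_zero]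
  exact fredholm_step_spectrum_general measurable_cellIndex
    exists_measurableSet_split_cellIndex_preimage A (Matrix.of B) T
    fun u ↦ (hT u).trans (Tformula_ae_eq A B u)

end Stmt18
end
end
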